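/- arXiv:1906.04773 — 3 statements merged into one kernel-verified Lean document; each statement's English description precedes it below -/
import Mathlib

section
/- Let φ : X → X' and ψ : Y → Y' be weak equivalences of retractive spaces over B, where all four retractive spaces are f-cofibrant and the projections p_X : X → B and p_{X'} : X' → B are Serre fibrations. Then the induced map of internal smash products φ ∧_B ψ : X ∧_B Y → X' ∧_B Y' is a weak equivalence. -/
open unitInterval Topology

/-- A continuous map `p : X → B` is a *Hurewicz fibration* if the map
`C([0,1],X) → X ×_B C([0,1],B)`, `γ ↦ (γ 0, p ∘ γ)`, admits a continuous section, i.e. there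
is a continuous path-lifting function. -/
def IsHurewiczFibration {X B : Type*} [TopologicalSpace X] [TopologicalSpace B]
    (p : C(X, B)) : Prop :=
  ∃ s : C({q : X × C(I, B) // p q.1 = q.2 0}, C(I, X)),
    ∀ q : {q : X × C(I, B) // p q.1 = q.2 0},
      s q 0 = q.1.1 ∧ ∀ t : I, p (s q t) = q.1.2 t

/-- A continuous map `i : X → Y` is an *h-cofibration* if it is a closed embedding and
`(Y × {0}) ∪ (i(X) × [0,1])` is a retract of `Y × [0,1]`. -/
def IsHCofibration {X Y : Type*} [TopologicalSpace X] [TopologicalSpace Y]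
    (i : C(X, Y)) : Prop :=
  IsClosedEmbedding (⇑i) ∧
  ∃ r : C(Y × I, Y × I),
    (∀ z : Y × I, (r z).2 = 0 ∨ (r z).1 ∈ Set.range ⇑i) ∧
    ∀ z : Y × I, (z.2 = 0 ∨ z.1 ∈ Set.range ⇑i) → r z = z

/-- A map `i : X → Y` of spaces over `B` (where `pY : Y → B` is the structure map of `Y`)
is an *f-cofibration over `B`* if it is a closed embedding and `(Y × {0}) ∪ (i(X) × [0,1])`
is a retract of `Y × [0,1]` via a retraction commuting with the projections to `B`. -/
def IsFCofibration {X Y B : Type*} [TopologicalSpace X] [TopologicalSpace Y]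
    [TopologicalSpace B] (i : C(X, Y)) (pY : C(Y, B)) : Prop :=
  IsClosedEmbedding (⇑i) ∧
  ∃ r : C(Y × I, Y × I),
    (∀ z : Y × I, (r z).2 = 0 ∨ (r z).1 ∈ Set.range ⇑i) ∧
    (∀ z : Y × I, (z.2 = 0 ∨ z.1 ∈ Set.range ⇑i) → r z = z) ∧
    ∀ z : Y × I, pY (r z).1 = pY z.1

/-- The map induced by `f` on path components. -/
def inducedZerothHomotopy {X Y : Type*} [TopologicalSpace X] [TopologicalSpace Y]
    (f : C(X, Y)) : ZerothHomotopy X → ZerothHomotopy Y :=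
  Quotient.map' f (fun _ _ h => Nonempty.map (fun p => p.map f.continuous) h)

/-- The map induced by `f` on generalized loops. -/
def inducedGenLoop {N : Type*} {X Y : Type*} [TopologicalSpace X] [TopologicalSpace Y]
    (f : C(X, Y)) {x : X} (p : GenLoop N X x) : GenLoop N Y (f x) :=
  ⟨f.comp p.1, fun y hy => by
    simp only [ContinuousMap.comp_apply]
    rw [p.2 y hy]⟩

/-- The map induced by `f : X → Y` on homotopy groups `π_N(X, x) → π_N(Y, f x)`. -/
def inducedHomotopyGroup (N : Type*) {X Y : Type*} [TopologicalSpace X] [TopologicalSpace Y]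
    (f : C(X, Y)) (x : X) : HomotopyGroup N X x → HomotopyGroup N Y (f x) :=
  Quotient.map' (inducedGenLoop f)
    (fun p q h => by
      obtain ⟨H⟩ := h
      exact ⟨{ toContinuousMap := f.comp H.toContinuousMap
               map_zero_left := fun y => congrArg f (H.map_zero_left y)
               map_one_left := fun y => congrArg f (H.map_one_left y)
               prop' := fun t y hy => congrArg f (H.prop' t y hy) }⟩)

/-- A continuous map is a *weak homotopy equivalence* if it induces a bijection on path
components and bijections on all homotopy groups at every basepoint. -/
def IsWeakHomotopyEquiv {X Y : Type*} [TopologicalSpace X] [TopologicalSpace Y]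
    (f : C(X, Y)) : Prop :=
  Function.Bijective (inducedZerothHomotopy f) ∧
  ∀ (n : ℕ) (x : X), Function.Bijective (inducedHomotopyGroup (Fin n) f x)

/-- A continuous map is a *Serre fibration* if it has the homotopy lifting property with
respect to the inclusions `Dⁿ × {0} → Dⁿ × [0,1]` for all `n ≥ 0`. -/
def IsSerreFibration {X B : Type*} [TopologicalSpace X] [TopologicalSpace B]
    (p : C(X, B)) : Prop :=
  ∀ (n : ℕ)
    (u : C((Metric.closedBall (0 : EuclideanSpace ℝ (Fin n)) 1 : Set _), X))
    (v : C((Metric.closedBall (0 : EuclideanSpace ℝ (Fin n)) 1 : Set _) × I, B)),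
    (∀ y, v (y, 0) = p (u y)) →
    ∃ w : C((Metric.closedBall (0 : EuclideanSpace ℝ (Fin n)) 1 : Set _) × I, X),
      (∀ y, w (y, 0) = u y) ∧ ∀ z, p (w z) = v z

section InternalSmash

variable {B X Y X' Y' : Type*} [TopologicalSpace B] [TopologicalSpace X]
  [TopologicalSpace Y] [TopologicalSpace X'] [TopologicalSpace Y']

/-- The relation generating the internal smash product `X ∧_B Y` on the fiber product
`X ×_B Y`:  `(x, i_Y (p_X x)) ∼ (i_X (p_X x), i_Y (p_X x))` and
`(i_X (p_Y y), y) ∼ (i_X (p_Y y), i_Y (p_Y y))`. -/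
def ISmashRel (iX : C(B, X)) (pX : C(X, B)) (iY : C(B, Y)) (pY : C(Y, B)) :
    {z : X × Y // pX z.1 = pY z.2} → {z : X × Y // pX z.1 = pY z.2} → Prop := fun z w =>
  (∃ x, z.1 = (x, iY (pX x)) ∧ w.1 = (iX (pX x), iY (pX x))) ∨
  (∃ y, z.1 = (iX (pY y), y) ∧ w.1 = (iX (pY y), iY (pY y)))

/-- The total space of the internal smash product `X ∧_B Y`. -/
abbrev ISmash (iX : C(B, X)) (pX : C(X, B)) (iY : C(B, Y)) (pY : C(Y, B)) : Type _ :=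
  Quot (ISmashRel iX pX iY pY)

/-- The map `φ ∧_B ψ` induced on internal smash products by maps `φ : X → X'` and
`ψ : Y → Y'` of retractive spaces over `B`. -/
def iSmashMap (iX : C(B, X)) (pX : C(X, B)) (iY : C(B, Y)) (pY : C(Y, B))
    (iX' : C(B, X')) (pX' : C(X', B)) (iY' : C(B, Y')) (pY' : C(Y', B))
    (φ : C(X, X')) (ψ : C(Y, Y'))
    (hφi : ∀ b, φ (iX b) = iX' b) (hφp : ∀ x, pX' (φ x) = pX x)
    (hψi : ∀ b, ψ (iY b) = iY' b) (hψp : ∀ y, pY' (ψ y) = pY y) :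
    C(ISmash iX pX iY pY, ISmash iX' pX' iY' pY') :=
  ⟨Quot.lift
      (fun z => Quot.mk _ ⟨(φ z.1.1, ψ z.1.2), by rw [hφp, hψp]; exact z.2⟩)
      (by
        rintro ⟨z, hzp⟩ ⟨w, hwp⟩ (⟨x, hz, hw⟩ | ⟨y, hz, hw⟩) <;> apply Quot.sound <;>
          simp only at hz hw <;> subst hz <;> subst hw
        · exact Or.inl ⟨φ x, by simp [hψi, hφp], by simp [hψi, hφi, hφp]⟩
        · exact Or.inr ⟨ψ y, by simp [hφi, hψp], by simp [hψi, hφi, hψp]⟩),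
    continuous_quot_lift _ (continuous_quot_mk.comp (by fun_prop))⟩

/-!
A map is a weak equivalence exactly if cubes in its target lift, up to a homotopy relative to the
boundary, along any lift of the boundary. By subdividing the cube, this property can be checked on
the members of an open cover of the target which is closed under intersection. It passes to fibre
products of maps over `B` when the first factors of source and target are Serre fibrations, by
lifting the homotopies vertically.

Since the sections are f-cofibrations, all spaces may be replaced by homotopy equivalent ones with
whiskers `B × [0,1]` grown along the sections. In the smash product of whiskered spaces only the
ends of the whiskers are collapsed, so it is covered by a neighbourhood of the base, which deforms
onto the base along the whiskers, and a fibre product of whiskered spaces without the ends of the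
whiskers, which deforms onto `X ×_B Y`. Their intersection is covered by fibre products in which one
factor is the middle of the whiskers and hence deforms onto `B`.
-/

/-! ### Cubes and their boundaries -/

section Cube

variable {n : ℕ}

/-- The scaling factor of the radial projection of `[0,1]ⁿ × [0,1]` from the point `(centre, 2)`
onto the bottom and the sides; it equals `1` exactly on the bottom and the sides. -/
noncomputable def cubeRadius (k : (Fin n → I) × I) : ℝ :=
  max ‖fun i => 2 * (k.1 i : ℝ) - 1‖ ((2 - k.2) / 2)

/-- The radial projection of `[0,1]ⁿ × [0,1]` from the point `(centre, 2)` onto the bottom and the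
sides. The clipping by `Set.projIcc` never takes effect. -/
noncomputable def cubeRetract (k : (Fin n → I) × I) : (Fin n → I) × I :=
  (fun i => Set.projIcc 0 1 zero_le_one ((1 + (2 * (k.1 i : ℝ) - 1) / cubeRadius k) / 2),
    Set.projIcc 0 1 zero_le_one (2 - (2 - k.2) / cubeRadius k))

/-- The linear contraction of `[0,1]ⁿ × [0,1]` towards the point `(centre, 2)`, clipped to the
cylinder. -/
noncomputable def cubeContract (p : ((Fin n → I) × I) × I) : (Fin n → I) × I :=
  (fun i => Set.projIcc 0 1 zero_le_one ((1 + (2 * (p.1.1 i : ℝ) - 1) * (1 - p.2)) / 2),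
    Set.projIcc 0 1 zero_le_one (2 - (2 - p.1.2) * (1 - p.2)))

lemma half_le_cubeRadius (k : (Fin n → I) × I) : 1 / 2 ≤ cubeRadius k :=
  le_max_of_le_right (by linarith [k.2.2.2])

lemma cubeRadius_pos (k : (Fin n → I) × I) : 0 < cubeRadius k := by
  linarith [half_le_cubeRadius k]

lemma norm_two_mul_sub_one_le (z : Fin n → I) : ‖fun i => 2 * (z i : ℝ) - 1‖ ≤ 1 := by
  refine (pi_norm_le_iff_of_nonneg zero_le_one).2 fun i => ?_
  rw [Real.norm_eq_abs, abs_le]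
  constructor <;> linarith [(z i).2.1, (z i).2.2]

lemma cubeRadius_le_one (k : (Fin n → I) × I) : cubeRadius k ≤ 1 :=
  max_le (norm_two_mul_sub_one_le _) (by linarith [k.2.2.1])

lemma cubeRadius_eq_one {k : (Fin n → I) × I} (hk : k.1 ∈ Cube.boundary (Fin n) ∨ k.2 = 0) :
    cubeRadius k = 1 := by
  refine le_antisymm (cubeRadius_le_one k) ?_
  rcases hk with ⟨i, hi⟩ | hk
  · refine le_max_of_le_left (le_trans ?_ (norm_le_pi_norm _ i))
    rcases hi with hi | hi <;> norm_num [hi]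
  · exact le_max_of_le_right (by simp [hk])

/-- How far a point lies from the bottom and the sides along the radial projection. -/
noncomputable def cubeDepth (k : (Fin n → I) × I) : I :=
  ⟨1 - cubeRadius k, by linarith [cubeRadius_le_one k], by linarith [half_le_cubeRadius k]⟩

lemma cubeDepth_eq_zero {k : (Fin n → I) × I} (hk : k.1 ∈ Cube.boundary (Fin n) ∨ k.2 = 0) :
    cubeDepth k = 0 :=
  Subtype.ext (by simp [cubeDepth, cubeRadius_eq_one hk])

@[fun_prop]
lemma continuous_cubeRadius : Continuous (cubeRadius (n := n)) := by
  unfold cubeRadius; fun_prop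

@[fun_prop]
lemma continuous_cubeDepth : Continuous (cubeDepth (n := n)) :=
  Continuous.subtype_mk (by fun_prop) _

@[fun_prop]
lemma continuous_cubeRetract : Continuous (cubeRetract (n := n)) := by
  have h : ∀ k : (Fin n → I) × I, cubeRadius k ≠ 0 := fun k => (cubeRadius_pos k).ne'
  unfold cubeRetract
  refine Continuous.prodMk (continuous_pi fun i => continuous_projIcc.comp ?_)
    (continuous_projIcc.comp ?_) <;> fun_prop (disch := exact h _)

@[fun_prop]
lemma continuous_cubeContract : Continuous (cubeContract (n := n)) := by
  unfold cubeContract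
  refine Continuous.prodMk (continuous_pi fun i => continuous_projIcc.comp ?_)
    (continuous_projIcc.comp ?_) <;> fun_prop

lemma projIcc_eq_of_eq_coe {x : ℝ} {y : I} (h : x = y) :
    Set.projIcc 0 1 zero_le_one x = y := by
  subst h; exact Set.projIcc_val _ y

lemma coe_cubeRetract_fst (k : (Fin n → I) × I) (i : Fin n) :
    ((cubeRetract k).1 i : ℝ) = (1 + (2 * (k.1 i : ℝ) - 1) / cubeRadius k) / 2 := by
  have hi : |2 * (k.1 i : ℝ) - 1| ≤ cubeRadius k :=
    le_max_of_le_left (norm_le_pi_norm (fun i => 2 * (k.1 i : ℝ) - 1) i)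
  have hi' : |(2 * (k.1 i : ℝ) - 1) / cubeRadius k| ≤ 1 := by
    rw [abs_div, abs_of_pos (cubeRadius_pos k)]
    exact (div_le_one (cubeRadius_pos k)).2 hi
  rw [abs_le] at hi'
  exact congrArg Subtype.val (Set.projIcc_of_mem zero_le_one
    (Set.mem_Icc.2 ⟨by linarith, by linarith⟩))

lemma coe_cubeRetract_snd (k : (Fin n → I) × I) :
    ((cubeRetract k).2 : ℝ) = 2 - (2 - k.2) / cubeRadius k := by
  have hk : (2 - k.2 : ℝ) / 2 ≤ cubeRadius k := le_max_right _ _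
  have hle : (2 - k.2 : ℝ) / cubeRadius k ≤ 2 := (div_le_iff₀ (cubeRadius_pos k)).2 (by linarith)
  have hge : 1 ≤ (2 - k.2 : ℝ) / cubeRadius k :=
    (le_div_iff₀ (cubeRadius_pos k)).2 (by linarith [cubeRadius_le_one k, k.2.2.2])
  exact congrArg Subtype.val (Set.projIcc_of_mem zero_le_one
    (Set.mem_Icc.2 ⟨by linarith, by linarith⟩))

lemma cubeRetract_eq_self {k : (Fin n → I) × I}
    (hk : k.1 ∈ Cube.boundary (Fin n) ∨ k.2 = 0) : cubeRetract k = k := by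
  refine Prod.ext (funext fun i => Subtype.ext ?_) (Subtype.ext ?_)
  · rw [coe_cubeRetract_fst, cubeRadius_eq_one hk]; ring
  · rw [coe_cubeRetract_snd, cubeRadius_eq_one hk]; ring

lemma exists_abs_two_mul_sub_one_eq {k : (Fin n → I) × I}
    (hk : cubeRadius k = ‖fun i => 2 * (k.1 i : ℝ) - 1‖) :
    ∃ i, |2 * (k.1 i : ℝ) - 1| = cubeRadius k := by
  have : Nonempty (Fin n) := by
    by_contra hn
    rw [not_nonempty_iff] at hn
    rw [Subsingleton.elim (fun i => 2 * (k.1 i : ℝ) - 1) 0, norm_zero] at hk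
    exact (cubeRadius_pos k).ne' hk
  obtain ⟨i, hi⟩ := (IsGreatest.pi_norm fun i => 2 * (k.1 i : ℝ) - 1).1
  exact ⟨i, hi.trans hk.symm⟩

lemma cubeRetract_mem (k : (Fin n → I) × I) :
    (cubeRetract k).1 ∈ Cube.boundary (Fin n) ∨ (cubeRetract k).2 = 0 := by
  have hr := (cubeRadius_pos k).ne'
  rcases max_choice ‖fun i => 2 * (k.1 i : ℝ) - 1‖ ((2 - k.2) / 2 : ℝ) with h | h
  · obtain ⟨i, hi⟩ := exists_abs_two_mul_sub_one_eq h
    rcases eq_or_eq_neg_of_abs_eq hi with hi | hi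
    · refine .inl ⟨i, .inr (Subtype.ext ?_)⟩
      rw [coe_cubeRetract_fst, hi, div_self hr]; norm_num
    · refine .inl ⟨i, .inl (Subtype.ext ?_)⟩
      rw [coe_cubeRetract_fst, hi, neg_div, div_self hr]; norm_num
  · refine .inr (Subtype.ext ?_)
    have hk : (2 - k.2 : ℝ) = 2 * cubeRadius k := by rw [cubeRadius, h]; ring
    rw [coe_cubeRetract_snd, hk, mul_div_assoc, div_self hr]; norm_num

lemma cubeContract_cubeRetract (k : (Fin n → I) × I) :
    cubeContract (cubeRetract k, cubeDepth k) = k := by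
  have hr := (cubeRadius_pos k).ne'
  refine Prod.ext (funext fun i => projIcc_eq_of_eq_coe ?_) (projIcc_eq_of_eq_coe ?_)
  · rw [coe_cubeRetract_fst, cubeDepth]; field_simp; ring
  · rw [coe_cubeRetract_snd, cubeDepth]; field_simp; ring

lemma cubeContract_zero (k : (Fin n → I) × I) : cubeContract (k, 0) = k :=
  Prod.ext (funext fun i => projIcc_eq_of_eq_coe (by simp)) (projIcc_eq_of_eq_coe (by simp))

end Cube

/-- A pair of spaces homeomorphic to some `([0,1]ⁿ, ∂[0,1]ⁿ)`. -/
def IsCubePair {K : Type} [TopologicalSpace K] (A : Set K) : Prop :=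
  ∃ (n : ℕ) (e : K ≃ₜ (Fin n → I)), ∀ k, k ∈ A ↔ e k ∈ Cube.boundary (Fin n)

/-- The boundary `A × [0,1] ∪ K × {0,1}` of the cylinder on the pair `(K, A)`. -/
def cylinderBoundary {K : Type} (A : Set K) : Set (K × I) :=
  {p | p.1 ∈ A ∨ p.2 = 0 ∨ p.2 = 1}

lemma isCubePair_boundary (n : ℕ) : IsCubePair (Cube.boundary (Fin n)) :=
  ⟨n, Homeomorph.refl _, fun _ => Iff.rfl⟩

lemma isCubePair_unitInterval : IsCubePair ({0, 1} : Set I) :=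
  ⟨1, (Homeomorph.funUnique (Fin 1) I).symm, fun k => by simp [Cube.boundary]⟩

/-- The cylinder on the `n`-cube as the `(n + 1)`-cube, with the interval as zeroth coordinate. -/
def cylinderHomeomorph (n : ℕ) : (Fin n → I) × I ≃ₜ (Fin (n + 1) → I) where
  toFun p := Fin.cons p.2 p.1
  invFun z := (Fin.tail z, z 0)
  left_inv p := by simp
  right_inv z := by simp
  continuous_toFun := by fun_prop
  continuous_invFun :=
    (continuous_pi fun i => continuous_apply i.succ).prodMk (continuous_apply 0)

lemma cylinderHomeomorph_mem_boundary_iff {n : ℕ} {k : (Fin n → I) × I} :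
    cylinderHomeomorph n k ∈ Cube.boundary (Fin (n + 1)) ↔
      k ∈ cylinderBoundary (Cube.boundary (Fin n)) := by
  change (Fin.cons k.2 k.1 : Fin (n + 1) → I) ∈ _ ↔ _
  simp only [Cube.boundary, cylinderBoundary, Set.mem_ofPred_eq, Fin.exists_fin_succ,
    Fin.cons_zero, Fin.cons_succ]
  exact or_comm

section CubePair

variable {K : Type} [TopologicalSpace K] {A : Set K}

lemma IsCubePair.cylinder (h : IsCubePair A) : IsCubePair (cylinderBoundary A) := by
  obtain ⟨n, e, he⟩ := h
  refine ⟨n + 1, (e.prodCongr (Homeomorph.refl I)).trans (cylinderHomeomorph n), fun k => ?_⟩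
  refine Iff.trans ?_ cylinderHomeomorph_mem_boundary_iff.symm
  simp only [cylinderBoundary, Set.mem_ofPred_eq, he]
  rfl

lemma IsCubePair.isClosed (h : IsCubePair A) : IsClosed A := by
  obtain ⟨n, e, he⟩ := h
  have hA : A = ⋃ i, {k | e k i = 0} ∪ {k | e k i = 1} := by
    ext k; rw [he]; simp [Cube.boundary]
  rw [hA]
  exact isClosed_iUnion_of_finite fun i =>
    (isClosed_eq (by fun_prop) continuous_const).union (isClosed_eq (by fun_prop) continuous_const)

lemma IsCubePair.nonempty (h : IsCubePair A) : Nonempty K := by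
  obtain ⟨n, e, -⟩ := h
  exact ⟨e.symm 0⟩

lemma IsCubePair.exists_retraction (h : IsCubePair A) : ∃ r : C(K × I, K × I),
    (∀ p, (r p).1 ∈ A ∨ (r p).2 = 0) ∧ ∀ p, p.1 ∈ A ∨ p.2 = 0 → r p = p := by
  obtain ⟨n, e, he⟩ := h
  let c := e.prodCongr (Homeomorph.refl I)
  refine ⟨⟨fun p => c.symm (cubeRetract (c p)), by fun_prop⟩, fun p => ?_, fun p hp => ?_⟩
  · rw [he]
    simpa [c] using cubeRetract_mem (c p)
  · rw [he] at hp
    exact (congrArg c.symm (cubeRetract_eq_self hp)).trans (c.symm_apply_apply p)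

end CubePair

/-! ### Gluing and homotopy extension -/

lemma exists_continuousOn_union {Z E : Type*} [TopologicalSpace Z] [TopologicalSpace E]
    {s t : Set Z} {f g : Z → E} (hs : IsClosed s) (ht : IsClosed t) (hf : ContinuousOn f s)
    (hg : ContinuousOn g t) (hfg : Set.EqOn f g (s ∩ t)) :
    ∃ D : Z → E, ContinuousOn D (s ∪ t) ∧ Set.EqOn D f s ∧ Set.EqOn D g t := by
  classical
  have hDf : Set.EqOn (s.piecewise f g) f s := Set.piecewise_eqOn s f g
  have hDg : Set.EqOn (s.piecewise f g) g t := fun z hz => by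
    by_cases hzs : z ∈ s
    · rw [hDf hzs, hfg ⟨hzs, hz⟩]
    · exact Set.piecewise_eq_of_notMem s f g hzs
  exact ⟨_, (hf.congr hDf).union_of_isClosed (hg.congr hDg) hs ht, hDf, hDg⟩

section Extension

variable {K : Type} [TopologicalSpace K] {A : Set K} {X : Type*} [TopologicalSpace X]

lemma exists_continuousOn_cylinderBoundary {Z : Type*} [TopologicalSpace Z] (hA : IsClosed A)
    {c : Z → K × I} (hc : Continuous c) {f₀ f₁ η : Z → X} (h₀ : Continuous f₀)
    (h₁ : Continuous f₁) (hη : ContinuousOn η {z | (c z).1 ∈ A})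
    (hη₀ : ∀ z, (c z).1 ∈ A → (c z).2 = 0 → η z = f₀ z)
    (hη₁ : ∀ z, (c z).1 ∈ A → (c z).2 = 1 → η z = f₁ z) :
    ∃ D : Z → X, ContinuousOn D (c ⁻¹' cylinderBoundary A) ∧ (∀ z, (c z).2 = 0 → D z = f₀ z) ∧
      (∀ z, (c z).2 = 1 → D z = f₁ z) ∧ ∀ z, (c z).1 ∈ A → D z = η z := by
  have hsides : IsClosed {z | (c z).1 ∈ A} := hA.preimage (by fun_prop)
  have hlevel (r : I) : IsClosed {z | (c z).2 = r} := isClosed_eq (by fun_prop) continuous_const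
  obtain ⟨D₀, hD₀, hD₀0, hD₀1⟩ := exists_continuousOn_union (hlevel 0) (hlevel 1) h₀.continuousOn
    h₁.continuousOn fun z hz => absurd (hz.1.symm.trans hz.2) zero_ne_one
  obtain ⟨D, hD, hDη, hDD₀⟩ := exists_continuousOn_union hsides ((hlevel 0).union (hlevel 1)) hη hD₀
    (by
      rintro z ⟨hzA, hz | hz⟩
      · exact (hη₀ z hzA hz).trans (hD₀0 hz).symm
      · exact (hη₁ z hzA hz).trans (hD₀1 hz).symm)
  exact ⟨D, hD, fun z hz => (hDD₀ (.inl hz)).trans (hD₀0 hz),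
    fun z hz => (hDD₀ (.inr hz)).trans (hD₀1 hz), fun z hz => hDη hz⟩

lemma IsCubePair.exists_homotopy_extension (h : IsCubePair A) (x : C(K, X)) {a : K × I → X}
    (ha : ContinuousOn a {p | p.1 ∈ A}) (hax : ∀ k ∈ A, a (k, 0) = x k)
    {S : Set X} (hxS : ∀ k, x k ∈ S) (haS : ∀ k ∈ A, ∀ t, a (k, t) ∈ S) :
    ∃ G : C(K × I, X), (∀ k, G (k, 0) = x k) ∧ (∀ k ∈ A, ∀ t, G (k, t) = a (k, t)) ∧
      ∀ p, G p ∈ S := by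
  obtain ⟨r, hr, hr'⟩ := h.exists_retraction
  obtain ⟨D, hD, hDa, hDx⟩ := exists_continuousOn_union (g := fun p => x p.1)
    (h.isClosed.preimage continuous_fst) (isClosed_eq continuous_snd continuous_const) ha
    (by fun_prop) fun p (hp : p.1 ∈ A ∧ p.2 = 0) => by
      simpa only [← hp.2] using hax p.1 hp.1
  refine ⟨⟨fun p => D (r p), hD.comp_continuous r.continuous hr⟩, fun k => ?_, fun k hk t => ?_,
    fun p => ?_⟩
  · exact (congrArg D (hr' (k, 0) (.inr rfl))).trans (hDx rfl)
  · exact (congrArg D (hr' (k, t) (.inl hk))).trans (hDa hk)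
  · change D (r p) ∈ S
    rcases hr p with hp | hp
    · exact hDa hp ▸ haS _ hp _
    · exact hDx hp ▸ hxS _

end Extension

/-! ### Lifting cubes up to homotopy -/

/-- The lifting problem for `f : X → Y` and `(K, A)` with values `a` on `A` upstairs and `b` on `K`
downstairs, where `f ∘ a` agrees with `b` on `A` up to the homotopy `η`, has a solution: a map
`x : K → X` extending `a` and a homotopy inside `O` from `f ∘ x` to `b` extending `η`. The values
of `a` and `η` away from `A` are irrelevant. -/
def LiftsUpToHomotopy {K : Type} [TopologicalSpace K] {X Y : Type*} [TopologicalSpace X]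
    [TopologicalSpace Y] (f : C(X, Y)) (O : Set Y) (A : Set K) (a : K → X) (b : K → Y)
    (η : K × I → Y) : Prop :=
  ∃ (x : C(K, X)) (H : C(K × I, Y)), (∀ k ∈ A, x k = a k) ∧ (∀ k, H (k, 0) = f (x k)) ∧
    (∀ k, H (k, 1) = b k) ∧ (∀ k ∈ A, ∀ t, H (k, t) = η (k, t)) ∧ ∀ p, H p ∈ O

/-- Every strictly commutative lifting problem for a cube and its boundary over the subset `O` of
the target has a solution up to a homotopy in `O` relative to the boundary. The first clause is the
case of the cube of dimension `0`, where the function `a` need not exist. -/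
def HasCubeLiftingOn {X Y : Type*} [TopologicalSpace X] [TopologicalSpace Y] (f : C(X, Y))
    (O : Set Y) : Prop :=
  (O.Nonempty → Nonempty X) ∧
  ∀ (K : Type) [TopologicalSpace K] (A : Set K), IsCubePair A → ∀ (a : K → X) (b : C(K, Y)),
    ContinuousOn a A → (∀ k, b k ∈ O) → (∀ k ∈ A, f (a k) = b k) →
    LiftsUpToHomotopy f O A a b fun p => b p.1

/-- The lifting property which characterises weak homotopy equivalences. -/
abbrev HasCubeLifting {X Y : Type*} [TopologicalSpace X] [TopologicalSpace Y]
    (f : C(X, Y)) : Prop :=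
  HasCubeLiftingOn f Set.univ

section Lifting

variable {K : Type} [TopologicalSpace K] {A : Set K} {X Y Z : Type*} [TopologicalSpace X]
  [TopologicalSpace Y] [TopologicalSpace Z] {f : C(X, Y)} {O : Set Y}

lemma HasCubeLifting.lifts (h : HasCubeLifting f) (hK : IsCubePair A) {a : K → X}
    (b : C(K, Y)) (ha : ContinuousOn a A) (hab : ∀ k ∈ A, f (a k) = b k) :
    LiftsUpToHomotopy f Set.univ A a b fun p => b p.1 :=
  h.2 K A hK a b ha (fun _ => Set.mem_univ _) hab

lemma LiftsUpToHomotopy.congr {a a' : K → X} {b : K → Y} {η : K × I → Y}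
    (h : LiftsUpToHomotopy f O A a b η) (ha : ∀ k ∈ A, a k = a' k) :
    LiftsUpToHomotopy f O A a' b η := by
  obtain ⟨x, H, hx, hH⟩ := h
  exact ⟨x, H, fun k hk => (hx k hk).trans (ha k hk), hH⟩

/-- Extend the solution `x` along the homotopy `a` of its boundary values, and the homotopy of the
solution along the resulting homotopy on the boundary of the cylinder. -/
lemma LiftsUpToHomotopy.of_homotopy (hK : IsCubePair A) {a : K × I → X} (β : C(K × I, Y))
    {η : (K × I) × I → Y} (ha : ContinuousOn a {p | p.1 ∈ A})
    (hη : ContinuousOn η {p | p.1.1 ∈ A}) (hη₀ : ∀ k ∈ A, ∀ t, η ((k, 0), t) = f (a (k, t)))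
    (hη₁ : ∀ k ∈ A, ∀ t, η ((k, 1), t) = β (k, t)) (hβO : ∀ p, β p ∈ O)
    (hηO : ∀ p, p.1.1 ∈ A → η p ∈ O)
    (h : LiftsUpToHomotopy f O A (fun k => a (k, 0)) (fun k => β (k, 0)) fun p => η (p, 0)) :
    LiftsUpToHomotopy f O A (fun k => a (k, 1)) (fun k => β (k, 1)) fun p => η (p, 1) := by
  obtain ⟨x, N, hxa, hN0, hN1, hNA, hNO⟩ := h
  obtain ⟨x', hx'0, hx'A, hx'O⟩ := hK.exists_homotopy_extension x ha
    (fun k hk => (hxa k hk).symm) (S := f ⁻¹' O) (fun k => by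
      rw [Set.mem_preimage, ← hN0]; exact hNO _) fun k hk t => by
      rw [Set.mem_preimage, ← hη₀ k hk]; exact hηO ((k, 0), t) hk
  obtain ⟨D, hD, hD0, hD1, hDA⟩ := exists_continuousOn_cylinderBoundary hK.isClosed
    (c := Prod.fst) (f₀ := fun p : (K × I) × I => f (x' (p.1.1, p.2)))
    (f₁ := fun p => β (p.1.1, p.2)) continuous_fst (by fun_prop) (by fun_prop) hη
    (by
      rintro ⟨⟨k, s⟩, t⟩ hk (rfl : s = 0)
      rw [hη₀ k hk, hx'A k hk])
    (by
      rintro ⟨⟨k, s⟩, t⟩ hk (rfl : s = 1)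
      exact hη₁ k hk t)
  obtain ⟨G, -, hGD, hGO⟩ := hK.cylinder.exists_homotopy_extension N hD (S := O)
    (by
      rintro ⟨k, s⟩ (hk | hs | hs)
      · rw [hDA _ hk, hNA k hk]
      · obtain rfl : s = 0 := hs
        rw [hD0 _ rfl, hx'0, hN0]
      · obtain rfl : s = 1 := hs
        rw [hD1 _ rfl, hN1])
    hNO
    (by
      rintro ⟨k, s⟩ (hk | hs | hs) t
      · exact hDA ((k, s), t) hk ▸ hηO _ hk
      · exact hD0 ((k, s), t) hs ▸ hx'O _
      · exact hD1 ((k, s), t) hs ▸ hβO _)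
  refine ⟨x'.comp ⟨fun k => (k, 1), by fun_prop⟩, G.comp ⟨fun p => (p, 1), by fun_prop⟩,
    fun k hk => hx'A k hk 1, fun k => ?_, fun k => ?_, fun k hk t => ?_, fun p => hGO _⟩
  · exact (hGD (k, 0) (.inr (.inl rfl)) 1).trans (hD0 _ rfl)
  · exact (hGD (k, 1) (.inr (.inr rfl)) 1).trans (hD1 _ rfl)
  · exact (hGD (k, t) (.inl hk) 1).trans (hDA _ hk)

lemma LiftsUpToHomotopy.of_boundary_homotopy (hK : IsCubePair A) {a : K × I → X} {b : C(K, Y)}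
    (ha : ContinuousOn a {p | p.1 ∈ A}) (hab : ∀ k ∈ A, f (a (k, 1)) = b k)
    (h : ∀ b' : C(K, Y), (∀ k ∈ A, f (a (k, 0)) = b' k) →
      LiftsUpToHomotopy f Set.univ A (fun k => a (k, 0)) b' fun p => b' p.1) :
    LiftsUpToHomotopy f Set.univ A (fun k => a (k, 1)) b fun p => b p.1 := by
  obtain ⟨M, hM0, hMA, -⟩ := hK.exists_homotopy_extension b (a := fun p => f (a (p.1, σ p.2)))
    (f.continuous.comp_continuousOn (ha.comp (by fun_prop) fun p hp => hp))
    (fun k hk => by simp only [symm_zero, hab k hk]) (fun _ => Set.mem_univ _)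
    fun _ _ _ => Set.mem_univ _
  let β : C(K × I, Y) := M.comp ⟨fun p => (p.1, σ p.2), by fun_prop⟩
  have hβA : ∀ k ∈ A, ∀ t, f (a (k, t)) = β (k, t) := fun k hk t => by simp [β, hMA k hk]
  have hβ1 : ∀ k, β (k, 1) = b k := fun k => by simp [β, hM0]
  have key := LiftsUpToHomotopy.of_homotopy (f := f) hK β (η := fun p => β (p.1.1, p.2)) ha
    (by fun_prop) (fun k hk t => (hβA k hk t).symm) (fun _ _ _ => rfl) (fun _ => Set.mem_univ _)
    (fun _ _ => Set.mem_univ _) (h (β.comp ⟨fun k => (k, 0), by fun_prop⟩) fun k hk => hβA k hk 0)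
  simpa only [hβ1] using key

lemma HasCubeLiftingOn.lifts_rel (h : HasCubeLiftingOn f O) (hK : IsCubePair A) {a : K → X}
    (b : C(K, Y)) {η : K × I → Y} (ha : ContinuousOn a A) (hη : ContinuousOn η {p | p.1 ∈ A})
    (hbO : ∀ k, b k ∈ O) (hηO : ∀ k ∈ A, ∀ t, η (k, t) ∈ O) (hη₀ : ∀ k ∈ A, η (k, 0) = f (a k))
    (hη₁ : ∀ k ∈ A, η (k, 1) = b k) : LiftsUpToHomotopy f O A a b η := by
  obtain ⟨M, hM0, hMA, hMO⟩ := hK.exists_homotopy_extension b (a := fun p => η (p.1, σ p.2))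
    (hη.comp (f := fun p : K × I => (p.1, σ p.2)) (by fun_prop) fun p hp => hp)
    (fun k hk => by simp only [symm_zero, hη₁ k hk]) hbO fun k hk t => hηO k hk _
  have hM1 : ∀ k ∈ A, M (k, 1) = η (k, 0) := fun k hk => by simp [hMA k hk]
  have hstrict := h.2 K A hK a (M.comp ⟨fun k => (k, 1), by fun_prop⟩) ha (fun k => hMO _)
    fun k hk => by simp [hM1 k hk, hη₀ k hk]
  have key := LiftsUpToHomotopy.of_homotopy (f := f) hK (a := fun p => a p.1)
    (M.comp ⟨fun p => (p.1, σ p.2), by fun_prop⟩) (η := fun p => η (p.1.1, p.1.2 * p.2))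
    (ha.comp continuousOn_fst fun p hp => hp)
    (hη.comp (f := fun p : (K × I) × I => (p.1.1, p.1.2 * p.2)) (by fun_prop) fun p hp => hp)
    (fun k hk t => by simp [hη₀ k hk]) (fun k hk t => by simp [hMA k hk]) (fun p => hMO _)
    (fun p hp => hηO _ hp _)
    (by
      obtain ⟨x, H, hx, hH0, hH1, hHA, hHO⟩ := hstrict
      exact ⟨x, H, hx, hH0, fun k => by simp [hH1], fun k hk t => by simp [hHA k hk, hM1 k hk],
        hHO⟩)
  simpa [hM0] using key

lemma hasCubeLifting_id : HasCubeLifting (ContinuousMap.id X) :=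
  ⟨fun ⟨x, _⟩ => ⟨x⟩, fun _ _ _ _ _ b _ _ hab => ⟨b, b.comp ContinuousMap.fst,
    fun k hk => (hab k hk).symm, fun _ => rfl, fun _ => rfl, fun _ _ _ => rfl,
    fun _ => Set.mem_univ _⟩⟩

lemma HasCubeLifting.comp {g : C(Y, Z)} (hg : HasCubeLifting g) (hf : HasCubeLifting f) :
    HasCubeLifting (g.comp f) := by
  refine ⟨fun h => hf.1 (@Set.univ_nonempty _ (hg.1 h)), fun K _ A hK a b ha _ hab => ?_⟩
  obtain ⟨y, H, hyA, hH0, hH1, hHA, -⟩ := hg.lifts hK (a := fun k => f (a k)) b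
    (f.continuous.comp_continuousOn ha) hab
  obtain ⟨x, N, hxA, hN0, hN1, hNA, -⟩ := hf.lifts hK y ha fun k hk => (hyA k hk).symm
  have key := LiftsUpToHomotopy.of_homotopy (f := g.comp f) hK (a := fun p => a p.1) H
    (η := fun p => H (p.1.1, p.2)) (ha.comp continuousOn_fst fun p hp => hp) (by fun_prop)
    (fun k hk t => by simp [hHA k hk, ← hab k hk]) (fun _ _ _ => rfl) (fun _ => Set.mem_univ _)
    (fun _ _ => Set.mem_univ _)
    ⟨x, g.comp N, hxA, fun k => congrArg g (hN0 k), fun k => by simp [hN1, hH0],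
      fun k hk t => by simp [hNA k hk, hH0], fun _ => Set.mem_univ _⟩
  simpa only [hH1] using key

lemma HasCubeLifting.of_comp {g : C(Y, Z)} (hg : HasCubeLifting g)
    (hgf : HasCubeLifting (g.comp f)) : HasCubeLifting f := by
  refine ⟨fun ⟨y, _⟩ => hgf.1 ⟨g y, Set.mem_univ _⟩, fun K _ A hK a b ha _ hab => ?_⟩
  obtain ⟨x, L, hxA, hL0, hL1, hLA, -⟩ :=
    hgf.lifts hK (g.comp b) ha fun k hk => congrArg g (hab k hk)
  obtain ⟨D, hD, hD0, hD1, hDA⟩ := exists_continuousOn_cylinderBoundary hK.isClosed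
    (f₀ := fun p => f (x p.1)) (f₁ := fun p => b p.1) (η := fun p => b p.1) continuous_id
    (by fun_prop) (by fun_prop) (by fun_prop)
    (fun p hp _ => (hab _ hp).symm.trans (congrArg f (hxA _ hp).symm)) fun _ _ _ => rfl
  obtain ⟨y, -, hyA, -⟩ := hg.lifts hK.cylinder L hD (by
    rintro ⟨k, s⟩ (hk | hs | hs)
    · rw [hDA _ hk, hLA k hk]; rfl
    · obtain rfl : s = 0 := hs
      rw [hD0 _ rfl, hL0]; rfl
    · obtain rfl : s = 1 := hs
      rw [hD1 _ rfl, hL1]; rfl)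
  exact ⟨x, y, hxA, fun k => (hyA (k, 0) (.inr (.inl rfl))).trans (hD0 _ rfl),
    fun k => (hyA (k, 1) (.inr (.inr rfl))).trans (hD1 _ rfl),
    fun k hk t => (hyA (k, t) (.inl hk)).trans (hDA _ hk), fun _ => Set.mem_univ _⟩

lemma HasCubeLifting.of_comp_right {e : C(X, Y)} {g : C(Y, X)} {m : C(Y, Z)}
    (h : HasCubeLifting (m.comp e)) (heg : (e.comp g).Homotopic (ContinuousMap.id Y)) :
    HasCubeLifting m := by
  obtain ⟨κ⟩ := heg
  refine ⟨fun hZ => (h.1 hZ).map e, fun K _ A hK a b ha _ hab => ?_⟩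
  have key := LiftsUpToHomotopy.of_boundary_homotopy (f := m) hK (a := fun p => κ (p.2, a p.1))
    (b := b) (κ.continuous.comp_continuousOn
      (continuousOn_snd.prodMk (ha.comp continuousOn_fst fun p hp => hp)))
    (fun k hk => by simp [hab k hk]) fun b' hb' => by
      obtain ⟨x, H, hx, hH⟩ := h.lifts hK b' (g.continuous.comp_continuousOn ha) fun k hk => by
        simp [← hb' k hk]
      exact ⟨e.comp x, H, fun k hk => by simp [hx k hk], hH⟩
  exact key.congr fun k _ => by simp

lemma HasCubeLifting.of_homotopic {f' : C(X, Y)} (h : HasCubeLifting f) (hf : f.Homotopic f') :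
    HasCubeLifting f' := by
  obtain ⟨F⟩ := hf
  let i (t : I) : C(X, I × X) := ⟨fun x => (t, x), by fun_prop⟩
  have hi : ((i 0).comp ContinuousMap.snd).Homotopic (ContinuousMap.id (I × X)) :=
    ⟨{ toFun := fun p => (p.1 * p.2.1, p.2.2)
       map_zero_left := fun p => by simp [i]
       map_one_left := fun p => by simp }⟩
  have hsnd : HasCubeLifting (ContinuousMap.snd : C(I × X, X)) :=
    HasCubeLifting.of_comp_right (e := i 0) hasCubeLifting_id hi
  have hF : HasCubeLifting F.toContinuousMap := by
    refine HasCubeLifting.of_comp_right (e := i 0) ?_ hi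
    convert h using 1
    ext x; simp [i]
  have hi1 : HasCubeLifting (i 1) := hsnd.of_comp hasCubeLifting_id
  convert hF.comp hi1 using 1
  ext x; simp [i]

lemma hasCubeLifting_of_homotopyInverse {g : C(Y, X)}
    (hfg : (f.comp g).Homotopic (ContinuousMap.id Y))
    (hgf : (g.comp f).Homotopic (ContinuousMap.id X)) : HasCubeLifting f :=
  (hasCubeLifting_id.of_homotopic hfg.symm).of_comp_right hgf

end Lifting

/-! ### Weak homotopy equivalences and the lifting property -/

section WeakEquiv

variable {X Y : Type*} [TopologicalSpace X] [TopologicalSpace Y] {f : C(X, Y)}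

lemma HasCubeLifting.injective_inducedZerothHomotopy (h : HasCubeLifting f) :
    Function.Injective (inducedZerothHomotopy f) := by
  classical
  rintro ⟨x⟩ ⟨x'⟩ hxx'
  obtain ⟨γ⟩ : Joined (f x) (f x') := Quotient.exact hxx'
  obtain ⟨c, -, hc, -⟩ := h.lifts isCubePair_unitInterval
    (a := fun k => if k = 0 then x else x') γ.toContinuousMap
    (Set.Finite.continuousOn (Set.toFinite _) _) (by simp +contextual)
  exact Quotient.sound ⟨⟨c, by simp [hc 0], by simp [hc 1]⟩⟩

lemma HasCubeLifting.surjective_inducedZerothHomotopy (h : HasCubeLifting f) :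
    Function.Surjective (inducedZerothHomotopy f) := by
  rintro ⟨y⟩
  have : Nonempty X := h.1 ⟨y, Set.mem_univ _⟩
  obtain ⟨c, H, -, hH0, hH1, -⟩ := h.lifts (isCubePair_boundary 0)
    (a := fun _ => Classical.arbitrary X) (ContinuousMap.const _ y) continuousOn_const
    fun k hk => hk.elim fun i => i.elim0
  exact ⟨Quotient.mk _ (c 0), Quotient.sound
    ⟨⟨H.comp ⟨fun t => (0, t), by fun_prop⟩, hH0 0, hH1 0⟩⟩⟩

lemma HasCubeLifting.injective_inducedHomotopyGroup (h : HasCubeLifting f) (n : ℕ) (x : X) :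
    Function.Injective (inducedHomotopyGroup (Fin n) f x) := by
  rintro ⟨p⟩ ⟨q⟩ hpq
  obtain ⟨F⟩ : GenLoop.Homotopic (inducedGenLoop f p) (inducedGenLoop f q) := Quotient.exact hpq
  have hK := isCubePair_boundary n
  obtain ⟨D, hD, hD0, hD1, hDA⟩ := exists_continuousOn_cylinderBoundary hK.isClosed
    (f₀ := fun k => p.1 k.1) (f₁ := fun k => q.1 k.1) (η := fun _ => x) continuous_id
    (by fun_prop) (by fun_prop) continuousOn_const (fun k hk _ => (p.2 k.1 hk).symm)
    fun k hk _ => (q.2 k.1 hk).symm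
  obtain ⟨c, -, hc, -⟩ := h.lifts hK.cylinder
    (F.toContinuousMap.comp ⟨fun k => (k.2, k.1), by fun_prop⟩) hD (by
      rintro ⟨k, t⟩ (hk | ht | ht)
      · rw [hDA _ hk]
        exact ((F.prop t k hk).trans (congrArg f (p.2 k hk))).symm
      · obtain rfl : t = 0 := ht
        rw [hD0 _ rfl]
        exact (F.map_zero_left k).symm
      · obtain rfl : t = 1 := ht
        rw [hD1 _ rfl]
        exact (F.map_one_left k).symm)
  refine Quotient.sound ⟨⟨⟨c.comp ⟨fun k => (k.2, k.1), by fun_prop⟩, fun k => ?_, fun k => ?_⟩,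
    fun t k hk => ?_⟩⟩
  · exact (hc (k, 0) (.inr (.inl rfl))).trans (hD0 _ rfl)
  · exact (hc (k, 1) (.inr (.inr rfl))).trans (hD1 _ rfl)
  · exact ((hc (k, t) (.inl hk)).trans (hDA _ hk)).trans (p.2 k hk).symm

lemma HasCubeLifting.surjective_inducedHomotopyGroup (h : HasCubeLifting f) (n : ℕ) (x : X) :
    Function.Surjective (inducedHomotopyGroup (Fin n) f x) := by
  rintro ⟨q⟩
  obtain ⟨c, H, hc, hH0, hH1, hHA, -⟩ := h.lifts (isCubePair_boundary n) (a := fun _ => x) q.1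
    continuousOn_const fun k hk => (q.2 k hk).symm
  refine ⟨Quotient.mk _ ⟨c, hc⟩, Quotient.sound
    ⟨⟨⟨H.comp ⟨fun k => (k.2, k.1), by fun_prop⟩, hH0, hH1⟩, fun t k hk => ?_⟩⟩⟩
  exact ((hHA k hk t).trans (q.2 k hk)).trans (congrArg f (hc k hk)).symm

lemma HasCubeLifting.isWeakHomotopyEquiv (h : HasCubeLifting f) : IsWeakHomotopyEquiv f :=
  ⟨⟨h.injective_inducedZerothHomotopy, h.surjective_inducedZerothHomotopy⟩, fun n x =>
    ⟨h.injective_inducedHomotopyGroup n x, h.surjective_inducedHomotopyGroup n x⟩⟩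

lemma LiftsUpToHomotopy.of_homeomorph {K L : Type} [TopologicalSpace K] [TopologicalSpace L]
    {O : Set Y} {A : Set K} {A' : Set L} (e : K ≃ₜ L) (he : ∀ k, k ∈ A ↔ e k ∈ A') {a : K → X}
    {b : K → Y} (h : LiftsUpToHomotopy f O A' (fun l => a (e.symm l)) (fun l => b (e.symm l))
      fun p => b (e.symm p.1)) : LiftsUpToHomotopy f O A a b fun p => b p.1 := by
  obtain ⟨x, H, hxA, hH0, hH1, hHA, hHO⟩ := h
  exact ⟨x.comp e, H.comp ⟨fun p => (e p.1, p.2), by fun_prop⟩,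
    fun k hk => by simp [hxA _ ((he k).1 hk)], fun k => hH0 _, fun k => by simp [hH1],
    fun k hk t => by simp [hHA _ ((he k).1 hk)], fun p => hHO _⟩

lemma hasCubeLiftingOn_of_cubes {O : Set Y} (h₀ : O.Nonempty → Nonempty X)
    (h : ∀ (n : ℕ) (a : (Fin n → I) → X) (b : C(Fin n → I, Y)),
      ContinuousOn a (Cube.boundary (Fin n)) → (∀ k, b k ∈ O) →
      (∀ k ∈ Cube.boundary (Fin n), f (a k) = b k) →
      LiftsUpToHomotopy f O (Cube.boundary (Fin n)) a b fun p => b p.1) :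
    HasCubeLiftingOn f O := by
  refine ⟨h₀, fun K _ A ⟨n, e, he⟩ a b ha hbO hab => LiftsUpToHomotopy.of_homeomorph e he ?_⟩
  refine h n _ (b.comp e.symm) (ha.comp (by fun_prop) fun k hk => ?_) (fun _ => hbO _)
    fun k hk => hab _ ?_
  all_goals rw [he]; simpa using hk

lemma IsWeakHomotopyEquiv.lifts_const (h : IsWeakHomotopyEquiv f) {K : Type} [TopologicalSpace K]
    {A : Set K} (hK : IsCubePair A) {x : X} (b : C(K, Y)) (hbA : ∀ k ∈ A, b k = f x) :
    LiftsUpToHomotopy f Set.univ A (fun _ => x) b fun p => b p.1 := by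
  obtain ⟨n, e, he⟩ := hK
  refine LiftsUpToHomotopy.of_homeomorph e he ?_
  have hbe : ∀ l ∈ Cube.boundary (Fin n), b (e.symm l) = f x :=
    fun l hl => hbA _ ((he _).2 (by simpa using hl))
  obtain ⟨⟨p⟩, hp⟩ := (h.2 n x).2 (Quotient.mk _ ⟨b.comp e.symm, hbe⟩)
  obtain ⟨F⟩ : GenLoop.Homotopic (inducedGenLoop f p) _ := Quotient.exact hp
  exact ⟨p.1, F.toContinuousMap.comp ⟨fun k => (k.2, k.1), by fun_prop⟩, p.2, F.map_zero_left,
    F.map_one_left, fun k hk t =>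
      ((F.prop t k hk).trans (congrArg f (p.2 k hk))).trans (hbe k hk).symm,
    fun _ => Set.mem_univ _⟩

/-- The top of the cylinder carries a loop which `b` contracts after applying `f`, so injectivity
on homotopy groups contracts it in `X`, and surjectivity applies. -/
lemma IsWeakHomotopyEquiv.lifts_of_const_sides (h : IsWeakHomotopyEquiv f) {n : ℕ} {x : X}
    {a : (Fin n → I) × I → X} (b : C((Fin n → I) × I, Y))
    (ha : ContinuousOn a (cylinderBoundary (Cube.boundary (Fin n))))
    (hax : ∀ k t, k ∈ Cube.boundary (Fin n) ∨ t = 0 → a (k, t) = x)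
    (hab : ∀ p ∈ cylinderBoundary (Cube.boundary (Fin n)), f (a p) = b p) :
    LiftsUpToHomotopy f Set.univ (cylinderBoundary (Cube.boundary (Fin n))) a b
      fun p => b p.1 := by
  have hK := isCubePair_boundary n
  let α : GenLoop (Fin n) X x := ⟨⟨fun k => a (k, 1), ha.comp_continuous (by fun_prop)
    fun k => .inr (.inr rfl)⟩, fun k hk => hax k 1 (.inl hk)⟩
  have hbx : ∀ k t, k ∈ Cube.boundary (Fin n) ∨ t = 0 → b (k, t) = f x := fun k t hkt => by
    rw [← hax k t hkt, hab]
    exact hkt.imp_right .inl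
  obtain ⟨F⟩ : GenLoop.Homotopic GenLoop.const α := Quotient.exact ((h.2 n x).1
    (a₁ := Quotient.mk _ GenLoop.const) (a₂ := Quotient.mk _ α) (Quotient.sound
      ⟨⟨⟨b.comp ⟨fun k => (k.2, k.1), by fun_prop⟩, fun k => hbx _ _ (.inr rfl),
        fun k => (hab _ (.inr (.inr rfl))).symm⟩, fun t k hk => hbx _ _ (.inl hk)⟩⟩))
  have hF0 : ∀ k, F (0, k) = x := F.map_zero_left
  have hFa : ∀ p ∈ cylinderBoundary (Cube.boundary (Fin n)), F (p.2, p.1) = a p := by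
    rintro ⟨k, t⟩ (hk | ht | ht)
    · exact (F.prop t k hk).trans (hax k t (.inl hk)).symm
    · obtain rfl : t = 0 := ht
      exact (hF0 k).trans (hax k 0 (.inr rfl)).symm
    · obtain rfl : t = 1 := ht
      exact F.map_one_left k
  have key := LiftsUpToHomotopy.of_boundary_homotopy (f := f) hK.cylinder (b := b)
    (a := fun p => F (p.2 * p.1.2, p.1.1)) (by fun_prop)
    (fun p hp => by simpa only [one_mul, hFa p hp] using hab p hp) fun b' hb' =>
      (h.lifts_const hK.cylinder (x := x) b'
        (fun p hp => by simpa [hF0] using (hb' p hp).symm)).congr fun p _ => by simp [hF0]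
  exact key.congr fun p hp => by simpa only [one_mul] using hFa p hp

lemma exists_homotopy_const_sides {n : ℕ} {a : (Fin n → I) × I → X}
    (ha : ContinuousOn a (cylinderBoundary (Cube.boundary (Fin n)))) :
    ∃ (x : X) (G : ((Fin n → I) × I) × I → X),
      ContinuousOn G {p | p.1 ∈ cylinderBoundary (Cube.boundary (Fin n))} ∧
      (∀ p ∈ cylinderBoundary (Cube.boundary (Fin n)), G (p, 1) = a p) ∧
      ∀ k t, k ∈ Cube.boundary (Fin n) ∨ t = 0 → G ((k, t), 0) = x := by
  have hK := isCubePair_boundary n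
  let C : ((Fin n → I) × I) × I → X :=
    fun p => a (cubeRetract (fun i => p.2 * p.1.1 i, p.2 * p.1.2))
  have hC : Continuous C := ha.comp_continuous (by fun_prop) fun p =>
    (cubeRetract_mem _).imp_right .inl
  have hC0 : ∀ p, C (p, 0) = C (0, 0) := fun p => by simp [C]
  have hC1 : ∀ k t, k ∈ Cube.boundary (Fin n) ∨ t = 0 → C ((k, t), 1) = a (k, t) :=
    fun k t hkt => by simp [C, cubeRetract_eq_self (k := (k, t)) hkt]
  obtain ⟨T, hT0, hTA, -⟩ := hK.exists_homotopy_extension (a := fun p => C ((p.1, 1), σ p.2))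
    ⟨fun k => a (k, 1), ha.comp_continuous (by fun_prop) fun k => .inr (.inr rfl)⟩ (by fun_prop)
    (fun k hk => by simp [hC1 k 1 (.inl hk)]) (fun _ => Set.mem_univ _)
    fun _ _ _ => Set.mem_univ _
  obtain ⟨G, hG, hGbot, hGtop, hGA⟩ := exists_continuousOn_cylinderBoundary hK.isClosed
    (c := Prod.fst) (f₀ := C) (f₁ := fun p => T (p.1.1, σ p.2)) (η := C) continuous_fst hC
    (by fun_prop) hC.continuousOn (fun _ _ _ => rfl) (by
      rintro ⟨⟨k, t⟩, s⟩ hk (rfl : t = 1)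
      simp [hTA k hk])
  refine ⟨C (0, 0), G, hG, ?_, fun k t hkt => ?_⟩
  · rintro ⟨k, t⟩ (hk | ht | ht)
    · rw [hGA _ hk, hC1 k t (.inl hk)]
    · rw [hGbot _ ht, hC1 k t (.inr ht)]
    · obtain rfl : t = 1 := ht
      rw [hGtop _ rfl]
      simp [hT0]
  · rw [← hC0 (k, t)]
    exact hkt.elim (fun hk => hGA _ hk) fun ht => hGbot _ ht

lemma IsWeakHomotopyEquiv.lifts_cylinder (h : IsWeakHomotopyEquiv f) {n : ℕ}
    {a : (Fin n → I) × I → X} (b : C((Fin n → I) × I, Y))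
    (ha : ContinuousOn a (cylinderBoundary (Cube.boundary (Fin n))))
    (hab : ∀ p ∈ cylinderBoundary (Cube.boundary (Fin n)), f (a p) = b p) :
    LiftsUpToHomotopy f Set.univ (cylinderBoundary (Cube.boundary (Fin n))) a b
      fun p => b p.1 := by
  obtain ⟨x, G, hG, hG1, hG0⟩ := exists_homotopy_const_sides ha
  exact (LiftsUpToHomotopy.of_boundary_homotopy (isCubePair_boundary n).cylinder hG
    (fun p hp => by rw [hG1 p hp, hab p hp]) fun b' hb' => h.lifts_of_const_sides b'
      (hG.comp (by fun_prop) fun p hp => hp) hG0 hb').congr hG1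

lemma IsWeakHomotopyEquiv.hasCubeLifting (h : IsWeakHomotopyEquiv f) : HasCubeLifting f := by
  have h₀ : ∀ y : Y, ∃ x, Joined (f x) y := fun y => by
    obtain ⟨⟨x⟩, hx⟩ := h.1.2 (Quotient.mk _ y)
    exact ⟨x, Quotient.exact hx⟩
  refine hasCubeLiftingOn_of_cubes (fun ⟨y, _⟩ => ⟨(h₀ y).choose⟩) fun n a b ha _ hab => ?_
  cases n with
  | zero =>
    obtain ⟨x, ⟨γ⟩⟩ := h₀ (b 0)
    exact ⟨ContinuousMap.const _ x, γ.toContinuousMap.comp ContinuousMap.snd,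
      fun k hk => hk.elim fun i => i.elim0, fun k => by simp,
      fun k => by simp [Subsingleton.elim k 0], fun k hk => hk.elim fun i => i.elim0,
      fun _ => Set.mem_univ _⟩
  | succ n =>
    let c := cylinderHomeomorph n
    have hc : ∀ p ∈ cylinderBoundary (Cube.boundary (Fin n)), c p ∈ Cube.boundary (Fin (n + 1)) :=
      fun p hp => cylinderHomeomorph_mem_boundary_iff.2 hp
    refine LiftsUpToHomotopy.of_homeomorph c.symm (A' := cylinderBoundary (Cube.boundary (Fin n)))
      (fun k => by simp [← cylinderHomeomorph_mem_boundary_iff, c]) ?_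
    exact h.lifts_cylinder (b.comp ⟨c, c.continuous⟩) (ha.comp (by fun_prop) hc) fun p hp =>
      hab _ (hc p hp)

end WeakEquiv

/-! ### Serre fibrations and fibre products -/

section Serre

variable {p : C(X, B)} {K : Type} [TopologicalSpace K] {A : Set K}

/-- The cube is a retract of the closed ball. -/
lemma IsSerreFibration.exists_lift_cube (hp : IsSerreFibration p) {n : ℕ} (u : C(Fin n → I, X))
    (v : C((Fin n → I) × I, B)) (huv : ∀ k, v (k, 0) = p (u k)) :
    ∃ w : C((Fin n → I) × I, X), (∀ k, w (k, 0) = u k) ∧ ∀ z, p (w z) = v z := by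
  have hι : Continuous fun k : Fin n → I => WithLp.toLp 2 fun i => (k i : ℝ) := by fun_prop
  obtain ⟨C, hC⟩ := isCompact_univ.exists_bound_of_continuousOn hι.continuousOn
  have hC' : 0 < |C| + 1 := by positivity
  let j : (Fin n → I) → (Metric.closedBall (0 : EuclideanSpace ℝ (Fin n)) 1 : Set _) := fun k =>
    ⟨(|C| + 1)⁻¹ • WithLp.toLp 2 fun i => (k i : ℝ), by
      rw [mem_closedBall_zero_iff, norm_smul, norm_inv, Real.norm_of_nonneg hC'.le,
        inv_mul_le_iff₀ hC', mul_one]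
      exact (hC k (Set.mem_univ _)).trans ((le_abs_self C).trans (by linarith))⟩
  let r : (Metric.closedBall (0 : EuclideanSpace ℝ (Fin n)) 1 : Set _) → Fin n → I := fun y i =>
    Set.projIcc 0 1 zero_le_one ((|C| + 1) * y.1 i)
  have hj : Continuous j := Continuous.subtype_mk (by fun_prop) _
  have hr : Continuous r := continuous_pi fun i => continuous_projIcc.comp (by fun_prop)
  have hrj : ∀ k, r (j k) = k := fun k => funext fun i => projIcc_eq_of_eq_coe (by
    simp [j, hC'.ne'])
  obtain ⟨w, hw0, hw⟩ := hp n ⟨fun y => u (r y), by fun_prop⟩ ⟨fun q => v (r q.1, q.2), by fun_prop⟩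
    fun y => huv _
  exact ⟨⟨fun q => w (j q.1, q.2), by fun_prop⟩, fun k => by simp [hw0, hrj],
    fun q => by simp [hw, hrj]⟩

/-- Lift along the rays of the radial projection of the cylinder onto its bottom and sides. -/
lemma IsSerreFibration.exists_relative_lift (hp : IsSerreFibration p) (hK : IsCubePair A)
    {u : K × I → X} (v : C(K × I, B)) (hu : ContinuousOn u {q | q.1 ∈ A ∨ q.2 = 0})
    (huv : ∀ q : K × I, q.1 ∈ A ∨ q.2 = 0 → p (u q) = v q) :
    ∃ w : C(K × I, X), (∀ q : K × I, q.1 ∈ A ∨ q.2 = 0 → w q = u q) ∧ ∀ q, p (w q) = v q := by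
  obtain ⟨n, e, he⟩ := hK
  let c := cylinderHomeomorph n
  let ε : K × I ≃ₜ (Fin n → I) × I := e.prodCongr (Homeomorph.refl I)
  have hmem : ∀ k, (ε.symm (cubeRetract k)).1 ∈ A ∨ (ε.symm (cubeRetract k)).2 = 0 := fun k => by
    rw [he]
    simpa [ε] using cubeRetract_mem k
  obtain ⟨w, hw0, hwp⟩ := hp.exists_lift_cube (n := n + 1)
    ⟨fun k => u (ε.symm (cubeRetract (c.symm k))), hu.comp_continuous (by fun_prop) fun k => hmem _⟩
    (v.comp ⟨fun q => ε.symm (cubeContract (cubeRetract (c.symm q.1), q.2)), by fun_prop⟩)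
    fun k => by simp [huv _ (hmem _), cubeContract_zero]
  refine ⟨w.comp ⟨fun q => (c (ε q), cubeDepth (ε q)), by fun_prop⟩, fun q hq => ?_, fun q => ?_⟩
  · have hq' : (ε q).1 ∈ Cube.boundary (Fin n) ∨ (ε q).2 = 0 := by
      rwa [he] at hq
    simp [cubeDepth_eq_zero hq', hw0, cubeRetract_eq_self hq']
  · simp [hwp, cubeContract_cubeRetract]

lemma IsSerreFibration.exists_vertical_homotopy (hp : IsSerreFibration p) (hK : IsCubePair A)
    {V W : C(K × I, X)} (hVW : ∀ q, p (V q) = p (W q)) (h₀ : ∀ k, V (k, 0) = W (k, 0))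
    (hA : ∀ k ∈ A, ∀ t, V (k, t) = W (k, t)) :
    ∃ G : C(K × I, X), (∀ k, G (k, 0) = V (k, 1)) ∧ (∀ k, G (k, 1) = W (k, 1)) ∧
      (∀ k ∈ A, ∀ t, G (k, t) = W (k, 1)) ∧ ∀ q, p (G q) = p (W (q.1, 1)) := by
  obtain ⟨u, hu, huV, huW⟩ := exists_continuousOn_union (s := {q : (K × I) × I | q.1.2 = 0})
    (t := {q : (K × I) × I | q.1.1 ∈ A ∨ q.1.2 = 1 ∨ q.2 = 0})
    (f := fun q => V (q.1.1, q.2)) (g := fun q => W (q.1.1, q.2))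
    (isClosed_eq (by fun_prop) continuous_const)
    ((hK.isClosed.preimage (by fun_prop)).union ((isClosed_eq (by fun_prop) continuous_const).union
      (isClosed_eq (by fun_prop) continuous_const))) (by fun_prop) (by fun_prop) (by
      rintro ⟨⟨k, t⟩, s⟩ ⟨ht : t = 0, hk | ht' | (rfl : s = 0)⟩
      exacts [hA k hk s, absurd (ht.symm.trans ht') zero_ne_one, h₀ k])
  obtain ⟨G, hGu, hGp⟩ := hp.exists_relative_lift hK.cylinder (u := u)
    ⟨fun q => p (W (q.1.1, q.2)), by fun_prop⟩ (hu.mono (by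
      rintro q ((h | h | h) | h)
      exacts [.inr (.inl h), .inl h, .inr (.inr (.inl h)), .inr (.inr (.inr h))])) (by
      rintro q ((h | h | h) | h)
      exacts [congrArg p (huW (.inl h)), (congrArg p (huV h)).trans (hVW _),
        congrArg p (huW (.inr (.inl h))), congrArg p (huW (.inr (.inr h)))])
  refine ⟨G.comp ⟨fun q => (q, 1), by fun_prop⟩, fun k => ?_, fun k => ?_, fun k hk t => ?_,
    fun q => hGp _⟩
  · exact (hGu ((k, 0), 1) (.inl (.inr (.inl rfl)))).trans (huV rfl)
  · exact (hGu ((k, 1), 1) (.inl (.inr (.inr rfl)))).trans (huW (.inr (.inl rfl)))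
  · exact (hGu ((k, t), 1) (.inl (.inl hk))).trans (huW (.inl hk))

/-- Lift the projection of a solution's homotopy `H` to `w` in `X`; then `φ ∘ w` and `H` are two
lifts of the same homotopy, and their ends are vertically homotopic. -/
lemma HasCubeLifting.exists_vertical_lift {pX : C(X, B)} {pX' : C(X', B)} {φ : C(X, X')}
    (hφ : HasCubeLifting φ) (hφp : ∀ x, pX' (φ x) = pX x) (hp : IsSerreFibration pX)
    (hp' : IsSerreFibration pX') (hK : IsCubePair A) {a : K → X} (b : C(K, X'))
    (ha : ContinuousOn a A) (hab : ∀ k ∈ A, φ (a k) = b k) :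
    ∃ (x : C(K, X)) (G : C(K × I, X')), (∀ k ∈ A, x k = a k) ∧ (∀ k, G (k, 0) = φ (x k)) ∧
      (∀ k, G (k, 1) = b k) ∧ (∀ k ∈ A, ∀ t, G (k, t) = b k) ∧
      ∀ q, pX' (G q) = pX' (b q.1) := by
  obtain ⟨x, H, hxA, hH0, hH1, hHA, -⟩ := hφ.lifts hK b ha hab
  have hφx : ∀ k ∈ A, φ (x k) = b k := fun k hk => by rw [hxA k hk, hab k hk]
  obtain ⟨w, hwx, hwp⟩ := hp.exists_relative_lift hK (u := fun q => x q.1) (pX'.comp H)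
    (by fun_prop) (by
      rintro ⟨k, t⟩ (hk | (rfl : t = 0))
      · simp [← hφp, hHA k hk, hφx k hk]
      · simp [← hφp, hH0])
  obtain ⟨G, hG0, hG1, hGA, hGp⟩ := hp'.exists_vertical_homotopy hK (V := φ.comp w) (W := H)
    (fun q => by simp [hφp, hwp]) (fun k => by simp [hwx, hH0])
    fun k hk t => by simp [hwx, hk, hHA, hφx]
  exact ⟨w.comp ⟨fun k => (k, 1), by fun_prop⟩, G, fun k hk => by simp [hwx, hk, hxA], hG0,
    fun k => by simp [hG1, hH1], fun k hk t => by simp [hGA k hk, hH1], fun q => by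
      simp [hGp, hH1]⟩

end Serre

section FiberProduct

/-- The map induced on fibre products by a pair of maps over the base. -/
def fiberProductMap (pX : C(X, B)) (pY : C(Y, B)) (pX' : C(X', B)) (pY' : C(Y', B))
    (φ : C(X, X')) (ψ : C(Y, Y')) (hφ : ∀ x, pX' (φ x) = pX x) (hψ : ∀ y, pY' (ψ y) = pY y) :
    C({z : X × Y // pX z.1 = pY z.2}, {z : X' × Y' // pX' z.1 = pY' z.2}) :=
  ⟨fun z => ⟨(φ z.1.1, ψ z.1.2), by rw [hφ, hψ]; exact z.2⟩, by fun_prop⟩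

lemma hasCubeLifting_fiberProductMap_left {pX : C(X, B)} {pX' : C(X', B)} {pY : C(Y, B)}
    {φ : C(X, X')} (hφp : ∀ x, pX' (φ x) = pX x) (hp : IsSerreFibration pX)
    (hp' : IsSerreFibration pX') (hφ : HasCubeLifting φ) :
    HasCubeLifting (fiberProductMap pX pY pX' pY φ (ContinuousMap.id Y) hφp fun _ => rfl) := by
  refine ⟨fun ⟨z, _⟩ => ?_, fun K _ A hK a b ha _ hab => ?_⟩
  · have : Nonempty X := hφ.1 ⟨z.1.1, Set.mem_univ _⟩
    obtain ⟨x, G, -, hG0, -, -, hGp⟩ := hφ.exists_vertical_lift hφp hp hp' (isCubePair_boundary 0)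
      (a := fun _ => Classical.arbitrary X) (ContinuousMap.const _ z.1.1) continuousOn_const
      fun k hk => hk.elim fun i => i.elim0
    exact ⟨⟨(x 0, z.1.2), by simpa [hG0, hφp, z.2] using hGp (0, 0)⟩⟩
  · obtain ⟨x, G, hxA, hG0, hG1, hGA, hGp⟩ := hφ.exists_vertical_lift hφp hp hp' hK
      (a := fun k => (a k).1.1) ⟨fun k => (b k).1.1, by fun_prop⟩ (by fun_prop)
      fun k hk => congrArg (fun z => z.1.1) (hab k hk)
    have hGb : ∀ q, pX' (G q) = pY (b q.1).1.2 := fun q => (hGp q).trans (b q.1).2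
    refine ⟨⟨fun k => ⟨(x k, (b k).1.2), by rw [← hφp, ← hG0, hGb]⟩, by fun_prop⟩,
      ⟨fun q => ⟨(G q, (b q.1).1.2), hGb q⟩, by fun_prop⟩, fun k hk => ?_, fun k => ?_, fun k => ?_,
      fun k hk t => ?_, fun _ => Set.mem_univ _⟩
    · exact Subtype.ext (Prod.ext (hxA k hk) (congrArg (fun z => z.1.2) (hab k hk)).symm)
    · exact Subtype.ext (Prod.ext (hG0 k) rfl)
    · exact Subtype.ext (Prod.ext (hG1 k) rfl)
    · exact Subtype.ext (Prod.ext (hGA k hk t) rfl)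

lemma HasCubeLifting.exists_lift_along {pX : C(X, B)} {pY' : C(Y', B)} {ψ : C(Y, Y')}
    (hψ : HasCubeLifting ψ) (hp : IsSerreFibration pX) {K : Type} [TopologicalSpace K]
    {A : Set K} (hK : IsCubePair A) {a : K → Y}
    (b : C(K, {z : X × Y' // pX z.1 = pY' z.2})) (ha : ContinuousOn a A)
    (hab : ∀ k ∈ A, ψ (a k) = (b k).1.2) :
    ∃ (y : C(K, Y)) (G : C(K × I, {z : X × Y' // pX z.1 = pY' z.2})), (∀ k ∈ A, y k = a k) ∧
      (∀ k, (G (k, 0)).1.2 = ψ (y k)) ∧ (∀ k, G (k, 1) = b k) ∧ ∀ k ∈ A, ∀ t, G (k, t) = b k := by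
  obtain ⟨y, H, hyA, hH0, hH1, hHA, -⟩ := hψ.lifts hK ⟨fun k => (b k).1.2, by fun_prop⟩ ha hab
  have hb : ∀ k, pX (b k).1.1 = pY' (b k).1.2 := fun k => (b k).2
  obtain ⟨w, hwb, hwp⟩ := hp.exists_relative_lift hK (u := fun q => (b q.1).1.1)
    ⟨fun q => pY' (H (q.1, σ q.2)), by fun_prop⟩ (by fun_prop) (by
      rintro ⟨k, t⟩ (hk | (rfl : t = 0))
      · simp [hHA k hk, hb]
      · simp [hH1, hb])
  refine ⟨y, ⟨fun q => ⟨(w (q.1, σ q.2), H q), by simp [hwp]⟩, by fun_prop⟩, hyA, hH0, fun k => ?_,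
    fun k hk t => ?_⟩
  · exact Subtype.ext (Prod.ext (by simp [hwb]) (hH1 k))
  · exact Subtype.ext (Prod.ext (by simp [hwb, hk]) (hHA k hk t))

lemma hasCubeLifting_fiberProductMap_right {pX : C(X, B)} {pY : C(Y, B)} {pY' : C(Y', B)}
    {ψ : C(Y, Y')} (hψp : ∀ y, pY' (ψ y) = pY y) (hp : IsSerreFibration pX)
    (hψ : HasCubeLifting ψ) :
    HasCubeLifting (fiberProductMap pX pY pX pY' (ContinuousMap.id X) ψ (fun _ => rfl) hψp) := by
  refine ⟨fun ⟨z, _⟩ => ?_, fun K _ A hK a b ha _ hab => ?_⟩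
  · have : Nonempty Y := hψ.1 ⟨z.1.2, Set.mem_univ _⟩
    obtain ⟨y, G, -, hG0, -, -⟩ := hψ.exists_lift_along hp (isCubePair_boundary 0)
      (a := fun _ => Classical.arbitrary Y) (ContinuousMap.const _ z) continuousOn_const
      fun k hk => hk.elim fun i => i.elim0
    exact ⟨⟨((G (0, 0)).1.1, y 0), by rw [(G (0, 0)).2, hG0, hψp]⟩⟩
  · obtain ⟨y, G, hyA, hG0, hG1, hGA⟩ := hψ.exists_lift_along hp hK (a := fun k => (a k).1.2) b
      (by fun_prop) fun k hk => congrArg (fun z => z.1.2) (hab k hk)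
    refine ⟨⟨fun k => ⟨((G (k, 0)).1.1, y k), by rw [(G (k, 0)).2, hG0, hψp]⟩, by fun_prop⟩, G,
      fun k hk => ?_, fun k => ?_, hG1, hGA, fun _ => Set.mem_univ _⟩
    · exact Subtype.ext (Prod.ext (congrArg (fun z => z.1.1)
        ((hGA k hk 0).trans (hab k hk).symm)) (hyA k hk))
    · exact Subtype.ext (Prod.ext rfl (hG0 k))

lemma hasCubeLifting_fiberProductMap {pX : C(X, B)} {pY : C(Y, B)} {pX' : C(X', B)}
    {pY' : C(Y', B)} {φ : C(X, X')} {ψ : C(Y, Y')} (hφp : ∀ x, pX' (φ x) = pX x)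
    (hψp : ∀ y, pY' (ψ y) = pY y) (hp : IsSerreFibration pX) (hp' : IsSerreFibration pX')
    (hφ : HasCubeLifting φ) (hψ : HasCubeLifting ψ) :
    HasCubeLifting (fiberProductMap pX pY pX' pY' φ ψ hφp hψp) :=
  (hasCubeLifting_fiberProductMap_left hφp hp hp' hφ).comp
    (hasCubeLifting_fiberProductMap_right hψp hp hψ)

end FiberProduct

/-! ### Locality of the lifting property in the target -/

section Box

variable {ι : Type} {l u : ι → ℝ}

/-- The relative boundary of the box `[l, u]`: directions in which the box is degenerate have no
faces. -/
def boxBoundary (l u : ι → ℝ) : Set (ι → ℝ) :=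
  {x | x ∈ Set.Icc l u ∧ ∃ i, l i < u i ∧ (x i = l i ∨ x i = u i)}

/-- Functions to `E` on the boundary of the box `[l, u]` which are subject to the pointwise
condition `G` extend over the box under the same condition. -/
def BoxExtends {E : Type*} [TopologicalSpace E] (G : (ι → ℝ) → E → Prop) (l u : ι → ℝ) : Prop :=
  ∀ e : (ι → ℝ) → E, ContinuousOn e (boxBoundary l u) → (∀ x ∈ boxBoundary l u, G x (e x)) →
    ∃ e', ContinuousOn e' (Set.Icc l u) ∧ Set.EqOn e' e (boxBoundary l u) ∧
      ∀ x ∈ Set.Icc l u, G x (e' x)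

lemma isClosed_boxBoundary [Finite ι] : IsClosed (boxBoundary l u) := by
  have h : boxBoundary l u =
      Set.Icc l u ∩ ⋃ i, {_x | l i < u i} ∩ ({x | x i = l i} ∪ {x | x i = u i}) := by
    ext; simp [boxBoundary]
  rw [h]
  exact isClosed_Icc.inter (isClosed_iUnion_of_finite fun i => isClosed_const.inter
    ((isClosed_eq (by fun_prop) continuous_const).union
      (isClosed_eq (by fun_prop) continuous_const)))

section Split

variable [DecidableEq ι] {i : ι} {m : ℝ} {x : ι → ℝ}

lemma mem_Icc_update_right (hm : m ≤ u i) :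
    x ∈ Set.Icc l (Function.update u i m) ↔ x ∈ Set.Icc l u ∧ x i ≤ m := by
  simp only [Set.mem_Icc, Pi.le_def]
  grind

lemma mem_Icc_update_left (hm : l i ≤ m) :
    x ∈ Set.Icc (Function.update l i m) u ↔ x ∈ Set.Icc l u ∧ m ≤ x i := by
  simp only [Set.mem_Icc, Pi.le_def]
  grind

lemma mem_boxBoundary_update_right (hl : l i < m) (hm : m < u i) :
    x ∈ boxBoundary l (Function.update u i m) ↔
      (x ∈ boxBoundary l u ∧ x i ≤ m) ∨ (x ∈ Set.Icc l u ∧ x i = m) := by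
  simp only [boxBoundary, Set.mem_ofPred_eq, mem_Icc_update_right hm.le]
  constructor
  · rintro ⟨⟨hx, hxm⟩, j, hj⟩
    by_cases hji : j = i <;> grind
  · rintro (⟨⟨hx, j, hj⟩, hxm⟩ | ⟨hx, hxm⟩)
    · exact ⟨⟨hx, hxm⟩, j, by grind⟩
    · exact ⟨⟨hx, hxm.le⟩, i, by grind⟩

lemma mem_boxBoundary_update_left (hl : l i < m) (hm : m < u i) :
    x ∈ boxBoundary (Function.update l i m) u ↔
      (x ∈ boxBoundary l u ∧ m ≤ x i) ∨ (x ∈ Set.Icc l u ∧ x i = m) := by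
  simp only [boxBoundary, Set.mem_ofPred_eq, mem_Icc_update_left hl.le]
  constructor
  · rintro ⟨⟨hx, hxm⟩, j, hj⟩
    by_cases hji : j = i <;> grind
  · rintro (⟨⟨hx, j, hj⟩, hxm⟩ | ⟨hx, hxm⟩)
    · exact ⟨⟨hx, hxm⟩, j, by grind⟩
    · exact ⟨⟨hx, hxm.ge⟩, i, by grind⟩

lemma mem_Icc_update_update (hl : l i < m) (hm : m < u i) :
    x ∈ Set.Icc (Function.update l i m) (Function.update u i m) ↔ x ∈ Set.Icc l u ∧ x i = m := by
  rw [mem_Icc_update_left (by simpa using hl.le), mem_Icc_update_right hm.le, and_assoc,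
    ← le_antisymm_iff]

lemma mem_boxBoundary_update_update (hl : l i < m) (hm : m < u i) :
    x ∈ boxBoundary (Function.update l i m) (Function.update u i m) ↔
      x ∈ boxBoundary l u ∧ x i = m := by
  simp only [boxBoundary, Set.mem_ofPred_eq, mem_Icc_update_update hl hm]
  constructor
  · rintro ⟨⟨hx, hxm⟩, j, hj⟩
    exact ⟨⟨hx, j, by grind⟩, hxm⟩
  · rintro ⟨⟨hx, j, hj⟩, hxm⟩
    exact ⟨⟨hx, hxm⟩, j, by grind⟩

variable [Finite ι] {E : Type*} [TopologicalSpace E] {G : (ι → ℝ) → E → Prop}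

lemma BoxExtends.exists_extension_slice (hl : l i < m) (hm : m < u i)
    (hmid : BoxExtends G (Function.update l i m) (Function.update u i m)) {e : (ι → ℝ) → E}
    (he : ContinuousOn e (boxBoundary l u)) (hGe : ∀ x ∈ boxBoundary l u, G x (e x)) :
    ∃ D, ContinuousOn D {x | x ∈ boxBoundary l u ∨ x ∈ Set.Icc l u ∧ x i = m} ∧
      Set.EqOn D e (boxBoundary l u) ∧
      ∀ x, x ∈ boxBoundary l u ∨ x ∈ Set.Icc l u ∧ x i = m → G x (D x) := by
  have hmid_sub : boxBoundary (Function.update l i m) (Function.update u i m) ⊆ boxBoundary l u :=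
    fun x hx => ((mem_boxBoundary_update_update hl hm).1 hx).1
  obtain ⟨d, hd, hde, hGd⟩ := hmid e (he.mono hmid_sub) fun x hx => hGe x (hmid_sub hx)
  obtain ⟨D, hD, hDe, hDd⟩ := exists_continuousOn_union isClosed_boxBoundary isClosed_Icc he hd
    fun x hx => (hde ((mem_boxBoundary_update_update hl hm).2
      ⟨hx.1, ((mem_Icc_update_update hl hm).1 hx.2).2⟩)).symm
  simp only [← mem_Icc_update_update hl hm]
  refine ⟨D, hD, hDe, ?_⟩
  rintro x (hx | hx)
  exacts [hDe hx ▸ hGe x hx, hDd hx ▸ hGd x hx]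

/-- Extend first over the common face of the two halves, then over each half. -/
lemma BoxExtends.of_split (hl : l i < m) (hm : m < u i)
    (hlo : BoxExtends G l (Function.update u i m)) (hhi : BoxExtends G (Function.update l i m) u)
    (hmid : BoxExtends G (Function.update l i m) (Function.update u i m)) :
    BoxExtends G l u := by
  intro e he hGe
  obtain ⟨D, hD, hDe, hGD⟩ := hmid.exists_extension_slice hl hm he hGe
  have hlo_sub := fun x hx =>
    ((mem_boxBoundary_update_right (x := x) hl hm).1 hx).imp_left And.left
  have hhi_sub := fun x hx =>
    ((mem_boxBoundary_update_left (x := x) hl hm).1 hx).imp_left And.left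
  obtain ⟨a, ha, haD, hGa⟩ := hlo D (hD.mono hlo_sub) fun x hx => hGD x (hlo_sub x hx)
  obtain ⟨b, hb, hbD, hGb⟩ := hhi D (hD.mono hhi_sub) fun x hx => hGD x (hhi_sub x hx)
  obtain ⟨e', he', hea, heb⟩ := exists_continuousOn_union isClosed_Icc isClosed_Icc ha hb
    fun x hx => by
      rw [Set.mem_inter_iff, mem_Icc_update_right hm.le, mem_Icc_update_left hl.le] at hx
      have hxm := And.intro hx.1.1 (hx.1.2.antisymm hx.2.2)
      rw [haD ((mem_boxBoundary_update_right hl hm).2 (.inr hxm)),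
        hbD ((mem_boxBoundary_update_left hl hm).2 (.inr hxm))]
  have hcover : ∀ x ∈ Set.Icc l u, x ∈ Set.Icc l (Function.update u i m) ∨
      x ∈ Set.Icc (Function.update l i m) u := fun x hx => by
    rw [mem_Icc_update_right hm.le, mem_Icc_update_left hl.le]
    exact (le_total (x i) m).imp (.intro hx) (.intro hx)
  refine ⟨e', he'.mono hcover, fun x hx => ?_, fun x hx => ?_⟩
  · rw [← hDe hx]
    rcases hcover x hx.1 with h | h
    · exact (hea h).trans (haD ((mem_boxBoundary_update_right hl hm).2
        (.inl ⟨hx, ((mem_Icc_update_right hm.le).1 h).2⟩)))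
    · exact (heb h).trans (hbD ((mem_boxBoundary_update_left hl hm).2
        (.inl ⟨hx, ((mem_Icc_update_left hl.le).1 h).2⟩)))
  · rcases hcover x hx with h | h
    exacts [hea h ▸ hGa x h, heb h ▸ hGb x h]

end Split

section Grid

variable {T : Set ℝ}

lemma ncard_gridPoints_lt [Finite ι] (hT : T.Finite) {l' u' : ι → ℝ} {i : ι} {m : ℝ} (hl : l ≤ l')
    (hu : u' ≤ u) (hmT : m ∈ T) (hm : m ∈ Set.Ioo (l i) (u i)) (hm' : m ∉ Set.Ioo (l' i) (u' i)) :
    {p : ι × ℝ | p.2 ∈ T ∧ p.2 ∈ Set.Ioo (l' p.1) (u' p.1)}.ncard <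
      {p : ι × ℝ | p.2 ∈ T ∧ p.2 ∈ Set.Ioo (l p.1) (u p.1)}.ncard := by
  refine Set.ncard_lt_ncard ⟨fun p hp => ⟨hp.1, (hl p.1).trans_lt hp.2.1, hp.2.2.trans_le (hu p.1)⟩,
    fun h => hm' (h (a := (i, m)) ⟨hmT, hm⟩).2⟩ ?_
  exact (Set.finite_univ.prod hT).subset fun p hp => ⟨Set.mem_univ _, hp.1⟩

lemma boxExtends_of_grid [Finite ι] {E : Type*} [TopologicalSpace E] {G : (ι → ℝ) → E → Prop}
    (hT : T.Finite) (hcell : ∀ l u : ι → ℝ, (∀ i, l i ∈ T) → (∀ i, u i ∈ T) →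
      (∀ i, Disjoint T (Set.Ioo (l i) (u i))) → BoxExtends G l u)
    {l u : ι → ℝ} (hl : ∀ i, l i ∈ T) (hu : ∀ i, u i ∈ T) : BoxExtends G l u := by
  classical
  by_cases h : ∀ i, Disjoint T (Set.Ioo (l i) (u i))
  · exact hcell l u hl hu h
  obtain ⟨i, hi⟩ := not_forall.1 h
  obtain ⟨m, hmT, hm⟩ := Set.not_disjoint_iff.1 hi
  have hl' : ∀ j, Function.update l i m j ∈ T := fun j => by grind
  have hu' : ∀ j, Function.update u i m j ∈ T := fun j => by grind
  have hlm : l ≤ Function.update l i m := le_update_self_iff.2 hm.1.le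
  have hum : Function.update u i m ≤ u := update_le_self_iff.2 hm.2.le
  have _ := ncard_gridPoints_lt hT le_rfl hum hmT hm (by simp)
  have _ := ncard_gridPoints_lt hT hlm le_rfl hmT hm (by simp)
  have _ := ncard_gridPoints_lt hT hlm hum hmT hm (by simp)
  exact .of_split hm.1 hm.2 (boxExtends_of_grid hT hcell hl hu')
    (boxExtends_of_grid hT hcell hl' hu) (boxExtends_of_grid hT hcell hl' hu')
termination_by {p : ι × ℝ | p.2 ∈ T ∧ p.2 ∈ Set.Ioo (l p.1) (u p.1)}.ncard
decreasing_by all_goals assumption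

lemma Icc_subset_Icc_of_mem_interior {l' u' x : ι → ℝ}
    (hcell : ∀ i, Disjoint T (Set.Ioo (l i) (u i))) (hl' : ∀ i, l' i ∈ T) (hu' : ∀ i, u' i ∈ T)
    (hx : x ∈ Set.Icc l u) (hxb : x ∉ boxBoundary l u) (hx' : x ∈ Set.Icc l' u') :
    Set.Icc l u ⊆ Set.Icc l' u' := by
  suffices h : ∀ y ∈ Set.Icc l u, ∀ i, l' i ≤ y i ∧ y i ≤ u' i from
    fun y hy => ⟨fun i => (h y hy i).1, fun i => (h y hy i).2⟩
  intro y hy i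
  have hT : ∀ t ∈ T, t ≤ l i ∨ u i ≤ t := fun t ht => by
    by_contra! h
    exact Set.disjoint_left.1 (hcell i) ht h
  have := hT _ (hl' i)
  have := hT _ (hu' i)
  have hxi : l i < u i → x i ≠ l i ∧ x i ≠ u i := fun hi =>
    ⟨fun h => hxb ⟨hx, i, hi, .inl h⟩, fun h => hxb ⟨hx, i, hi, .inr h⟩⟩
  have := hx.1 i; have := hx.2 i; have := hx'.1 i; have := hx'.2 i
  have := hy.1 i; have := hy.2 i
  grind

lemma exists_grid {δ : ℝ} (hδ : 0 < δ) : ∃ T : Set ℝ, T.Finite ∧ 0 ∈ T ∧ 1 ∈ T ∧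
    T ⊆ Set.Icc 0 1 ∧ ∀ s ∈ T, ∀ t ∈ T, Disjoint T (Set.Ioo s t) → t - s < δ := by
  obtain ⟨N, hNI, hN, hcover⟩ := (isCompact_Icc (a := (0 : ℝ)) (b := 1)).finite_cover_balls
    (half_pos hδ)
  have hT : insert 0 (insert 1 N) ⊆ Set.Icc (0 : ℝ) 1 := by
    simp [Set.insert_subset_iff, hNI]
  refine ⟨insert 0 (insert 1 N), (hN.insert 1).insert 0, by simp, by simp, hT,
    fun s hs t ht hst => ?_⟩
  obtain ⟨r, hrN, hr⟩ : ∃ r ∈ N, |(s + t) / 2 - r| < δ / 2 := by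
    simpa [Real.dist_eq] using hcover (a := (s + t) / 2)
      ⟨by linarith [(hT hs).1, (hT ht).1], by linarith [(hT hs).2, (hT ht).2]⟩
  have hrst : r ≤ s ∨ t ≤ r := by
    by_contra! h
    exact Set.disjoint_left.1 hst (by simp [hrN]) h
  rw [abs_lt] at hr
  rcases hrst with h | h <;> linarith

lemma exists_grid_subordinate [Finite ι] {𝒰 : Set (Set (ι → ℝ))} (h𝒰 : ∀ U ∈ 𝒰, IsOpen U)
    (hcover : Set.Icc 0 1 ⊆ ⋃₀ 𝒰) : ∃ T : Set ℝ, T.Finite ∧ 0 ∈ T ∧ 1 ∈ T ∧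
      ∀ l u : ι → ℝ, (∀ i, l i ∈ T) → (∀ i, u i ∈ T) →
        (∀ i, Disjoint T (Set.Ioo (l i) (u i))) → ∃ U ∈ 𝒰, Set.Icc l u ⊆ U := by
  cases nonempty_fintype ι
  obtain ⟨δ, hδ, hball⟩ := lebesgue_number_lemma_of_metric_sUnion isCompact_Icc h𝒰 hcover
  obtain ⟨T, hT, hT0, hT1, hTI, hTδ⟩ := exists_grid hδ
  refine ⟨T, hT, hT0, hT1, fun l u hl hu hcell => ?_⟩
  obtain ⟨U, hU, hlU⟩ := hball l ⟨fun i => (hTI (hl i)).1, fun i => (hTI (hl i)).2⟩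
  refine ⟨U, hU, fun x hx => hlU ((dist_pi_lt_iff hδ).2 fun i => ?_)⟩
  rw [Real.dist_eq, abs_of_nonneg (sub_nonneg.2 (hx.1 i))]
  linarith [hx.2 i, hTδ _ (hl i) _ (hu i) (hcell i)]

end Grid

/-- The affine homeomorphism from a box onto the unit cube of its non-degenerate directions. -/
noncomputable def boxHomeomorph (hlu : l ≤ u) : Set.Icc l u ≃ₜ ({i // l i < u i} → I) where
  toFun k i := iccHomeoI _ _ i.2 ⟨k.1 i, k.2.1 _, k.2.2 _⟩
  invFun z := by
    classical
    exact ⟨fun i => if h : l i < u i then (iccHomeoI _ _ h).symm (z ⟨i, h⟩) else l i,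
      fun i => by dsimp only; split_ifs with h; exacts [((iccHomeoI _ _ h).symm _).2.1, le_rfl],
      fun i => by dsimp only; split_ifs with h; exacts [((iccHomeoI _ _ h).symm _).2.2, hlu i]⟩
  left_inv k := Subtype.ext <| funext fun i => by
    by_cases h : l i < u i
    · simp only [h, dite_true, Homeomorph.symm_apply_apply]
    · simp only [h, dite_false]
      exact le_antisymm (k.2.1 i) ((k.2.2 i).trans (not_lt.1 h))
  right_inv z := funext fun i => by
    simp only [i.2, dite_true, Subtype.coe_eta, Homeomorph.apply_symm_apply]
  continuous_toFun := by
    refine continuous_pi fun i => (iccHomeoI _ _ i.2).continuous.comp (Continuous.subtype_mk ?_ _)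
    exact (continuous_apply i.1).comp continuous_subtype_val
  continuous_invFun := by
    refine Continuous.subtype_mk (continuous_pi fun i => ?_) _
    split_ifs with h
    · exact continuous_subtype_val.comp ((iccHomeoI _ _ h).symm.continuous.comp (by fun_prop))
    · exact continuous_const

lemma boxHomeomorph_eq_iff (hlu : l ≤ u) (k : Set.Icc l u) (i : {i // l i < u i}) :
    (boxHomeomorph hlu k i = 0 ↔ k.1 i = l i) ∧ (boxHomeomorph hlu k i = 1 ↔ k.1 i = u i) := by
  have hi := (sub_pos.2 i.2).ne'
  constructor <;> simp [boxHomeomorph, Subtype.ext_iff, div_eq_iff, hi, sub_eq_zero]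

lemma isCubePair_box [Finite ι] (hlu : l ≤ u) :
    IsCubePair {k : Set.Icc l u | (k : ι → ℝ) ∈ boxBoundary l u} := by
  obtain ⟨n, ⟨e⟩⟩ := Finite.exists_equiv_fin {i // l i < u i}
  refine ⟨n, (boxHomeomorph hlu).trans (Homeomorph.piCongrLeft (Y := fun _ => I) e), fun k => ?_⟩
  have hk : ∀ i, Homeomorph.piCongrLeft (Y := fun _ => I) e (boxHomeomorph hlu k) (e i) =
      boxHomeomorph hlu k i := fun i => Equiv.piCongrLeft_apply_apply _ e _ i
  simp [boxBoundary, Cube.boundary, ← e.exists_congr_right, hk, boxHomeomorph_eq_iff, k.2.1, k.2.2]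

lemma HasCubeLiftingOn.boxExtends [Finite ι] {f : C(X, Y)} {O : Set Y} (h : HasCubeLiftingOn f O)
    (b : C(ι → ℝ, Y)) (hb : Set.MapsTo b (Set.Icc l u) O) :
    BoxExtends (fun x (e : X × C(I, Y)) => e.2 0 = f e.1 ∧ e.2 1 = b x ∧ ∀ t, e.2 t ∈ O) l u := by
  intro e he hGe
  by_cases hlu : l ≤ u
  swap
  · simp only [Set.Icc_eq_empty hlu]
    exact ⟨e, continuousOn_empty _, fun _ _ => rfl, fun _ hx => hx.elim⟩
  have hη : ContinuousOn (fun p : Set.Icc l u × I => (e p.1).2 p.2)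
      {p | (p.1 : ι → ℝ) ∈ boxBoundary l u} := by
    have he' := he.comp (t := boxBoundary l u) (f := fun p : Set.Icc l u × I => (p.1 : ι → ℝ))
      (by fun_prop) fun p hp => hp
    exact he'.snd.eval continuousOn_snd
  obtain ⟨x, H, hxA, hH0, hH1, hHA, hHO⟩ := h.lifts_rel (isCubePair_box hlu)
    (a := fun k => (e k).1) (η := fun p => (e p.1).2 p.2) ⟨fun k => b k, by fun_prop⟩
    (continuous_fst.comp_continuousOn (he.comp (by fun_prop) fun k hk => hk))
    hη (fun k => hb k.2)
    (fun k hk => (hGe _ hk).2.2) (fun k hk => (hGe _ hk).1) fun k hk => (hGe _ hk).2.1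
  have hext : ∀ k : Set.Icc l u, Function.extend Subtype.val (fun k => (x k, H.curry k)) e k =
      (x k, H.curry k) := Subtype.val_injective.extend_apply _ _
  refine ⟨Function.extend Subtype.val (fun k => (x k, H.curry k)) e, ?_, fun y hy => ?_,
    fun y hy => ?_⟩
  · rw [continuousOn_iff_continuous_domRestrict]
    exact (x.continuous.prodMk H.curry.continuous).congr fun k => (hext k).symm
  · refine (hext ⟨y, hy.1⟩).trans (Prod.ext (hxA _ hy) (ContinuousMap.ext fun t => ?_))
    exact hHA _ hy t
  · rw [hext ⟨y, hy⟩]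
    exact ⟨hH0 _, hH1 _, fun t => hHO _⟩

end Box

section Local

lemma exists_least_of_inter_mem {Y : Type*} {𝒪 : Set (Set Y)} (h𝒪 : 𝒪.Finite)
    (hinter : ∀ U ∈ 𝒪, ∀ V ∈ 𝒪, U ∩ V ∈ 𝒪) {S : Set Y} (hS : ∃ O ∈ 𝒪, S ⊆ O) :
    ∃ O ∈ 𝒪, S ⊆ O ∧ ∀ U ∈ 𝒪, S ⊆ U → O ⊆ U := by
  obtain ⟨O, ⟨hO, hSO⟩, hmin⟩ := (h𝒪.subset (Set.sep_subset 𝒪 (S ⊆ ·))).exists_minimal hS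
  exact ⟨O, hO, hSO, fun U hU hSU => (hmin ⟨hinter O hO U hU, Set.subset_inter hSO hSU⟩
    Set.inter_subset_left).trans Set.inter_subset_right⟩

variable {f : C(X, Y)} {𝒪 : Set (Set Y)} {ι : Type}

/-- The condition at `x` on a lift `e.1` of `b x` up to a path `e.2`: over every box of the grid
`T` containing `x`, the path stays in each member of the cover containing the image of the box.
Since it refers to all boxes containing `x`, it passes from a box to its faces. -/
def IsSubordinateLift (f : C(X, Y)) (𝒪 : Set (Set Y)) (T : Set ℝ) (b : C(ι → ℝ, Y)) (x : ι → ℝ)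
    (e : X × C(I, Y)) : Prop :=
  e.2 0 = f e.1 ∧ e.2 1 = b x ∧ (∀ t, e.2 t ∈ ⋃₀ 𝒪) ∧
    ∀ l u : ι → ℝ, (∀ i, l i ∈ T) → (∀ i, u i ∈ T) → x ∈ Set.Icc l u →
      ∀ O ∈ 𝒪, Set.MapsTo b (Set.Icc l u) O → ∀ t, e.2 t ∈ O

/-- Over a cell of the grid, lift inside the least member of the cover containing its image. -/
lemma boxExtends_isSubordinateLift [Finite ι] (h𝒪 : 𝒪.Finite)
    (hinter : ∀ U ∈ 𝒪, ∀ V ∈ 𝒪, U ∩ V ∈ 𝒪) (hf : ∀ O ∈ 𝒪, HasCubeLiftingOn f O)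
    {b : C(ι → ℝ, Y)} {T : Set ℝ} {l u : ι → ℝ} (hl : ∀ i, l i ∈ T) (hu : ∀ i, u i ∈ T)
    (hcell : ∀ i, Disjoint T (Set.Ioo (l i) (u i))) (hb : ∃ O ∈ 𝒪, Set.MapsTo b (Set.Icc l u) O) :
    BoxExtends (IsSubordinateLift f 𝒪 T b) l u := by
  intro e he hGe
  obtain ⟨O, hO, hbO, hleast⟩ := exists_least_of_inter_mem (S := b '' Set.Icc l u) h𝒪 hinter
    (by simpa only [Set.mapsTo_iff_image_subset] using hb)
  rw [← Set.mapsTo_iff_image_subset] at hbO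
  obtain ⟨e', he', he'e, hGe'⟩ := (hf O hO).boxExtends b hbO e he fun x hx =>
    ⟨(hGe x hx).1, (hGe x hx).2.1, (hGe x hx).2.2.2 l u hl hu hx.1 O hO hbO⟩
  refine ⟨e', he', he'e, fun x hx => ?_⟩
  by_cases hxb : x ∈ boxBoundary l u
  · exact he'e hxb ▸ hGe x hxb
  obtain ⟨h0, h1, hxO⟩ := hGe' x hx
  refine ⟨h0, h1, fun t => ⟨O, hO, hxO t⟩, fun l' u' hl' hu' hx' U hU hbU t => ?_⟩
  exact hleast U hU (Set.mapsTo_iff_image_subset.1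
    (hbU.mono_left (Icc_subset_Icc_of_mem_interior hcell hl' hu' hx hxb hx'))) (hxO t)

lemma exists_isSubordinateLift [Finite ι] (h𝒪 : 𝒪.Finite) (hopen : ∀ O ∈ 𝒪, IsOpen O)
    (hinter : ∀ U ∈ 𝒪, ∀ V ∈ 𝒪, U ∩ V ∈ 𝒪) (hf : ∀ O ∈ 𝒪, HasCubeLiftingOn f O)
    {a : (ι → ℝ) → X} {b : C(ι → ℝ, Y)} (ha : ContinuousOn a (boxBoundary 0 1))
    (hb : Set.MapsTo b (Set.Icc 0 1) (⋃₀ 𝒪)) (hab : ∀ x ∈ boxBoundary 0 1, f (a x) = b x) :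
    ∃ e : (ι → ℝ) → X × C(I, Y), ContinuousOn e (Set.Icc 0 1) ∧
      (∀ x ∈ boxBoundary 0 1, e x = (a x, ContinuousMap.const I (b x))) ∧
      ∀ x ∈ Set.Icc 0 1, (e x).2 0 = f (e x).1 ∧ (e x).2 1 = b x ∧ ∀ t, (e x).2 t ∈ ⋃₀ 𝒪 := by
  obtain ⟨T, hT, hT0, hT1, hcells⟩ := exists_grid_subordinate (ι := ι)
    (𝒰 := (b ⁻¹' ·) '' 𝒪) (Set.forall_mem_image.2 fun O hO => (hopen O hO).preimage b.continuous)
    (by rwa [Set.sUnion_image, ← Set.preimage_sUnion])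
  simp only [Set.exists_mem_image] at hcells
  obtain ⟨e, he, hea, hGe⟩ := boxExtends_of_grid hT (fun l u hl hu hcell =>
    boxExtends_isSubordinateLift h𝒪 hinter hf hl hu hcell (hcells l u hl hu hcell))
    (l := 0) (u := 1) (fun _ => hT0) (fun _ => hT1) (fun x => (a x, ContinuousMap.const I (b x)))
    (ha.prodMk (by fun_prop)) fun x hx => ⟨(hab x hx).symm, rfl, fun _ => hb hx.1,
      fun l u _ _ hx O _ hbO _ => hbO hx⟩
  exact ⟨e, he, hea, fun x hx => ⟨(hGe x hx).1, (hGe x hx).2.1, (hGe x hx).2.2.1⟩⟩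

lemma HasCubeLiftingOn.sUnion (h𝒪 : 𝒪.Finite) (hopen : ∀ O ∈ 𝒪, IsOpen O)
    (hinter : ∀ U ∈ 𝒪, ∀ V ∈ 𝒪, U ∩ V ∈ 𝒪) (hf : ∀ O ∈ 𝒪, HasCubeLiftingOn f O) :
    HasCubeLiftingOn f (⋃₀ 𝒪) := by
  refine hasCubeLiftingOn_of_cubes (fun ⟨y, O, hO, hy⟩ => (hf O hO).1 ⟨y, hy⟩)
    fun n a b ha hb hab => ?_
  let c : C(Fin n → ℝ, Fin n → I) :=
    ⟨fun x i => Set.projIcc 0 1 zero_le_one (x i), continuous_pi fun i =>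
      continuous_projIcc.comp (continuous_apply i)⟩
  let j : (Fin n → I) → Fin n → ℝ := fun k i => k i
  have hcj : ∀ k, c (j k) = k := fun k => funext fun i => projIcc_eq_of_eq_coe rfl
  have hj : ∀ k, j k ∈ Set.Icc 0 1 := fun k => ⟨fun i => (k i).2.1, fun i => (k i).2.2⟩
  have hjb : ∀ k ∈ Cube.boundary (Fin n), j k ∈ boxBoundary 0 1 := fun k ⟨i, hi⟩ =>
    ⟨hj k, i, zero_lt_one, by simpa [j] using hi⟩
  have hcb : Set.MapsTo c (boxBoundary 0 1) (Cube.boundary (Fin n)) := fun x ⟨_, i, _, hi⟩ =>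
    ⟨i, hi.imp (projIcc_eq_of_eq_coe (y := 0)) (projIcc_eq_of_eq_coe (y := 1))⟩
  obtain ⟨e, he, hea, hGe⟩ := exists_isSubordinateLift h𝒪 hopen hinter hf (a := a ∘ c)
    (b := b.comp c) (ha.comp c.continuous.continuousOn hcb) (fun x _ => hb _)
    fun x hx => hab _ (hcb hx)
  have hej : Continuous fun k => e (j k) := he.comp_continuous (by fun_prop) hj
  refine ⟨⟨fun k => (e (j k)).1, hej.fst⟩, ⟨fun p => (e (j p.1)).2 p.2,
    (hej.snd.comp continuous_fst).eval continuous_snd⟩, fun k hk => ?_, fun k => (hGe _ (hj k)).1,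
    fun k => ?_, fun k hk t => ?_, fun p => (hGe _ (hj p.1)).2.2 p.2⟩
  · simp [hea _ (hjb k hk), hcj]
  · simp [(hGe _ (hj k)).2.1, hcj]
  · simp [hea _ (hjb k hk), hcj]

lemma HasCubeLiftingOn.union {U V : Set Y} (hUo : IsOpen U) (hVo : IsOpen V)
    (hU : HasCubeLiftingOn f U) (hV : HasCubeLiftingOn f V) (hUV : HasCubeLiftingOn f (U ∩ V)) :
    HasCubeLiftingOn f (U ∪ V) := by
  have h := HasCubeLiftingOn.sUnion (f := f) (𝒪 := {U, V, U ∩ V}) (Set.toFinite _)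
    (by rintro O (rfl | rfl | rfl); exacts [hUo, hVo, hUo.inter hVo])
    (by rintro O (rfl | rfl | rfl) O' (rfl | rfl | rfl) <;> simp [Set.inter_comm])
    (by rintro O (rfl | rfl | rfl); exacts [hU, hV, hUV])
  convert h using 1
  simp only [Set.sUnion_insert, Set.sUnion_singleton]
  grind

end Local

lemma HasCubeLifting.on_range {Z Z' : Type*} [TopologicalSpace Z] [TopologicalSpace Z']
    {f : C(X, Y)} {g : C(Z, Z')} (hg : HasCubeLifting g) {j : Z → X} {j' : Z' → Y}
    (hj : IsEmbedding j) (hj' : IsEmbedding j') (hfj : ∀ z, f (j z) = j' (g z))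
    (hr : ∀ x, f x ∈ Set.range j' → x ∈ Set.range j) : HasCubeLiftingOn f (Set.range j') := by
  refine ⟨?_, fun K _ A hK a b ha hbO hab => ?_⟩
  · rintro ⟨-, z, rfl⟩
    exact (hg.1 ⟨z, Set.mem_univ _⟩).map j
  choose b' hb' using hbO
  have hb'c : Continuous b' := hj'.continuous_iff.2 (b.continuous.congr fun k => (hb' k).symm)
  have haj : ∀ k ∈ A, ∃ z, j z = a k := fun k hk => hr _ ⟨b' k, by rw [hb', hab k hk]⟩
  have : Nonempty K := hK.nonempty
  have : Nonempty Z := hg.1 ⟨b' (Classical.arbitrary K), Set.mem_univ _⟩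
  choose! a' ha' using haj
  obtain ⟨x, H, hxA, hH0, hH1, hHA, -⟩ := hg.lifts hK (a := a') ⟨b', hb'c⟩
    (hj.isInducing.continuousOn_iff.2 (ha.congr ha'))
    fun k hk => hj'.injective (by rw [← hfj, ha' k hk, hab k hk]; exact (hb' k).symm)
  exact ⟨⟨fun k => j (x k), hj.continuous.comp x.continuous⟩,
    ⟨fun q => j' (H q), hj'.continuous.comp H.continuous⟩,
    fun k hk => by simp [hxA k hk, ha' k hk], fun k => by simp [hH0, hfj],
    fun k => by simp [hH1, hb'], fun k hk t => by simp [hHA k hk, hb'], fun q => ⟨_, rfl⟩⟩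

/-! ### Shrinkable maps -/

section Shrinkable

variable {A A' C D D' : Type*} [TopologicalSpace A] [TopologicalSpace A'] [TopologicalSpace C]
  [TopologicalSpace D] [TopologicalSpace D']

/-- A map is shrinkable if it has a section onto which its source deforms along the fibres. -/
def IsShrinkable (q : C(A, C)) : Prop :=
  ∃ (s : C(C, A)) (l : (ContinuousMap.id A).Homotopy (s.comp q)), (∀ c, q (s c) = c) ∧
    ∀ t a, q (l (t, a)) = q a

lemma IsShrinkable.hasCubeLifting {q : C(A, C)} (h : IsShrinkable q) : HasCubeLifting q := by
  obtain ⟨s, l, hs, -⟩ := h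
  refine hasCubeLifting_of_homotopyInverse (g := s) ?_ ⟨l.symm⟩
  rw [show q.comp s = ContinuousMap.id C from ContinuousMap.ext hs]

lemma isSerreFibration_id : IsSerreFibration (ContinuousMap.id B) :=
  fun _ _ v h => ⟨v, h, fun _ => rfl⟩

lemma IsShrinkable.fiberProductMap_id {q : C(A, C)} (hq : IsShrinkable q) (p : C(C, B))
    (pD : C(D, B)) :
    IsShrinkable (fiberProductMap (p.comp q) pD p pD q (ContinuousMap.id D) (fun _ => rfl)
      fun _ => rfl) := by
  obtain ⟨s, l, hs, hl⟩ := hq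
  have hsp : ∀ c, p.comp q (s c) = p c := fun c => congrArg p (hs c)
  have hlp : ∀ t a, p.comp q (l (t, a)) = p.comp q a := fun t a => congrArg p (hl t a)
  exact ⟨fiberProductMap p pD _ pD s (ContinuousMap.id D) hsp fun _ => rfl,
    { toFun := fun r => ⟨(l (r.1, r.2.1.1), r.2.1.2), (hlp _ _).trans r.2.2⟩
      map_zero_left := fun z => Subtype.ext (Prod.ext (l.map_zero_left _) rfl)
      map_one_left := fun z => Subtype.ext (Prod.ext (l.map_one_left _) rfl) },
    fun z => Subtype.ext (Prod.ext (hs _) rfl), fun t z => Subtype.ext (Prod.ext (hl _ _) rfl)⟩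

lemma hasCubeLifting_fiberProductMap_of_isShrinkable {C' : Type*} [TopologicalSpace C']
    {q : C(A, C)} {q' : C(A', C')} {p : C(C, B)} {p' : C(C', B)} {pD : C(D, B)} {pD' : C(D', B)}
    {f : C(A, A')} {F : C(C, C')} {g : C(D, D')} (hq : IsShrinkable q) (hq' : IsShrinkable q')
    (hp : IsSerreFibration p) (hp' : IsSerreFibration p') (hF : HasCubeLifting F)
    (hg : HasCubeLifting g) (hfF : ∀ a, q' (f a) = F (q a)) (hFp : ∀ c, p' (F c) = p c)
    (hgp : ∀ d, pD' (g d) = pD d) :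
    HasCubeLifting (fiberProductMap (p.comp q) pD (p'.comp q') pD' f g
      (fun a => (congrArg p' (hfF a)).trans (hFp _)) hgp) := by
  refine (hq'.fiberProductMap_id p' pD').hasCubeLifting.of_comp ?_
  convert (hasCubeLifting_fiberProductMap hFp hgp hp hp' hF hg).comp
    (hq.fiberProductMap_id p pD).hasCubeLifting using 1
  exact ContinuousMap.ext fun z => Subtype.ext (Prod.ext (hfF z.1.1) rfl)

lemma isOpenEmbedding_fiberProductMap {pA : C(A, B)} {pA' : C(A', B)} {pD : C(D, B)}
    {pD' : C(D', B)} {f : C(A, A')} {g : C(D, D')} (hf : IsOpenEmbedding f)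
    (hg : IsOpenEmbedding g) (hfp : ∀ a, pA' (f a) = pA a) (hgp : ∀ d, pD' (g d) = pD d) :
    IsOpenEmbedding (fiberProductMap pA pD pA' pD' f g hfp hgp) := by
  refine ⟨IsEmbedding.of_comp (map_continuous _) continuous_subtype_val
    ((hf.isEmbedding.prodMap hg.isEmbedding).comp IsEmbedding.subtypeVal), ?_⟩
  have hrange : Set.range (fiberProductMap pA pD pA' pD' f g hfp hgp) =
      Subtype.val ⁻¹' (Set.range f ×ˢ Set.range g) := by
    ext ⟨⟨a', d'⟩, h⟩
    constructor
    · rintro ⟨z, hz⟩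
      exact ⟨⟨z.1.1, congrArg (fun z => z.1.1) hz⟩, ⟨z.1.2, congrArg (fun z => z.1.2) hz⟩⟩
    · rintro ⟨⟨a, rfl⟩, ⟨d, rfl⟩⟩
      exact ⟨⟨(a, d), by rw [← hfp, ← hgp]; exact h⟩, rfl⟩
  rw [hrange]
  exact (hf.isOpen_range.prod hg.isOpen_range).preimage continuous_subtype_val

end Shrinkable

/-! ### Homotopies of internal smash products -/

section Homotopy

variable {iX : C(B, X)} {pX : C(X, B)} {iY : C(B, Y)} {pY : C(Y, B)}
  {iX' : C(B, X')} {pX' : C(X', B)} {iY' : C(B, Y')} {pY' : C(Y', B)}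

/-- The homotopy `F ∧_B G` of internal smash products induced by homotopies `F` and `G` through
maps of retractive spaces. -/
def iSmashHomotopy (iX : C(B, X)) (pX : C(X, B)) (iY : C(B, Y)) (pY : C(Y, B))
    (iX' : C(B, X')) (pX' : C(X', B)) (iY' : C(B, Y')) (pY' : C(Y', B))
    (F : C(I × X, X')) (G : C(I × Y, Y'))
    (hFi : ∀ t b, F (t, iX b) = iX' b) (hFp : ∀ t x, pX' (F (t, x)) = pX x)
    (hGi : ∀ t b, G (t, iY b) = iY' b) (hGp : ∀ t y, pY' (G (t, y)) = pY y) :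
    C(I × ISmash iX pX iY pY, ISmash iX' pX' iY' pY') :=
  ⟨fun q => iSmashMap iX pX iY pY iX' pX' iY' pY' (F.curry q.1) (G.curry q.1) (hFi q.1) (hFp q.1)
      (hGi q.1) (hGp q.1) q.2,
    isQuotientMap_quot_mk.continuous_lift_prod_right <| continuous_quot_mk.comp <|
      Continuous.subtype_mk (f := fun r : I × {z : X × Y // pX z.1 = pY z.2} =>
        (F (r.1, r.2.1.1), G (r.1, r.2.1.2))) (by fun_prop) _⟩

/-- Two maps of retractive spaces are homotopic through maps of retractive spaces. -/
def RetractiveHomotopic (i : C(B, X)) (p : C(X, B)) (i' : C(B, X')) (p' : C(X', B))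
    (f f' : C(X, X')) : Prop :=
  ∃ H : f.Homotopy f', (∀ t b, H (t, i b) = i' b) ∧ ∀ t x, p' (H (t, x)) = p x

lemma iSmashMap_homotopic {φ φ' : C(X, X')} {ψ ψ' : C(Y, Y')}
    (hφ : RetractiveHomotopic iX pX iX' pX' φ φ') (hψ : RetractiveHomotopic iY pY iY' pY' ψ ψ')
    (hφi : ∀ b, φ (iX b) = iX' b) (hφp : ∀ x, pX' (φ x) = pX x)
    (hψi : ∀ b, ψ (iY b) = iY' b) (hψp : ∀ y, pY' (ψ y) = pY y)
    (hφi' : ∀ b, φ' (iX b) = iX' b) (hφp' : ∀ x, pX' (φ' x) = pX x)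
    (hψi' : ∀ b, ψ' (iY b) = iY' b) (hψp' : ∀ y, pY' (ψ' y) = pY y) :
    (iSmashMap iX pX iY pY iX' pX' iY' pY' φ ψ hφi hφp hψi hψp).Homotopic
      (iSmashMap iX pX iY pY iX' pX' iY' pY' φ' ψ' hφi' hφp' hψi' hψp') := by
  obtain ⟨F, hFi, hFp⟩ := hφ
  obtain ⟨G, hGi, hGp⟩ := hψ
  refine ⟨{ toContinuousMap := iSmashHomotopy iX pX iY pY iX' pX' iY' pY' F.toContinuousMap
              G.toContinuousMap hFi hFp hGi hGp
            map_zero_left := ?_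
            map_one_left := ?_ }⟩
  · rintro ⟨z⟩
    exact congrArg (Quot.mk _) (Subtype.ext (Prod.ext (F.map_zero_left _) (G.map_zero_left _)))
  · rintro ⟨z⟩
    exact congrArg (Quot.mk _) (Subtype.ext (Prod.ext (F.map_one_left _) (G.map_one_left _)))

end Homotopy

/-! ### Whiskers -/

section Whisker

variable {i : C(B, X)} {p : C(X, B)}

/-- The retractive space obtained by growing a whisker along the section `i`: the subspace
`(X × {0}) ∪ (i(B) × [0,1])` of `X × [0,1]`. -/
abbrev Whisker (i : C(B, X)) : Type _ := {z : X × I // z.2 = 0 ∨ z.1 ∈ Set.range i}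

/-- The section of the whiskered space, at the far end of the whiskers. -/
def whiskerSection (i : C(B, X)) : C(B, Whisker i) :=
  ⟨fun b => ⟨(i b, 1), Or.inr ⟨b, rfl⟩⟩, by fun_prop⟩

/-- The projection of the whiskered space to the base. -/
def whiskerProj (i : C(B, X)) (p : C(X, B)) : C(Whisker i, B) :=
  ⟨fun z => p z.1.1, by fun_prop⟩

/-- The map collapsing the whiskers. -/
def whiskerForget (i : C(B, X)) : C(Whisker i, X) := ⟨fun z => z.1.1, by fun_prop⟩

/-- The map of whiskered spaces induced by a map of retractive spaces. -/
def whiskerMap (i : C(B, X)) (i' : C(B, X')) (φ : C(X, X')) (h : ∀ b, φ (i b) = i' b) :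
    C(Whisker i, Whisker i') :=
  ⟨fun z => ⟨(φ z.1.1, z.1.2), z.2.imp id fun ⟨b, hb⟩ => ⟨b, by rw [← h, hb]⟩⟩, by fun_prop⟩

lemma Whisker.fst_eq (hr : ∀ b, p (i b) = b) (z : Whisker i) (hz : z.1.2 ≠ 0) :
    z.1.1 = i (p z.1.1) := by
  obtain ⟨b, hb⟩ := z.2.resolve_left hz
  rw [← hb, hr]

lemma Whisker.eq_section (hr : ∀ b, p (i b) = b) (z : Whisker i) (hz : z.1.2 = 1) :
    z = whiskerSection i (whiskerProj i p z) :=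
  Subtype.ext (Prod.ext (z.fst_eq hr (by rw [hz]; exact one_ne_zero)) hz)

/-- The retraction `r` of `X × [0,1]` onto the whiskered space yields the inverse `x ↦ r (x, 1)`. -/
lemma IsFCofibration.exists_whiskerForget_inverse (h : IsFCofibration i p) :
    ∃ g : C(X, Whisker i), (∀ b, g (i b) = whiskerSection i b) ∧
      (∀ x, whiskerProj i p (g x) = p x) ∧
      RetractiveHomotopic i p i p (ContinuousMap.id X) ((whiskerForget i).comp g) ∧
      RetractiveHomotopic (whiskerSection i) (whiskerProj i p) (whiskerSection i)
        (whiskerProj i p) (ContinuousMap.id _) (g.comp (whiskerForget i)) := by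
  obtain ⟨-, r, hr, hfix, hp⟩ := h
  refine ⟨⟨fun x => ⟨r (x, 1), hr _⟩, by fun_prop⟩, fun b => Subtype.ext (hfix _ (.inr ⟨b, rfl⟩)),
    fun x => hp _, ⟨⟨⟨fun q => (r q.swap).1, by fun_prop⟩, fun x => ?_, fun x => rfl⟩,
      fun t b => ?_, fun t x => hp _⟩,
    ⟨⟨⟨fun q => ⟨r (q.2.1.1, max q.2.1.2 q.1), hr _⟩, by fun_prop⟩, fun z => ?_, fun z => ?_⟩,
      fun t b => ?_, fun t z => hp _⟩⟩
  · exact congrArg Prod.fst (hfix (x, 0) (.inl rfl))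
  · exact congrArg Prod.fst (hfix (i b, t) (.inr ⟨b, rfl⟩))
  · have hmax : max z.1.2 0 = z.1.2 := max_eq_left nonneg'
    exact Subtype.ext ((congrArg (fun s => r (z.1.1, s)) hmax).trans (hfix _ z.2))
  · have hmax : max z.1.2 1 = 1 := max_eq_right le_one'
    exact Subtype.ext (congrArg (fun s => r (z.1.1, s)) hmax)
  · have hmax : max 1 t = 1 := max_eq_left le_one'
    exact Subtype.ext ((congrArg (fun s => r (i b, s)) hmax).trans (hfix _ (.inr ⟨b, rfl⟩)))

end Whisker

section WhiskerSmash

variable {iX : C(B, X)} {pX : C(X, B)} {iY : C(B, Y)} {pY : C(Y, B)}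
  {iX' : C(B, X')} {pX' : C(X', B)} {iY' : C(B, Y')} {pY' : C(Y', B)}

/-- The internal smash product of whiskered spaces. -/
abbrev WhiskerSmash (iX : C(B, X)) (pX : C(X, B)) (iY : C(B, Y)) (pY : C(Y, B)) : Type _ :=
  ISmash (whiskerSection iX) (whiskerProj iX pX) (whiskerSection iY) (whiskerProj iY pY)

/-- The map of internal smash products of whiskered spaces induced by maps of retractive
spaces. -/
def whiskerSmashMap (iX : C(B, X)) (pX : C(X, B)) (iY : C(B, Y)) (pY : C(Y, B))
    (iX' : C(B, X')) (pX' : C(X', B)) (iY' : C(B, Y')) (pY' : C(Y', B))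
    (φ : C(X, X')) (ψ : C(Y, Y'))
    (hφi : ∀ b, φ (iX b) = iX' b) (hφp : ∀ x, pX' (φ x) = pX x)
    (hψi : ∀ b, ψ (iY b) = iY' b) (hψp : ∀ y, pY' (ψ y) = pY y) :
    C(WhiskerSmash iX pX iY pY, WhiskerSmash iX' pX' iY' pY') :=
  iSmashMap _ _ _ _ _ _ _ _ (whiskerMap iX iX' φ hφi) (whiskerMap iY iY' ψ hψi)
    (fun b => Subtype.ext (Prod.ext (hφi b) rfl)) (fun z => hφp z.1.1)
    (fun b => Subtype.ext (Prod.ext (hψi b) rfl)) (fun z => hψp z.1.1)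

/-- Collapsing the whiskers in both factors of an internal smash product. -/
def iSmashForget (iX : C(B, X)) (pX : C(X, B)) (iY : C(B, Y)) (pY : C(Y, B)) :
    C(WhiskerSmash iX pX iY pY, ISmash iX pX iY pY) :=
  iSmashMap _ _ _ _ iX pX iY pY (whiskerForget iX) (whiskerForget iY) (fun _ => rfl)
    (fun _ => rfl) (fun _ => rfl) (fun _ => rfl)

lemma exists_iSmashForget_homotopyInverse (hX : IsFCofibration iX pX)
    (hY : IsFCofibration iY pY) :
    ∃ g : C(ISmash iX pX iY pY, WhiskerSmash iX pX iY pY),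
      ((iSmashForget iX pX iY pY).comp g).Homotopic (ContinuousMap.id _) ∧
      (g.comp (iSmashForget iX pX iY pY)).Homotopic (ContinuousMap.id _) := by
  obtain ⟨g, hgi, hgp, hfg, hgf⟩ := hX.exists_whiskerForget_inverse
  obtain ⟨g', hgi', hgp', hfg', hgf'⟩ := hY.exists_whiskerForget_inverse
  refine ⟨iSmashMap _ _ _ _ _ _ _ _ g g' hgi hgp hgi' hgp', ?_, ?_⟩
  · have h := iSmashMap_homotopic hfg hfg' (fun _ => rfl) (fun _ => rfl) (fun _ => rfl)
      (fun _ => rfl) (fun b => congrArg (whiskerForget iX) (hgi b)) hgp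
      (fun b => congrArg (whiskerForget iY) (hgi' b)) hgp'
    convert h.symm using 1 <;> (ext ⟨z⟩; rfl)
  · have h := iSmashMap_homotopic hgf hgf' (fun _ => rfl) (fun _ => rfl) (fun _ => rfl)
      (fun _ => rfl) hgi (fun z => hgp z.1.1) hgi' (fun z => hgp' z.1.1)
    convert h.symm using 1 <;> (ext ⟨z⟩; rfl)

lemma hasCubeLifting_iSmashMap_of_whiskerSmashMap
    (hXf : IsFCofibration iX pX) (hYf : IsFCofibration iY pY)
    (hX'f : IsFCofibration iX' pX') (hY'f : IsFCofibration iY' pY') {φ : C(X, X')} {ψ : C(Y, Y')}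
    (hφi : ∀ b, φ (iX b) = iX' b) (hφp : ∀ x, pX' (φ x) = pX x)
    (hψi : ∀ b, ψ (iY b) = iY' b) (hψp : ∀ y, pY' (ψ y) = pY y)
    (h : HasCubeLifting (whiskerSmashMap iX pX iY pY iX' pX' iY' pY' φ ψ hφi hφp hψi hψp)) :
    HasCubeLifting (iSmashMap iX pX iY pY iX' pX' iY' pY' φ ψ hφi hφp hψi hψp) := by
  obtain ⟨g, hg, -⟩ := exists_iSmashForget_homotopyInverse hXf hYf
  obtain ⟨g', hfg', hgf'⟩ := exists_iSmashForget_homotopyInverse hX'f hY'f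
  refine HasCubeLifting.of_comp_right (e := iSmashForget iX pX iY pY) ?_ hg
  convert (hasCubeLifting_of_homotopyInverse hfg' hgf').comp h using 1
  ext ⟨z⟩
  rfl

end WhiskerSmash

/-! ### The smash product of whiskered spaces near the base -/

section NearBase

variable {iX : C(B, X)} {pX : C(X, B)} {iY : C(B, Y)} {pY : C(Y, B)}

/-- The larger of the two whisker coordinates; it is `1` precisely on the image of the base. -/
def whiskerLevel (iX : C(B, X)) (pX : C(X, B)) (iY : C(B, Y)) (pY : C(Y, B)) :
    C(WhiskerSmash iX pX iY pY, I) :=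
  ⟨Quot.lift (fun z => max z.1.1.1.2 z.1.2.1.2) (by
      rintro ⟨z, hz⟩ ⟨w, hw⟩ (⟨x, rfl, rfl⟩ | ⟨y, rfl, rfl⟩) <;> simp [whiskerSection, le_one']),
    continuous_quot_lift _ (by fun_prop)⟩

/-- The open neighbourhood of the base on which one of the whisker coordinates exceeds `1 / 2`. -/
def nearBase (iX : C(B, X)) (pX : C(X, B)) (iY : C(B, Y)) (pY : C(Y, B)) :
    Set (WhiskerSmash iX pX iY pY) :=
  {q | 1 / 2 < (whiskerLevel iX pX iY pY q : ℝ)}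

lemma isOpen_nearBase : IsOpen (nearBase iX pX iY pY) :=
  isOpen_lt continuous_const (continuous_subtype_val.comp (map_continuous _))

lemma mk_mem_nearBase
    {z : {z : Whisker iX × Whisker iY // whiskerProj iX pX z.1 = whiskerProj iY pY z.2}} :
    Quot.mk _ z ∈ nearBase iX pX iY pY ↔
      1 / 2 < (z.1.1.1.2 : ℝ) ∨ 1 / 2 < (z.1.2.1.2 : ℝ) := by
  change 1 / 2 < ((max z.1.1.1.2 z.1.2.1.2 : I) : ℝ) ↔ _
  rw [(show Monotone ((↑) : I → ℝ) from Subtype.mono_coe _).map_max, lt_max_iff]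

/-- The projection of the smash product of whiskered spaces to the base. -/
def whiskerSmashProj (iX : C(B, X)) (pX : C(X, B)) (iY : C(B, Y)) (pY : C(Y, B))
    (hXr : ∀ b, pX (iX b) = b) : C(WhiskerSmash iX pX iY pY, B) :=
  ⟨Quot.lift (fun z => whiskerProj iX pX z.1.1) (by
      rintro ⟨z, hz⟩ ⟨w, hw⟩ (⟨x, rfl, rfl⟩ | ⟨y, rfl, rfl⟩) <;>
        simp [whiskerSection, whiskerProj, hXr]),
    continuous_quot_lift _ (by fun_prop)⟩

/-- The section of the smash product of whiskered spaces. -/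
def whiskerSmashSection (iX : C(B, X)) (pX : C(X, B)) (iY : C(B, Y)) (pY : C(Y, B))
    (hXr : ∀ b, pX (iX b) = b) (hYr : ∀ b, pY (iY b) = b) : C(B, WhiskerSmash iX pX iY pY) :=
  ⟨fun b => Quot.mk _ ⟨(whiskerSection iX b, whiskerSection iY b), (hXr b).trans (hYr b).symm⟩,
    continuous_quot_mk.comp (by fun_prop)⟩

lemma eq_whiskerSmashSection_of_whiskerLevel_eq_one (hXr : ∀ b, pX (iX b) = b)
    (hYr : ∀ b, pY (iY b) = b) {q : WhiskerSmash iX pX iY pY}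
    (hq : whiskerLevel iX pX iY pY q = 1) :
    q = whiskerSmashSection iX pX iY pY hXr hYr (whiskerSmashProj iX pX iY pY hXr q) := by
  obtain ⟨⟨⟨x, y⟩, hxy⟩⟩ := q
  rcases max_eq_iff.1 (show max x.1.2 y.1.2 = 1 from hq) with ⟨hx, -⟩ | ⟨hy, -⟩
  · refine Quot.sound (Or.inr ⟨y, ?_, ?_⟩) <;> rw [← hxy]
    · exact congrArg (·, y) (x.eq_section hXr hx)
    · rfl
  · refine Quot.sound (Or.inl ⟨x, ?_, rfl⟩)
    rw [hxy]
    exact congrArg (x, ·) (y.eq_section hYr hy)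

/-- Stretching the interval by the factor `1 + t`, truncated at `1`. -/
noncomputable def stretch : C(I × I, I) :=
  ⟨fun q => Set.projIcc 0 1 zero_le_one ((1 + q.1 : ℝ) * q.2), by fun_prop⟩

lemma coe_stretch (t s : I) : (stretch (t, s) : ℝ) = min 1 ((1 + (t : ℝ)) * s) := by
  have hts : (0 : ℝ) ≤ (1 + (t : ℝ)) * s := mul_nonneg (by linarith [t.2.1]) s.2.1
  simp [stretch, Set.coe_projIcc, hts]

lemma stretch_zero_left (s : I) : stretch (0, s) = s := by
  ext; simp [coe_stretch, s.2.2]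

lemma stretch_zero_right (t : I) : stretch (t, 0) = 0 := by
  ext; simp [coe_stretch]

lemma stretch_one_right (t : I) : stretch (t, 1) = 1 := by
  ext; simp [coe_stretch, t.2.1]

lemma stretch_one_left {s : I} (hs : 1 / 2 < (s : ℝ)) : stretch (1, s) = 1 := by
  ext
  rw [coe_stretch]
  exact min_eq_left (by simp; linarith)

lemma le_stretch (t s : I) : s ≤ stretch (t, s) := by
  rw [← Subtype.coe_le_coe, coe_stretch]
  exact le_min s.2.2 (by nlinarith [s.2.1, t.2.1])

/-- Stretching the whiskers, so that eventually their outer halves are pushed to the far end. -/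
noncomputable def whiskerStretch (i : C(B, X)) : C(I × Whisker i, Whisker i) :=
  ⟨fun q => ⟨(q.2.1.1, stretch (q.1, q.2.1.2)), q.2.2.imp (fun h => by
    simp only [h, stretch_zero_right]) id⟩, by fun_prop⟩

lemma whiskerStretch_zero (i : C(B, X)) (z : Whisker i) : whiskerStretch i (0, z) = z :=
  Subtype.ext (Prod.ext rfl (stretch_zero_left _))

lemma whiskerStretch_section (i : C(B, X)) (t : I) (b : B) :
    whiskerStretch i (t, whiskerSection i b) = whiskerSection i b :=
  Subtype.ext (Prod.ext rfl (stretch_one_right t))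

/-- Stretching the whiskers in both factors. -/
noncomputable def whiskerSmashStretch (iX : C(B, X)) (pX : C(X, B)) (iY : C(B, Y)) (pY : C(Y, B)) :
    C(I × WhiskerSmash iX pX iY pY, WhiskerSmash iX pX iY pY) :=
  iSmashHomotopy _ _ _ _ _ _ _ _ (whiskerStretch iX) (whiskerStretch iY)
    (whiskerStretch_section iX) (fun _ _ => rfl) (whiskerStretch_section iY) fun _ _ => rfl

lemma whiskerSmashStretch_zero (q : WhiskerSmash iX pX iY pY) :
    whiskerSmashStretch iX pX iY pY (0, q) = q := by
  obtain ⟨z⟩ := q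
  exact congrArg (Quot.mk _)
    (Subtype.ext (Prod.ext (whiskerStretch_zero iX _) (whiskerStretch_zero iY _)))

lemma whiskerSmashStretch_mem_nearBase {q : WhiskerSmash iX pX iY pY}
    (hq : q ∈ nearBase iX pX iY pY) (t : I) :
    whiskerSmashStretch iX pX iY pY (t, q) ∈ nearBase iX pX iY pY := by
  obtain ⟨z⟩ := q
  exact lt_of_lt_of_le (α := ℝ) hq
    (Subtype.coe_le_coe.2 (max_le_max (le_stretch t _) (le_stretch t _)))

lemma whiskerLevel_whiskerSmashStretch_one {q : WhiskerSmash iX pX iY pY}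
    (hq : q ∈ nearBase iX pX iY pY) :
    whiskerLevel iX pX iY pY (whiskerSmashStretch iX pX iY pY (1, q)) = 1 := by
  obtain ⟨z⟩ := q
  change max (stretch (1, z.1.1.1.2)) (stretch (1, z.1.2.1.2)) = 1
  rcases mk_mem_nearBase.1 hq with h | h
  · rw [stretch_one_left h, max_eq_left le_one']
  · rw [stretch_one_left h, max_eq_right le_one']

lemma whiskerSmashProj_whiskerSmashStretch (hXr : ∀ b, pX (iX b) = b) (t : I)
    (q : WhiskerSmash iX pX iY pY) :
    whiskerSmashProj iX pX iY pY hXr (whiskerSmashStretch iX pX iY pY (t, q)) =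
      whiskerSmashProj iX pX iY pY hXr q := by
  obtain ⟨z⟩ := q
  rfl

lemma isShrinkable_whiskerSmashProj (hXr : ∀ b, pX (iX b) = b) (hYr : ∀ b, pY (iY b) = b) :
    IsShrinkable ((whiskerSmashProj iX pX iY pY hXr).restrict (nearBase iX pX iY pY)) := by
  have hsection : ∀ b, whiskerSmashSection iX pX iY pY hXr hYr b ∈ nearBase iX pX iY pY :=
    fun b => mk_mem_nearBase.2 (.inl (by norm_num [whiskerSection]))
  refine ⟨⟨fun b => ⟨_, hsection b⟩, by fun_prop⟩,
    { toFun := fun r => ⟨_, whiskerSmashStretch_mem_nearBase r.2.2 r.1⟩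
      continuous_toFun := Continuous.subtype_mk (by fun_prop) _
      map_zero_left := fun q => Subtype.ext (whiskerSmashStretch_zero q.1)
      map_one_left := fun q => Subtype.ext ?_ }, hXr,
    fun t q => whiskerSmashProj_whiskerSmashStretch hXr t q.1⟩
  have h := eq_whiskerSmashSection_of_whiskerLevel_eq_one hXr hYr
    (whiskerLevel_whiskerSmashStretch_one q.2)
  rwa [whiskerSmashProj_whiskerSmashStretch] at h

lemma hasCubeLiftingOn_nearBase
    {iX' : C(B, X')} {pX' : C(X', B)} {iY' : C(B, Y')} {pY' : C(Y', B)}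
    (hXr : ∀ b, pX (iX b) = b) (hYr : ∀ b, pY (iY b) = b)
    (hX'r : ∀ b, pX' (iX' b) = b) (hY'r : ∀ b, pY' (iY' b) = b)
    {φ : C(X, X')} {ψ : C(Y, Y')} (hφi : ∀ b, φ (iX b) = iX' b) (hφp : ∀ x, pX' (φ x) = pX x)
    (hψi : ∀ b, ψ (iY b) = iY' b) (hψp : ∀ y, pY' (ψ y) = pY y) :
    HasCubeLiftingOn (whiskerSmashMap iX pX iY pY iX' pX' iY' pY' φ ψ hφi hφp hψi hψp)
      (nearBase iX' pX' iY' pY') := by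
  set f := whiskerSmashMap iX pX iY pY iX' pX' iY' pY' φ ψ hφi hφp hψi hψp
  have hpre : f ⁻¹' nearBase iX' pX' iY' pY' = nearBase iX pX iY pY := by
    ext ⟨z⟩
    rfl
  let g : C(nearBase iX pX iY pY, nearBase iX' pX' iY' pY') :=
    ⟨fun q => ⟨f q.1, hpre.ge q.2⟩, by fun_prop⟩
  have hg : HasCubeLifting g := by
    refine (isShrinkable_whiskerSmashProj hX'r hY'r).hasCubeLifting.of_comp ?_
    convert (isShrinkable_whiskerSmashProj (iX := iX) (iY := iY) hXr hYr).hasCubeLifting using 1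
    ext ⟨⟨z⟩, _⟩
    exact hφp _
  rw [← Subtype.range_coe (s := nearBase iX' pX' iY' pY')]
  refine hg.on_range IsEmbedding.subtypeVal IsEmbedding.subtypeVal (fun _ => rfl) fun q hq => ?_
  rw [Subtype.range_coe] at hq ⊢
  exact hpre.le hq

end NearBase

/-! ### Boxes in the smash product of whiskered spaces -/

section WhiskerPart

variable {i : C(B, X)} {i' : C(B, X')} {p : C(X, B)} {p' : C(X', B)} {φ : C(X, X')}

/-- The part of a whiskered space where the whisker coordinate lies in `J`. -/
abbrev WhiskerPart (i : C(B, X)) (J : Set I) : Type _ := {z : Whisker i // z.1.2 ∈ J}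

lemma isOpenEmbedding_whiskerPart_val {J : Set I} (hJ : IsOpen J) :
    IsOpenEmbedding (Subtype.val : WhiskerPart i J → Whisker i) :=
  (hJ.preimage (f := fun z : Whisker i => z.1.2) (by fun_prop)).isOpenEmbedding_subtypeVal

/-- The projection of a part of a whiskered space to the base. -/
def whiskerPartProj (i : C(B, X)) (p : C(X, B)) (J : Set I) : C(WhiskerPart i J, B) :=
  (whiskerProj i p).comp ⟨Subtype.val, continuous_subtype_val⟩

/-- The map collapsing the whiskers on a part of a whiskered space. -/
def whiskerPartForget (i : C(B, X)) (J : Set I) : C(WhiskerPart i J, X) :=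
  (whiskerForget i).comp ⟨Subtype.val, continuous_subtype_val⟩

/-- The map of parts of whiskered spaces induced by a map of retractive spaces. -/
def whiskerPartMap (i : C(B, X)) (i' : C(B, X')) (φ : C(X, X')) (h : ∀ b, φ (i b) = i' b)
    (J : Set I) : C(WhiskerPart i J, WhiskerPart i' J) :=
  ⟨fun z => ⟨whiskerMap i i' φ h z.1, z.2⟩, by fun_prop⟩

lemma isShrinkable_whiskerPartForget (i : C(B, X)) :
    IsShrinkable (whiskerPartForget i (Set.Iio 1)) := by
  have hmem : ∀ (t : I) (z : WhiskerPart i (Set.Iio 1)), z.1.1.2 * σ t ∈ Set.Iio 1 :=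
    fun t z => lt_of_le_of_lt mul_le_left z.2
  exact ⟨⟨fun x => ⟨⟨(x, 0), Or.inl rfl⟩, zero_lt_one (α := I)⟩, by fun_prop⟩,
    { toFun := fun r => ⟨⟨(r.2.1.1.1, r.2.1.1.2 * σ r.1), r.2.1.2.imp
        (fun h => by rw [h, zero_mul]) id⟩, hmem r.1 r.2⟩
      continuous_toFun := by fun_prop
      map_zero_left := fun z => Subtype.ext (Subtype.ext (Prod.ext rfl (by simp)))
      map_one_left := fun z => Subtype.ext (Subtype.ext (Prod.ext rfl (by simp))) },
    fun _ => rfl, fun _ _ => rfl⟩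

lemma hasCubeLifting_whiskerPartMap_Iio (hφi : ∀ b, φ (i b) = i' b) (hφ : HasCubeLifting φ) :
    HasCubeLifting (whiskerPartMap i i' φ hφi (Set.Iio 1)) :=
  (isShrinkable_whiskerPartForget i').hasCubeLifting.of_comp
    (hφ.comp (isShrinkable_whiskerPartForget i).hasCubeLifting)

/-- The open outer half of the interval, without its endpoint. -/
def midWhisker : Set I := {s | 1 / 2 < (s : ℝ) ∧ s < 1}

lemma isOpen_midWhisker : IsOpen midWhisker :=
  (isOpen_lt continuous_const continuous_subtype_val).inter (isOpen_Iio (a := (1 : I)))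

lemma midWhisker_subset_Iio : midWhisker ⊆ Set.Iio 1 := fun _ hs => hs.2

lemma ne_zero_of_mem_midWhisker {s : I} (hs : s ∈ midWhisker) : s ≠ 0 := by
  rintro rfl
  exact absurd hs.1 (by norm_num)

/-- The linear homotopy from the identity of the interval to the constant map `3 / 4`. -/
noncomputable def contractMid : C(I × I, I) :=
  ⟨fun q => ⟨(1 - q.1) * q.2 + q.1 * (3 / 4), by
    constructor <;> nlinarith [q.1.2.1, q.1.2.2, q.2.2.1, q.2.2.2]⟩, by fun_prop⟩

lemma contractMid_zero (s : I) : contractMid (0, s) = s := by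
  ext; simp [contractMid]

lemma contractMid_mem (t : I) {s : I} (hs : s ∈ midWhisker) : contractMid (t, s) ∈ midWhisker := by
  obtain ⟨hs₀, hs₁⟩ := hs
  rw [← Subtype.coe_lt_coe, Set.Icc.coe_one] at hs₁
  refine ⟨?_, Subtype.coe_lt_coe.1 ?_⟩
  · change 1 / 2 < (1 - (t : ℝ)) * s + t * (3 / 4)
    nlinarith [t.2.1, t.2.2]
  · change (1 - (t : ℝ)) * s + t * (3 / 4) < 1
    nlinarith [t.2.1, t.2.2]

lemma isShrinkable_whiskerPartProj (hr : ∀ b, p (i b) = b) :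
    IsShrinkable (whiskerPartProj i p midWhisker) := by
  let m : I := ⟨3 / 4, by norm_num, by norm_num⟩
  have hm : m ∈ midWhisker := ⟨by norm_num [m], Subtype.coe_lt_coe.1 (by norm_num [m])⟩
  have hm₁ : ∀ s, contractMid (1, s) = m := fun s => Subtype.ext (by simp [contractMid, m])
  have hrange : ∀ z : WhiskerPart i midWhisker, z.1.1.1 ∈ Set.range i :=
    fun z => z.1.2.resolve_left (ne_zero_of_mem_midWhisker z.2)
  exact ⟨⟨fun b => ⟨⟨(i b, m), Or.inr ⟨b, rfl⟩⟩, hm⟩, by fun_prop⟩,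
    { toFun := fun r => ⟨⟨(r.2.1.1.1, contractMid (r.1, r.2.1.1.2)), Or.inr (hrange r.2)⟩,
        contractMid_mem r.1 r.2.2⟩
      continuous_toFun := by fun_prop
      map_zero_left := fun z => Subtype.ext (Subtype.ext (Prod.ext rfl (contractMid_zero _)))
      map_one_left := fun z => Subtype.ext (Subtype.ext (Prod.ext
        (z.1.fst_eq hr (ne_zero_of_mem_midWhisker z.2)) (hm₁ _))) },
    hr, fun _ _ => rfl⟩

lemma hasCubeLifting_whiskerPartMap_midWhisker (hr : ∀ b, p (i b) = b) (hr' : ∀ b, p' (i' b) = b)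
    (hφi : ∀ b, φ (i b) = i' b) (hφp : ∀ x, p' (φ x) = p x) :
    HasCubeLifting (whiskerPartMap i i' φ hφi midWhisker) := by
  refine (isShrinkable_whiskerPartProj hr').hasCubeLifting.of_comp ?_
  convert (isShrinkable_whiskerPartProj hr).hasCubeLifting using 1
  exact ContinuousMap.ext fun z => hφp z.1.1.1

end WhiskerPart

section WhiskerBox

variable {iX : C(B, X)} {pX : C(X, B)} {iY : C(B, Y)} {pY : C(Y, B)} {J K : Set I}

lemma eq_of_mk_eq_of_whiskerLevel_lt
    {z w : {z : Whisker iX × Whisker iY // whiskerProj iX pX z.1 = whiskerProj iY pY z.2}}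
    (hz : whiskerLevel iX pX iY pY (Quot.mk _ z) < 1)
    (h : (Quot.mk _ z : WhiskerSmash iX pX iY pY) = Quot.mk _ w) : z = w := by
  replace hz : max z.1.1.1.2 z.1.2.1.2 < 1 := hz
  have hrel : ∀ u v, ISmashRel (whiskerSection iX) (whiskerProj iX pX) (whiskerSection iY)
      (whiskerProj iY pY) u v → z ≠ u ∧ z ≠ v := by
    rintro u v (⟨x, hu, hv⟩ | ⟨y, hu, hv⟩) <;> refine ⟨?_, ?_⟩ <;> rintro rfl <;>
      simp [hu, hv, whiskerSection] at hz
  have hlift : ∀ u v, ISmashRel (whiskerSection iX) (whiskerProj iX pX) (whiskerSection iY)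
      (whiskerProj iY pY) u v → (z = u) = (z = v) := fun u v huv =>
    propext ⟨fun hu => absurd hu (hrel u v huv).1, fun hv => absurd hv (hrel u v huv).2⟩
  exact (congrArg (Quot.lift (fun u => z = u) hlift) h).mp rfl

lemma isOpenEmbedding_mk_comp {Z : Type*} [TopologicalSpace Z]
    {j : Z → {z : Whisker iX × Whisker iY // whiskerProj iX pX z.1 = whiskerProj iY pY z.2}}
    (hj : IsOpenEmbedding j) (h : ∀ z, whiskerLevel iX pX iY pY (Quot.mk _ (j z)) < 1) :
    IsOpenEmbedding fun z => (Quot.mk _ (j z) : WhiskerSmash iX pX iY pY) := by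
  refine .of_continuous_injective_isOpenMap (continuous_quot_mk.comp hj.continuous)
    (fun z w hzw => hj.injective (eq_of_mk_eq_of_whiskerLevel_lt (h z) hzw)) fun W hW => ?_
  rw [← isQuotientMap_quot_mk.isOpen_preimage]
  convert hj.isOpenMap W hW using 1
  ext w
  constructor
  · rintro ⟨z, hz, hzw⟩
    exact ⟨z, hz, eq_of_mk_eq_of_whiskerLevel_lt (h z) hzw⟩
  · rintro ⟨z, hz, rfl⟩
    exact ⟨z, hz, rfl⟩

/-- The part of the smash product of whiskered spaces where the whisker coordinates lie in `J`
and `K`. -/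
def whiskerBox (iX : C(B, X)) (pX : C(X, B)) (iY : C(B, Y)) (pY : C(Y, B)) (J K : Set I) :
    Set (WhiskerSmash iX pX iY pY) :=
  Quot.mk _ '' {z | z.1.1.1.2 ∈ J ∧ z.1.2.1.2 ∈ K}

lemma mk_mem_whiskerBox (hJ : J ⊆ Set.Iio 1) (hK : K ⊆ Set.Iio 1)
    {z : {z : Whisker iX × Whisker iY // whiskerProj iX pX z.1 = whiskerProj iY pY z.2}} :
    Quot.mk _ z ∈ whiskerBox iX pX iY pY J K ↔ z.1.1.1.2 ∈ J ∧ z.1.2.1.2 ∈ K := by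
  refine ⟨?_, fun h => ⟨z, h, rfl⟩⟩
  rintro ⟨w, hw, hwz⟩
  rwa [← eq_of_mk_eq_of_whiskerLevel_lt (max_lt (hJ hw.1) (hK hw.2)) hwz]

/-- The fibre product of parts of the whiskered spaces, mapped to the corresponding box. -/
def whiskerBoxIncl (iX : C(B, X)) (pX : C(X, B)) (iY : C(B, Y)) (pY : C(Y, B)) (J K : Set I)
    (z : {z : WhiskerPart iX J × WhiskerPart iY K //
      whiskerPartProj iX pX J z.1 = whiskerPartProj iY pY K z.2}) : WhiskerSmash iX pX iY pY :=
  Quot.mk _ ⟨(z.1.1.1, z.1.2.1), z.2⟩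

lemma range_whiskerBoxIncl :
    Set.range (whiskerBoxIncl iX pX iY pY J K) = whiskerBox iX pX iY pY J K := by
  ext q
  constructor
  · rintro ⟨z, rfl⟩
    exact ⟨_, ⟨z.1.1.2, z.1.2.2⟩, rfl⟩
  · rintro ⟨z, hz, rfl⟩
    exact ⟨⟨(⟨z.1.1, hz.1⟩, ⟨z.1.2, hz.2⟩), z.2⟩, rfl⟩

lemma isOpenEmbedding_whiskerBoxIncl (hJo : IsOpen J) (hKo : IsOpen K) (hJ : J ⊆ Set.Iio 1)
    (hK : K ⊆ Set.Iio 1) : IsOpenEmbedding (whiskerBoxIncl iX pX iY pY J K) :=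
  isOpenEmbedding_mk_comp (j := fiberProductMap (whiskerPartProj iX pX J)
    (whiskerPartProj iY pY K) (whiskerProj iX pX) (whiskerProj iY pY)
    ⟨Subtype.val, continuous_subtype_val⟩ ⟨Subtype.val, continuous_subtype_val⟩
    (fun _ => rfl) (fun _ => rfl)) (isOpenEmbedding_fiberProductMap
      (isOpenEmbedding_whiskerPart_val hJo) (isOpenEmbedding_whiskerPart_val hKo) _ _)
    fun z => max_lt (hJ z.1.1.2) (hK z.1.2.2)

lemma isOpen_whiskerBox (hJo : IsOpen J) (hKo : IsOpen K) (hJ : J ⊆ Set.Iio 1)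
    (hK : K ⊆ Set.Iio 1) : IsOpen (whiskerBox iX pX iY pY J K) := by
  rw [← range_whiskerBoxIncl]
  exact (isOpenEmbedding_whiskerBoxIncl hJo hKo hJ hK).isOpen_range

lemma whiskerBox_midWhisker_inter :
    whiskerBox iX pX iY pY midWhisker (Set.Iio 1) ∩ whiskerBox iX pX iY pY (Set.Iio 1) midWhisker =
      whiskerBox iX pX iY pY midWhisker midWhisker := by
  ext ⟨z⟩
  change Quot.mk _ z ∈ _ ∧ Quot.mk _ z ∈ _ ↔ Quot.mk _ z ∈ _
  rw [mk_mem_whiskerBox midWhisker_subset_Iio le_rfl, mk_mem_whiskerBox le_rfl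
    midWhisker_subset_Iio, mk_mem_whiskerBox midWhisker_subset_Iio midWhisker_subset_Iio]
  exact ⟨fun h => ⟨h.1.1, h.2.2⟩, fun h => ⟨⟨h.1, h.2.2⟩, h.1.2, h.2⟩⟩

lemma whiskerBox_midWhisker_union :
    whiskerBox iX pX iY pY midWhisker (Set.Iio 1) ∪ whiskerBox iX pX iY pY (Set.Iio 1) midWhisker =
      nearBase iX pX iY pY ∩ whiskerBox iX pX iY pY (Set.Iio 1) (Set.Iio 1) := by
  ext ⟨z⟩
  change Quot.mk _ z ∈ _ ∨ Quot.mk _ z ∈ _ ↔ Quot.mk _ z ∈ _ ∧ Quot.mk _ z ∈ _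
  rw [mk_mem_whiskerBox midWhisker_subset_Iio le_rfl, mk_mem_whiskerBox le_rfl
    midWhisker_subset_Iio, mk_mem_whiskerBox le_rfl le_rfl, mk_mem_nearBase]
  change (_ ∧ _) ∧ _ ∨ _ ∧ (_ ∧ _) ↔ _
  tauto

lemma nearBase_union_whiskerBox :
    nearBase iX pX iY pY ∪ whiskerBox iX pX iY pY (Set.Iio 1) (Set.Iio 1) = Set.univ := by
  refine Set.eq_univ_of_forall ?_
  rintro ⟨z⟩
  refine or_iff_not_imp_left.2 fun hz => (mk_mem_whiskerBox le_rfl le_rfl).2 ?_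
  rw [mk_mem_nearBase, not_or, not_lt, not_lt] at hz
  exact ⟨Subtype.coe_lt_coe.1 (hz.1.trans_lt (by norm_num)),
    Subtype.coe_lt_coe.1 (hz.2.trans_lt (by norm_num))⟩

end WhiskerBox

/-! ### The map of smash products of whiskered spaces -/

section WhiskerSmashMap

variable {iX : C(B, X)} {pX : C(X, B)} {iY : C(B, Y)} {pY : C(Y, B)}
  {iX' : C(B, X')} {pX' : C(X', B)} {iY' : C(B, Y')} {pY' : C(Y', B)}
  {φ : C(X, X')} {ψ : C(Y, Y')} {J K : Set I}

lemma hasCubeLiftingOn_whiskerBox (hφi : ∀ b, φ (iX b) = iX' b) (hφp : ∀ x, pX' (φ x) = pX x)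
    (hψi : ∀ b, ψ (iY b) = iY' b) (hψp : ∀ y, pY' (ψ y) = pY y)
    (hJo : IsOpen J) (hKo : IsOpen K) (hJ : J ⊆ Set.Iio 1) (hK : K ⊆ Set.Iio 1)
    (h : HasCubeLifting (fiberProductMap (whiskerPartProj iX pX J) (whiskerPartProj iY pY K)
      (whiskerPartProj iX' pX' J) (whiskerPartProj iY' pY' K) (whiskerPartMap iX iX' φ hφi J)
      (whiskerPartMap iY iY' ψ hψi K) (fun z => hφp z.1.1.1) (fun z => hψp z.1.1.1))) :
    HasCubeLiftingOn (whiskerSmashMap iX pX iY pY iX' pX' iY' pY' φ ψ hφi hφp hψi hψp)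
      (whiskerBox iX' pX' iY' pY' J K) := by
  rw [← range_whiskerBoxIncl]
  refine h.on_range (isOpenEmbedding_whiskerBoxIncl hJo hKo hJ hK).isEmbedding
    (isOpenEmbedding_whiskerBoxIncl hJo hKo hJ hK).isEmbedding (fun _ => rfl) ?_
  rintro ⟨z⟩ hz
  rw [range_whiskerBoxIncl] at hz ⊢
  change Quot.mk _ _ ∈ whiskerBox iX' pX' iY' pY' J K at hz
  rw [mk_mem_whiskerBox hJ hK] at hz
  exact (mk_mem_whiskerBox hJ hK).2 hz

lemma hasCubeLiftingOn_whiskerBox_Iio (hpX : IsSerreFibration pX) (hpX' : IsSerreFibration pX')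
    (hφi : ∀ b, φ (iX b) = iX' b) (hφp : ∀ x, pX' (φ x) = pX x)
    (hψi : ∀ b, ψ (iY b) = iY' b) (hψp : ∀ y, pY' (ψ y) = pY y)
    (hφ : HasCubeLifting φ) (hKo : IsOpen K) (hK : K ⊆ Set.Iio 1)
    (hψ : HasCubeLifting (whiskerPartMap iY iY' ψ hψi K)) :
    HasCubeLiftingOn (whiskerSmashMap iX pX iY pY iX' pX' iY' pY' φ ψ hφi hφp hψi hψp)
      (whiskerBox iX' pX' iY' pY' (Set.Iio 1) K) :=
  hasCubeLiftingOn_whiskerBox hφi hφp hψi hψp isOpen_Iio hKo le_rfl hK <|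
    hasCubeLifting_fiberProductMap_of_isShrinkable (isShrinkable_whiskerPartForget iX)
      (isShrinkable_whiskerPartForget iX') hpX hpX' hφ hψ (fun _ => rfl) hφp _

lemma hasCubeLiftingOn_whiskerBox_midWhisker (hXr : ∀ b, pX (iX b) = b)
    (hX'r : ∀ b, pX' (iX' b) = b) (hφi : ∀ b, φ (iX b) = iX' b) (hφp : ∀ x, pX' (φ x) = pX x)
    (hψi : ∀ b, ψ (iY b) = iY' b) (hψp : ∀ y, pY' (ψ y) = pY y)
    (hKo : IsOpen K) (hK : K ⊆ Set.Iio 1)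
    (hψ : HasCubeLifting (whiskerPartMap iY iY' ψ hψi K)) :
    HasCubeLiftingOn (whiskerSmashMap iX pX iY pY iX' pX' iY' pY' φ ψ hφi hφp hψi hψp)
      (whiskerBox iX' pX' iY' pY' midWhisker K) :=
  hasCubeLiftingOn_whiskerBox hφi hφp hψi hψp isOpen_midWhisker hKo midWhisker_subset_Iio hK <|
    hasCubeLifting_fiberProductMap_of_isShrinkable (isShrinkable_whiskerPartProj hXr)
      (isShrinkable_whiskerPartProj hX'r) isSerreFibration_id isSerreFibration_id
      hasCubeLifting_id hψ (fun z => hφp z.1.1.1) (fun _ => rfl) _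

/-- The smash product of whiskered spaces is covered by `nearBase` and a box, whose intersection is
covered by two further boxes; the lifting property is local for such covers. -/
lemma hasCubeLifting_whiskerSmashMap (hXr : ∀ b, pX (iX b) = b) (hYr : ∀ b, pY (iY b) = b)
    (hX'r : ∀ b, pX' (iX' b) = b) (hY'r : ∀ b, pY' (iY' b) = b)
    (hpX : IsSerreFibration pX) (hpX' : IsSerreFibration pX')
    (hφi : ∀ b, φ (iX b) = iX' b) (hφp : ∀ x, pX' (φ x) = pX x)
    (hψi : ∀ b, ψ (iY b) = iY' b) (hψp : ∀ y, pY' (ψ y) = pY y)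
    (hφ : HasCubeLifting φ) (hψ : HasCubeLifting ψ) :
    HasCubeLifting (whiskerSmashMap iX pX iY pY iX' pX' iY' pY' φ ψ hφi hφp hψi hψp) := by
  have hψlow := hasCubeLifting_whiskerPartMap_Iio hψi hψ
  have hψmid := hasCubeLifting_whiskerPartMap_midWhisker hYr hY'r hψi hψp
  have hlow {K : Set I} := hasCubeLiftingOn_whiskerBox_Iio (K := K) hpX hpX' hφi hφp hψi hψp hφ
  have hmid {K : Set I} :=
    hasCubeLiftingOn_whiskerBox_midWhisker (K := K) hXr hX'r hφi hφp hψi hψp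
  have hinter := (hmid isOpen_Iio le_rfl hψlow).union
    (isOpen_whiskerBox isOpen_midWhisker isOpen_Iio midWhisker_subset_Iio le_rfl)
    (isOpen_whiskerBox isOpen_Iio isOpen_midWhisker le_rfl midWhisker_subset_Iio)
    (hlow isOpen_midWhisker midWhisker_subset_Iio hψmid)
    (by rw [whiskerBox_midWhisker_inter]; exact hmid isOpen_midWhisker midWhisker_subset_Iio hψmid)
  rw [whiskerBox_midWhisker_union] at hinter
  have hunion := (hasCubeLiftingOn_nearBase hXr hYr hX'r hY'r hφi hφp hψi hψp).union
    isOpen_nearBase (isOpen_whiskerBox isOpen_Iio isOpen_Iio le_rfl le_rfl)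
    (hlow isOpen_Iio le_rfl hψlow) hinter
  rwa [nearBase_union_whiskerBox] at hunion

end WhiskerSmashMap

/-- If `φ : X → X'` and `ψ : Y → Y'` are weak equivalences of f-cofibrant retractive spaces
over `B` and the projections `p_X`, `p_X'` are Serre fibrations, then
`φ ∧_B ψ : X ∧_B Y → X' ∧_B Y'` is a weak equivalence. -/
theorem isWeakHomotopyEquiv_iSmashMap
    (iX : C(B, X)) (pX : C(X, B)) (hXr : ∀ b, pX (iX b) = b)
    (iY : C(B, Y)) (pY : C(Y, B)) (hYr : ∀ b, pY (iY b) = b)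
    (iX' : C(B, X')) (pX' : C(X', B)) (hX'r : ∀ b, pX' (iX' b) = b)
    (iY' : C(B, Y')) (pY' : C(Y', B)) (hY'r : ∀ b, pY' (iY' b) = b)
    (hXf : IsFCofibration iX pX) (hYf : IsFCofibration iY pY)
    (hX'f : IsFCofibration iX' pX') (hY'f : IsFCofibration iY' pY')
    (hpX : IsSerreFibration pX) (hpX' : IsSerreFibration pX')
    (φ : C(X, X')) (ψ : C(Y, Y'))
    (hφi : ∀ b, φ (iX b) = iX' b) (hφp : ∀ x, pX' (φ x) = pX x)
    (hψi : ∀ b, ψ (iY b) = iY' b) (hψp : ∀ y, pY' (ψ y) = pY y)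
    (hφ : IsWeakHomotopyEquiv φ) (hψ : IsWeakHomotopyEquiv ψ) :
    IsWeakHomotopyEquiv
      (iSmashMap iX pX iY pY iX' pX' iY' pY' φ ψ hφi hφp hψi hψp) := by
  have h := hasCubeLifting_whiskerSmashMap hXr hYr hX'r hY'r hpX hpX' hφi hφp hψi hψp
    hφ.hasCubeLifting hψ.hasCubeLifting
  exact (hasCubeLifting_iSmashMap_of_whiskerSmashMap hXf hYf hX'f hY'f
    hφi hφp hψi hψp h).isWeakHomotopyEquiv

end InternalSmash
end

section
/- Let C and D be categories each equipped with a class of weak equivalences containing all isomorphisms and closed under 2-out-of-3, and let (F ⊣ G) be an adjunction with F : C → D and G : D → C. Suppose F is left deformable: there are a full subcategory A_C ⊆ C on which F sends weak equivalences to weak equivalences and a left deformation retract (Q, q) of C into A_C; and suppose G is right deformable: there are a full subcategory A_D ⊆ D on which G sends weak equivalences to weak equivalences and a right deformation retract (R, r) of D into A_D. Then the total derived functors L F : ho C → ho D (induced by F ∘ Q) and R G : ho D → ho C (induced by G ∘ R) exist and form an adjunction (L F ⊣ R G), whose unit and counit are induced by deriving the composites X → G F X → G R F X and F Q G Y → F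 G Y → Y built from the unit and counit of (F ⊣ G) and the transformations q and r. -/
open CategoryTheory

/-!
Let `T` be an endofunctor of a category with a natural transformation `θ : T ⟶ 𝟭`. If `θ` is
invertible at `A` and at `B`, a morphism `γ : A ⟶ B` is recovered from `T γ`, so composing with a
morphism `α : B ⟶ F` that `T` inverts is a bijection from `A ⟶ B` to `A ⟶ F`. For `T` the
precomposition with a left deformation `Q`, this says that a functor on the localization which
agrees with `F` on the values of `Q` is the left derived functor of `F`. Agreement on the values
of `Q` survives postcomposition with any functor, so these derived functors are absolute, and
absolute derived functors of adjoint functors are adjoint (Maltsiniotis).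
-/

section

open CategoryTheory.Functor

section Endofunctor

variable {E : Type*} [Category E] {T : E ⥤ E}

lemma bijective_comp_right_of_isIso_map (θ : T ⟶ 𝟭 E) {A B F : E} (α : B ⟶ F)
    [IsIso (θ.app A)] [IsIso (θ.app B)] [IsIso (T.map α)] :
    Function.Bijective (fun γ : A ⟶ B ↦ γ ≫ α) := by
  have recover (γ : A ⟶ B) : γ = inv (θ.app A) ≫ T.map γ ≫ θ.app B := by simp
  refine ⟨fun γ₁ γ₂ h ↦ ?_, fun β ↦ ⟨inv (θ.app A) ≫ T.map β ≫ inv (T.map α) ≫ θ.app B, ?_⟩⟩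
  · have hT : T.map γ₁ = T.map γ₂ := by
      simpa only [Functor.map_comp, cancel_mono] using congrArg T.map h
    rw [recover γ₁, recover γ₂, hT]
  · have hα : θ.app B ≫ α = T.map α ≫ θ.app F := (θ.naturality α).symm
    simp only [Category.assoc, hα, IsIso.inv_hom_id_assoc, IsIso.inv_comp_eq]
    exact θ.naturality β

lemma bijective_comp_left_of_isIso_map (θ : 𝟭 E ⟶ T) {A B F : E} (α : F ⟶ B)
    [IsIso (θ.app A)] [IsIso (θ.app B)] [IsIso (T.map α)] :
    Function.Bijective (fun γ : B ⟶ A ↦ α ≫ γ) := by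
  have recover (γ : B ⟶ A) : γ = θ.app B ≫ T.map γ ≫ inv (θ.app A) := by
    have hγ : γ ≫ θ.app A = θ.app B ≫ T.map γ := θ.naturality γ
    rw [← reassoc_of% hγ, IsIso.hom_inv_id, Category.comp_id]
  refine ⟨fun γ₁ γ₂ h ↦ ?_, fun β ↦ ⟨θ.app B ≫ inv (T.map α) ≫ T.map β ≫ inv (θ.app A), ?_⟩⟩
  · have hT : T.map γ₁ = T.map γ₂ := by
      simpa only [Functor.map_comp, cancel_epi] using congrArg T.map h
    rw [recover γ₁, recover γ₂, hT]
  · have hα : α ≫ θ.app B = θ.app F ≫ T.map α := θ.naturality α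
    have hβ : β ≫ θ.app A = θ.app F ≫ T.map β := θ.naturality β
    simp only [reassoc_of% hα, IsIso.hom_inv_id_assoc, ← reassoc_of% hβ, IsIso.hom_inv_id,
      Category.comp_id]

end Endofunctor

variable {C D H : Type*} [Category C] [Category D] [Category H]

section KanExtension

variable {L : C ⥤ D} {F : C ⥤ H} {F' : D ⥤ H}

lemma isRightKanExtension_of_bijective (α : L ⋙ F' ⟶ F)
    (h : ∀ K : D ⥤ H, Function.Bijective (fun γ : K ⟶ F' ↦ whiskerLeft L γ ≫ α)) :
    F'.IsRightKanExtension α := by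
  choose lift hlift using fun K ↦ (h K).surjective
  exact ⟨⟨Limits.IsTerminal.ofUniqueHom
    (fun K ↦ CostructuredArrow.homMk (lift K.left K.hom) (hlift K.left K.hom))
    (fun K m ↦ by
      ext1
      exact (h K.left).injective ((CostructuredArrow.w m).trans (hlift K.left K.hom).symm))⟩⟩

lemma isLeftKanExtension_of_bijective (α : F ⟶ L ⋙ F')
    (h : ∀ K : D ⥤ H, Function.Bijective (fun γ : F' ⟶ K ↦ α ≫ whiskerLeft L γ)) :
    F'.IsLeftKanExtension α := by
  choose desc hdesc using fun K ↦ (h K).surjective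
  exact ⟨⟨Limits.IsInitial.ofUniqueHom
    (fun K ↦ StructuredArrow.homMk (desc K.right K.hom) (hdesc K.right K.hom))
    (fun K m ↦ by
      ext1
      exact (h K.right).injective ((StructuredArrow.w m).trans (hdesc K.right K.hom).symm))⟩⟩

end KanExtension

/-- The functor `F` inverts the weak equivalences `W` between objects of the full subcategory
`A`. For a functor to a category with weak equivalences, followed by the localization, this is
the condition on `A` in the definition of a deformable functor. -/
def InvertsOn (W : MorphismProperty C) (A : ObjectProperty C) (F : C ⥤ H) : Prop :=
  ∀ ⦃X Y : C⦄ (f : X ⟶ Y), A X → A Y → W f → IsIso (F.map f)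

/-- A left deformation retract `(Q, q)` of `C` into the full subcategory `A`, with respect to
the weak equivalences `W`. -/
structure LeftDeformation (W : MorphismProperty C) (A : ObjectProperty C) where
  functor : C ⥤ C
  hom : functor ⟶ 𝟭 C
  prop_obj (X : C) : A (functor.obj X)
  hom_mem (X : C) : W (hom.app X)

/-- A right deformation retract `(R, r)` of `C` into the full subcategory `A`, with respect to
the weak equivalences `W`. -/
structure RightDeformation (W : MorphismProperty C) (A : ObjectProperty C) where
  functor : C ⥤ C
  hom : 𝟭 C ⟶ functor
  prop_obj (X : C) : A (functor.obj X)
  hom_mem (X : C) : W (hom.app X)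

namespace LeftDeformation

variable {W : MorphismProperty C} {A : ObjectProperty C} (δ : LeftDeformation W A)

lemma isLeftDerivedFunctor_of_isIso {L : C ⥤ D} [L.IsLocalization W] {F : C ⥤ H} {LF : D ⥤ H}
    (α : L ⋙ LF ⟶ F) (hα : ∀ X, IsIso (α.app (δ.functor.obj X))) :
    LF.IsLeftDerivedFunctor α W where
  isRightKanExtension := isRightKanExtension_of_bijective α fun K ↦ by
    let T := (whiskeringLeft C C H).obj δ.functor
    let θ : T ⟶ 𝟭 (C ⥤ H) := { app := fun M ↦ whiskerRight δ.hom M ≫ M.leftUnitor.hom }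
    have isIso_θ (M : D ⥤ H) : IsIso (θ.app (L ⋙ M)) := by
      have (X : C) : IsIso (L.map (δ.hom.app X)) := Localization.inverts L W _ (δ.hom_mem X)
      have (X : C) : IsIso ((θ.app (L ⋙ M)).app X) := by dsimp [θ]; infer_instance
      exact NatIso.isIso_of_isIso_app _
    have : IsIso (T.map α) :=
      have (X : C) : IsIso ((T.map α).app X) := hα X
      NatIso.isIso_of_isIso_app _
    exact (bijective_comp_right_of_isIso_map θ α).comp
      ((Localization.fullyFaithfulWhiskeringLeft L W H).map_bijective K LF)

lemma isLeftDerivedFunctor_comp {E : Type*} [Category E] {L : C ⥤ D} [L.IsLocalization W]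
    {F : C ⥤ H} {LF : D ⥤ H} (α : L ⋙ LF ⟶ F) (hα : ∀ X, IsIso (α.app (δ.functor.obj X)))
    (K : H ⥤ E) :
    (LF ⋙ K).IsLeftDerivedFunctor ((Functor.associator _ _ _).inv ≫ whiskerRight α K) W :=
  δ.isLeftDerivedFunctor_of_isIso _ fun X ↦ by dsimp; infer_instance

lemma map_mem [W.IsStableUnderComposition] [W.HasOfPostcompProperty W] {X Y : C} (f : X ⟶ Y)
    (hf : W f) : W (δ.functor.map f) := by
  refine W.of_postcomp _ (δ.hom.app Y) (δ.hom_mem Y) ?_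
  rw [δ.hom.naturality]
  exact W.comp_mem _ _ (δ.hom_mem X) hf

lemma isInvertedBy [W.IsStableUnderComposition] [W.HasOfPostcompProperty W] {F : C ⥤ H}
    (hF : InvertsOn W A F) : W.IsInvertedBy (δ.functor ⋙ F) :=
  fun X Y f hf ↦ hF _ (δ.prop_obj X) (δ.prop_obj Y) (δ.map_mem f hf)

/-- The natural transformation `L ⋙ LF ⟶ F` given by `F q`, where `LF` is induced by `F ∘ Q`. It
exhibits `LF` as a left derived functor when `F` inverts the weak equivalences on `A`. -/
def counit (L : C ⥤ D) (F : C ⥤ H) (LF : D ⥤ H)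
    [Localization.Lifting L W (δ.functor ⋙ F) LF] : L ⋙ LF ⟶ F :=
  (Localization.Lifting.iso L W (δ.functor ⋙ F) LF).hom ≫ whiskerRight δ.hom F ≫
    F.leftUnitor.hom

lemma isIso_counit_app {F : C ⥤ H} (hF : InvertsOn W A F) (L : C ⥤ D) (LF : D ⥤ H)
    [Localization.Lifting L W (δ.functor ⋙ F) LF] (X : C) :
    IsIso ((δ.counit L F LF).app (δ.functor.obj X)) := by
  have : IsIso (F.map (δ.hom.app (δ.functor.obj X))) :=
    hF _ (δ.prop_obj _) (δ.prop_obj X) (δ.hom_mem _)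
  dsimp [counit]
  infer_instance

end LeftDeformation

namespace RightDeformation

variable {W : MorphismProperty C} {A : ObjectProperty C} (ρ : RightDeformation W A)

lemma isRightDerivedFunctor_of_isIso {L : C ⥤ D} [L.IsLocalization W] {F : C ⥤ H} {RF : D ⥤ H}
    (α : F ⟶ L ⋙ RF) (hα : ∀ X, IsIso (α.app (ρ.functor.obj X))) :
    RF.IsRightDerivedFunctor α W where
  isLeftKanExtension := isLeftKanExtension_of_bijective α fun K ↦ by
    let T := (whiskeringLeft C C H).obj ρ.functor
    let θ : 𝟭 (C ⥤ H) ⟶ T := { app := fun M ↦ M.leftUnitor.inv ≫ whiskerRight ρ.hom M }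
    have isIso_θ (M : D ⥤ H) : IsIso (θ.app (L ⋙ M)) := by
      have (X : C) : IsIso (L.map (ρ.hom.app X)) := Localization.inverts L W _ (ρ.hom_mem X)
      have (X : C) : IsIso ((θ.app (L ⋙ M)).app X) := by dsimp [θ]; infer_instance
      exact NatIso.isIso_of_isIso_app _
    have : IsIso (T.map α) :=
      have (X : C) : IsIso ((T.map α).app X) := hα X
      NatIso.isIso_of_isIso_app _
    exact (bijective_comp_left_of_isIso_map θ α).comp
      ((Localization.fullyFaithfulWhiskeringLeft L W H).map_bijective RF K)

lemma isRightDerivedFunctor_comp {E : Type*} [Category E] {L : C ⥤ D} [L.IsLocalization W]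
    {F : C ⥤ H} {RF : D ⥤ H} (α : F ⟶ L ⋙ RF) (hα : ∀ X, IsIso (α.app (ρ.functor.obj X)))
    (K : H ⥤ E) :
    (RF ⋙ K).IsRightDerivedFunctor (whiskerRight α K ≫ (Functor.associator _ _ _).hom) W :=
  ρ.isRightDerivedFunctor_of_isIso _ fun X ↦ by dsimp; infer_instance

lemma map_mem [W.IsStableUnderComposition] [W.HasOfPrecompProperty W] {X Y : C} (f : X ⟶ Y)
    (hf : W f) : W (ρ.functor.map f) := by
  refine W.of_precomp (ρ.hom.app X) _ (ρ.hom_mem X) ?_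
  rw [← ρ.hom.naturality]
  exact W.comp_mem _ _ hf (ρ.hom_mem Y)

lemma isInvertedBy [W.IsStableUnderComposition] [W.HasOfPrecompProperty W] {F : C ⥤ H}
    (hF : InvertsOn W A F) : W.IsInvertedBy (ρ.functor ⋙ F) :=
  fun X Y f hf ↦ hF _ (ρ.prop_obj X) (ρ.prop_obj Y) (ρ.map_mem f hf)

/-- The natural transformation `F ⟶ L ⋙ RF` given by `F r`, where `RF` is induced by `F ∘ R`. It
exhibits `RF` as a right derived functor when `F` inverts the weak equivalences on `A`. -/
def unit (L : C ⥤ D) (F : C ⥤ H) (RF : D ⥤ H)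
    [Localization.Lifting L W (ρ.functor ⋙ F) RF] : F ⟶ L ⋙ RF :=
  F.leftUnitor.inv ≫ whiskerRight ρ.hom F ≫
    (Localization.Lifting.iso L W (ρ.functor ⋙ F) RF).inv

lemma isIso_unit_app {F : C ⥤ H} (hF : InvertsOn W A F) (L : C ⥤ D) (RF : D ⥤ H)
    [Localization.Lifting L W (ρ.functor ⋙ F) RF] (X : C) :
    IsIso ((ρ.unit L F RF).app (ρ.functor.obj X)) := by
  have : IsIso (F.map (ρ.hom.app (ρ.functor.obj X))) :=
    hF _ (ρ.prop_obj X) (ρ.prop_obj _) (ρ.hom_mem _)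
  dsimp [unit]
  infer_instance

end RightDeformation

lemma invertsOn_comp_of_isInvertedBy {W : MorphismProperty C} {A : ObjectProperty C}
    {W' : MorphismProperty D} {F : C ⥤ D} {L : D ⥤ H} (hL : W'.IsInvertedBy L)
    (hF : ∀ ⦃X Y : C⦄ (f : X ⟶ Y), A X → A Y → W f → W' (F.map f)) :
    InvertsOn W A (F ⋙ L) :=
  fun _ _ f hX hY hf ↦ hL _ (hF f hX hY hf)

theorem derived_adjunction_general {HoC HoD : Type*} [Category HoC] [Category HoD]
    {W : MorphismProperty C} {W' : MorphismProperty D}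
    (L : C ⥤ HoC) [L.IsLocalization W] (L' : D ⥤ HoD) [L'.IsLocalization W']
    {F : C ⥤ D} {G : D ⥤ C} (adj : F ⊣ G)
    {A : ObjectProperty C} {B : ObjectProperty D}
    (δ : LeftDeformation W A) (ρ : RightDeformation W' B)
    (hF : InvertsOn W A (F ⋙ L')) (hG : InvertsOn W' B (G ⋙ L))
    (LF : HoC ⥤ HoD) [Localization.Lifting L W (δ.functor ⋙ F ⋙ L') LF]
    (RG : HoD ⥤ HoC) [Localization.Lifting L' W' (ρ.functor ⋙ G ⋙ L) RG] :
    LF.IsLeftDerivedFunctor (δ.counit L (F ⋙ L') LF) W ∧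
    RG.IsRightDerivedFunctor (ρ.unit L' (G ⋙ L) RG) W' ∧
    ∃ adj' : LF ⊣ RG,
      (∀ X, adj'.unit.app (L.obj X) ≫ RG.map ((δ.counit L (F ⋙ L') LF).app X) =
        L.map (adj.unit.app X) ≫ (ρ.unit L' (G ⋙ L) RG).app (F.obj X)) ∧
      ∀ Y, LF.map ((ρ.unit L' (G ⋙ L) RG).app Y) ≫ adj'.counit.app (L'.obj Y) =
        (δ.counit L (F ⋙ L') LF).app (G.obj Y) ≫ L'.map (adj.counit.app Y) := by
  have hcounit := δ.isIso_counit_app hF L LF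
  have hunit := ρ.isIso_unit_app hG L' RG
  have hLF := δ.isLeftDerivedFunctor_of_isIso _ hcounit
  have hRG := ρ.isRightDerivedFunctor_of_isIso _ hunit
  have := δ.isLeftDerivedFunctor_comp _ hcounit RG
  have := ρ.isRightDerivedFunctor_comp _ hunit LF
  exact ⟨hLF, hRG, adj.derived W W' _ _, adj.derivedη_fac_app W _ _, adj.derivedε_fac_app W' _ _⟩

end

/-- **Derived adjunction.**  Let `(F ⊣ G)` be an adjunction between categories with weak
equivalences (containing the isomorphisms and with the two-out-of-three property).  If `F`
is left deformable (via a left deformation retract `(Q, q)` into a full subcategory on which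
`F` preserves weak equivalences) and `G` is right deformable (via a right deformation
retract `(R, r)`), then the total derived functors `L F` (induced by `F ∘ Q`) and `R G`
(induced by `G ∘ R`) exist and form an adjunction `(L F ⊣ R G)`. -/
theorem derived_adjunction
    {C D : Type*} [Category C] [Category D]
    (W : MorphismProperty C) (W' : MorphismProperty D)
    (hWiso : MorphismProperty.isomorphisms C ≤ W) [W.HasTwoOutOfThreeProperty]
    (hW'iso : MorphismProperty.isomorphisms D ≤ W') [W'.HasTwoOutOfThreeProperty]
    (F : C ⥤ D) (G : D ⥤ C) (adj : F ⊣ G)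
    (PC : C → Prop)
    (hF : ∀ ⦃X Y : C⦄ (f : X ⟶ Y), PC X → PC Y → W f → W' (F.map f))
    (Q : C ⥤ C) (q : Q ⟶ 𝟭 C) (hQP : ∀ X, PC (Q.obj X)) (hq : ∀ X, W (q.app X))
    (PD : D → Prop)
    (hG : ∀ ⦃X Y : D⦄ (f : X ⟶ Y), PD X → PD Y → W' f → W (G.map f))
    (R : D ⥤ D) (r : 𝟭 D ⟶ R) (hRP : ∀ X, PD (R.obj X)) (hr : ∀ X, W' (r.app X)) :
    ∃ (hinvF : W.IsInvertedBy (Q ⋙ F ⋙ W'.Q))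
      (hinvG : W'.IsInvertedBy (R ⋙ G ⋙ W.Q)),
      Nonempty
        (Localization.Construction.lift (Q ⋙ F ⋙ W'.Q) hinvF ⊣
          Localization.Construction.lift (R ⋙ G ⋙ W.Q) hinvG) := by
  have hF' : InvertsOn W PC (F ⋙ W'.Q) :=
    invertsOn_comp_of_isInvertedBy (Localization.inverts W'.Q W') hF
  have hG' : InvertsOn W' PD (G ⋙ W.Q) :=
    invertsOn_comp_of_isInvertedBy (Localization.inverts W.Q W) hG
  let δ : LeftDeformation W PC := ⟨Q, q, hQP, hq⟩
  let ρ : RightDeformation W' PD := ⟨R, r, hRP, hr⟩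
  have hinvF := δ.isInvertedBy hF'
  have hinvG := ρ.isInvertedBy hG'
  obtain ⟨_, _, adj', _⟩ := derived_adjunction_general W.Q W'.Q adj δ ρ hF' hG'
    (Localization.Construction.lift _ hinvF) (Localization.Construction.lift _ hinvG)
  exact ⟨hinvF, hinvG, ⟨adj'⟩⟩
end

section
/- Let X ⊆ ℝⁿ be a compact subset and let N ⊆ ℝⁿ be any neighborhood of X (a subset containing X in its interior). Then the maps induced by inclusions of pairs are homotopy equivalences: (a) C^u(N, N∖X) → C^u(ℝⁿ, ℝⁿ∖X); and (b) C^u(N, N∖X) → C(Sⁿ, Sⁿ∖X), where Sⁿ denotes the one-point compactification of ℝⁿ based at the point at infinity. -/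
open unitInterval Topology

/-- A continuous map is a homotopy equivalence if it admits a two-sided homotopy inverse. -/
def IsHomotopyEquiv {X Y : Type*} [TopologicalSpace X] [TopologicalSpace Y]
    (f : C(X, Y)) : Prop :=
  ∃ g : C(Y, X), (g.comp f).Homotopic (ContinuousMap.id X) ∧
    (f.comp g).Homotopic (ContinuousMap.id Y)

section Cones

variable {P P' : Type*} [TopologicalSpace P] [TopologicalSpace P']

/-- The relation generating the unreduced mapping cone `C^u(P, Q)` of a pair `Q ⊆ P`:
the quotient of `{*} ⊔ (Q × [0,1]) ⊔ P` identifying `(q, 1)` with `q ∈ P` and `(q, 0)`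
with the cone point `*`. -/
def UConeRel (P : Type*) (Q : Set P) :
    (Unit ⊕ (Q × I) ⊕ P) → (Unit ⊕ (Q × I) ⊕ P) → Prop := fun u v =>
  (∃ q : Q, u = Sum.inr (Sum.inl (q, 1)) ∧ v = Sum.inr (Sum.inr (q : P))) ∨
  (∃ q : Q, u = Sum.inr (Sum.inl (q, 0)) ∧ v = Sum.inl ())

/-- The unreduced mapping cone of a pair `Q ⊆ P`. -/
abbrev UCone (P : Type*) [TopologicalSpace P] (Q : Set P) : Type _ :=
  Quot (UConeRel P Q)

/-- The relation generating the reduced mapping cone `C(P, Q)` of a pair `Q ⊆ P` with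
basepoint `b ∈ Q`: the unreduced cone with the cone on the basepoint collapsed. -/
def RConeRel (P : Type*) (Q : Set P) (b : P) (hb : b ∈ Q) :
    (Unit ⊕ (Q × I) ⊕ P) → (Unit ⊕ (Q × I) ⊕ P) → Prop := fun u v =>
  UConeRel P Q u v ∨
  (∃ t : I, u = Sum.inr (Sum.inl (⟨b, hb⟩, t)) ∧ v = Sum.inl ()) ∨
  (u = Sum.inr (Sum.inr b) ∧ v = Sum.inl ())

/-- The reduced mapping cone of a pair `Q ⊆ P` with basepoint `b ∈ Q`. -/
abbrev RCone (P : Type*) [TopologicalSpace P] (Q : Set P) (b : P) (hb : b ∈ Q) : Type _ :=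
  Quot (RConeRel P Q b hb)

/-- The map of unreduced mapping cones induced by a map of pairs. -/
def UCone.map {Q : Set P} {Q' : Set P'} (F : C(P, P')) (hF : Set.MapsTo F Q Q') :
    C(UCone P Q, UCone P' Q') :=
  ⟨Quot.lift
      (fun u => Quot.mk _
        (Sum.map id (Sum.map (fun qt => (⟨F qt.1, hF qt.1.2⟩, qt.2)) F) u))
      (by
        rintro u v (⟨q, rfl, rfl⟩ | ⟨q, rfl, rfl⟩) <;> apply Quot.sound
        · exact Or.inl ⟨⟨F q, hF q.2⟩, rfl, rfl⟩
        · exact Or.inr ⟨⟨F q, hF q.2⟩, rfl, rfl⟩),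
    continuous_quot_lift _ (continuous_quot_mk.comp (by fun_prop))⟩

/-- The map from an unreduced mapping cone to a reduced mapping cone induced by a map of
pairs. -/
def UCone.mapToR {Q : Set P} {Q' : Set P'} (F : C(P, P')) (hF : Set.MapsTo F Q Q')
    (b : P') (hb : b ∈ Q') :
    C(UCone P Q, RCone P' Q' b hb) :=
  ⟨Quot.lift
      (fun u => Quot.mk _
        (Sum.map id (Sum.map (fun qt => (⟨F qt.1, hF qt.1.2⟩, qt.2)) F) u))
      (by
        rintro u v (⟨q, rfl, rfl⟩ | ⟨q, rfl, rfl⟩) <;> apply Quot.sound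
        · exact Or.inl (Or.inl ⟨⟨F q, hF q.2⟩, rfl, rfl⟩)
        · exact Or.inl (Or.inr ⟨⟨F q, hF q.2⟩, rfl, rfl⟩)),
    continuous_quot_lift _ (continuous_quot_mk.comp (by fun_prop))⟩

end Cones

/-!
Write `[x, t]` for the point of the cone at height `t` above `x`. Choose a cutoff `φ : P → [0, 1]`
which is `1` near `X` and `0` near the complement of the interior of the neighborhood `N`. Then
`[x, t] ↦ [x, t * φ x]`, read as the cone point for `x` outside `N`, is a homotopy inverse of the
inclusion: both composites rescale heights by `φ`, and the linear homotopy from `φ` to `1` joins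
them to the identity. If `φ` vanishes at the basepoint, the same formula is defined on the reduced
cone.
-/

section Cutoff

variable {P : Type*} [TopologicalSpace P]

theorem exists_cutoff_of_isCompact [RegularSpace P] [LocallyCompactSpace P] {K U : Set P}
    (hK : IsCompact K) (hU : IsOpen U) (hKU : K ⊆ U) :
    ∃ φ : C(P, I), (∀ x ∈ K, ∀ᶠ y in 𝓝 x, φ y = 1) ∧ ∀ x ∉ U, ∀ᶠ y in 𝓝 x, φ y = 0 := by
  obtain ⟨V, hV, hKV, hVU, hVc⟩ := exists_open_between_and_isCompact_closure hK hU hKU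
  obtain ⟨W, hW, hVW, hWU, -⟩ := exists_open_between_and_isCompact_closure hVc hU hVU
  obtain ⟨φ, hφ1, hφ0, -, hφI⟩ := exists_continuous_one_zero_of_isCompact hVc hW.isClosed_compl
    (Set.disjoint_compl_right_iff_subset.2 hVW)
  refine ⟨⟨fun x => ⟨φ x, hφI x⟩, by fun_prop⟩, fun x hx => ?_, fun x hx => ?_⟩
  · filter_upwards [hV.mem_nhds (hKV hx)] with y hy
    exact Subtype.ext (hφ1 (subset_closure hy))
  · filter_upwards [isClosed_closure.isOpen_compl.mem_nhds fun h => hx (hWU h)] with y hy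
    exact Subtype.ext (hφ0 fun h => hy (subset_closure h))

end Cutoff

section MappingCone

variable {P N Y : Type*}

/-- The relation on `{*} ⊔ (Q × [0,1]) ⊔ P` generating the mapping cone of `(P, Q)` with the cone
on `B ∩ Q` collapsed to the cone point. Both `UConeRel` and `RConeRel` are of this form; the
collapse of the base points in `B ∩ Q`, which follows from the other relations, is listed so that
`RConeRel` is literally an instance. -/
def CollapsedConeRel (Q B : Set P) (u v : Unit ⊕ (Q × I) ⊕ P) : Prop :=
  UConeRel P Q u v ∨
  (∃ q : Q, (q : P) ∈ B ∧ ∃ t : I, u = Sum.inr (Sum.inl (q, t)) ∧ v = Sum.inl ()) ∨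
  (∃ q : Q, (q : P) ∈ B ∧ u = Sum.inr (Sum.inr (q : P)) ∧ v = Sum.inl ())

theorem collapsedConeRel_empty (Q : Set P) : CollapsedConeRel Q ∅ = UConeRel P Q := by
  funext u v
  simp [CollapsedConeRel]

theorem collapsedConeRel_singleton {Q : Set P} {b : P} (hb : b ∈ Q) :
    CollapsedConeRel Q {b} = RConeRel P Q b hb := by
  funext u v
  simp [CollapsedConeRel, RConeRel, hb]

/-- The mapping cone of `(P, Q)` with the cone on `B ∩ Q` collapsed to the cone point, a common
generalization of the unreduced and the reduced mapping cone. -/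
abbrev CollapsedCone (Q B : Set P) : Type _ :=
  Quot (CollapsedConeRel Q B)

namespace CollapsedCone

variable {Q B : Set P}

/-- The cone point. -/
def apex : CollapsedCone Q B :=
  Quot.mk _ (Sum.inl ())

open Classical in
/-- The point `[p, t]` of the cone at height `t` above `p`. Over points outside `Q` the height is
ignored, so that every point of the cone other than `apex` has this form and `[p, 1]` is always
the base point `p`. -/
noncomputable def mk (p : P) (t : I) : CollapsedCone Q B :=
  if h : p ∈ Q then Quot.mk _ (Sum.inr (Sum.inl (⟨p, h⟩, t))) else Quot.mk _ (Sum.inr (Sum.inr p))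

theorem mk_of_mem {p : P} (hp : p ∈ Q) (t : I) :
    (mk p t : CollapsedCone Q B) = Quot.mk _ (Sum.inr (Sum.inl (⟨p, hp⟩, t))) :=
  dif_pos hp

theorem mk_of_notMem {p : P} (hp : p ∉ Q) (t : I) :
    (mk p t : CollapsedCone Q B) = Quot.mk _ (Sum.inr (Sum.inr p)) :=
  dif_neg hp

theorem mk_one (p : P) : (mk p 1 : CollapsedCone Q B) = Quot.mk _ (Sum.inr (Sum.inr p)) := by
  by_cases hp : p ∈ Q
  · rw [mk_of_mem hp]
    exact Quot.sound (Or.inl (Or.inl ⟨⟨p, hp⟩, rfl, rfl⟩))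
  · exact mk_of_notMem hp 1

theorem mk_zero {p : P} (hp : p ∈ Q) : (mk p 0 : CollapsedCone Q B) = apex := by
  rw [mk_of_mem hp]
  exact Quot.sound (Or.inl (Or.inr ⟨⟨p, hp⟩, rfl, rfl⟩))

theorem mk_of_mem_of_mem {p : P} (hp : p ∈ Q) (hpB : p ∈ B) (t : I) :
    (mk p t : CollapsedCone Q B) = apex := by
  rw [mk_of_mem hp]
  exact Quot.sound (Or.inr (Or.inl ⟨⟨p, hp⟩, hpB, t, rfl, rfl⟩))

@[elab_as_elim]
theorem ind {motive : CollapsedCone Q B → Prop} (apex : motive apex)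
    (mk : ∀ p t, motive (mk p t)) (c : CollapsedCone Q B) : motive c := by
  obtain ⟨_ | ⟨q, t⟩ | p⟩ := c
  · exact apex
  · exact mk_of_mem q.2 t ▸ mk q t
  · exact mk_one p ▸ mk p 1

section Continuity

variable [TopologicalSpace P]

theorem continuous_mk_one : Continuous fun p => (mk p 1 : CollapsedCone Q B) := by
  simp only [mk_one]
  exact continuous_quot_mk.comp (by fun_prop)

theorem continuous_mk_subtype :
    Continuous fun z : Q × I => (mk (z.1 : P) z.2 : CollapsedCone Q B) := by
  have h : Continuous fun z : Q × I =>
      (Quot.mk _ (Sum.inr (Sum.inl z)) : CollapsedCone Q B) :=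
    continuous_quot_mk.comp (by fun_prop)
  exact h.congr fun z => (mk_of_mem z.1.2 z.2).symm

theorem continuous_mk (p : P) : Continuous (mk p : I → CollapsedCone Q B) := by
  by_cases hp : p ∈ Q
  · exact continuous_mk_subtype.comp (Continuous.prodMk_right (⟨p, hp⟩ : Q))
  · exact continuous_const.congr fun t => (mk_of_notMem hp t).symm

theorem continuousAt_mk (hQ : IsOpen Q) {p : P} (hp : p ∈ Q) (t : I) :
    ContinuousAt (fun z : P × I => (mk z.1 z.2 : CollapsedCone Q B)) (p, t) :=
  ((hQ.isOpenEmbedding_subtypeVal.prodMap .id).continuousAt_iff (x := (⟨p, hp⟩, t))).1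
    continuous_mk_subtype.continuousAt

end Continuity

/-- A family `F p t`, indexed by a point and a height, that describes a continuous map out of the
cone sending `[p, t]` to `F p t` and the cone point to `y`. -/
structure IsConeFamily [TopologicalSpace P] [TopologicalSpace Y] (Q B : Set P) (F : P → I → Y)
    (y : Y) : Prop where
  continuous_base : Continuous fun p => F p 1
  continuous_cylinder : Continuous fun z : Q × I => F z.1 z.2
  eq_base : ∀ p ∉ Q, ∀ t, F p t = F p 1
  eq_apex : ∀ q ∈ Q, F q 0 = y
  collapse : ∀ q ∈ Q, q ∈ B → ∀ t, F q t = y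

section Lift

variable [TopologicalSpace P] [TopologicalSpace Y] {F : P → I → Y} {y : Y}

/-- The continuous map out of the cone described by a family of values at all heights. -/
def lift (hF : IsConeFamily Q B F y) : C(CollapsedCone Q B, Y) where
  toFun := Quot.lift
    (Sum.elim (fun _ => y) (Sum.elim (fun z : Q × I => F z.1 z.2) fun p => F p 1)) (by
      rintro _ _ ((⟨q, rfl, rfl⟩ | ⟨q, rfl, rfl⟩) | ⟨q, hqB, t, rfl, rfl⟩ | ⟨q, hqB, rfl, rfl⟩)
      · rfl
      · exact hF.eq_apex q q.2
      · exact hF.collapse q q.2 hqB t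
      · exact hF.collapse q q.2 hqB 1)
  continuous_toFun := continuous_quot_lift _
    (continuous_const.sumElim (hF.continuous_cylinder.sumElim hF.continuous_base))

theorem lift_apex (hF : IsConeFamily Q B F y) : lift hF apex = y :=
  rfl

theorem lift_mk (hF : IsConeFamily Q B F y) (p : P) (t : I) : lift hF (mk p t) = F p t := by
  by_cases hp : p ∈ Q
  · rw [mk_of_mem hp]
    rfl
  · rw [mk_of_notMem hp, hF.eq_base p hp]
    rfl

end Lift

section Rescale

variable [TopologicalSpace P]

theorem isConeFamily_rescale (hQ : IsOpen Q) (ψ : C(P × I, I))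
    (hψ : ∀ x ∉ Q, ∀ᶠ y in 𝓝 x, ∀ s, ψ (y, s) = 1) :
    IsConeFamily Q B (fun p t => (⟨fun s => mk p (t * ψ (p, s)),
      (continuous_mk p).comp (by fun_prop)⟩ : C(I, CollapsedCone Q B))) (.const I apex) where
  continuous_base := by
    refine ContinuousMap.continuous_of_continuous_uncurry _ (continuous_iff_continuousAt.2 ?_)
    rintro ⟨x, s⟩
    by_cases hx : x ∈ Q
    · exact (continuousAt_mk hQ hx _).comp (x := (x, s))
        (f := fun z : P × I => (z.1, 1 * ψ z)) (Continuous.continuousAt (by fun_prop))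
    · refine (continuous_mk_one.comp continuous_fst).continuousAt.congr ?_
      filter_upwards [continuousAt_fst.eventually (hψ x hx)] with z hz
      change mk z.1 1 = mk z.1 (1 * ψ (z.1, z.2))
      rw [hz, one_mul]
  continuous_cylinder := ContinuousMap.continuous_of_continuous_uncurry _
    (continuous_mk_subtype.comp
      (f := fun z : (Q × I) × I => (z.1.1, z.1.2 * ψ ((z.1.1 : P), z.2))) (by fun_prop))
  eq_base p hp t := by
    ext s
    exact (mk_of_notMem hp _).trans (mk_of_notMem hp _).symm
  eq_apex q hq := by
    ext s
    change mk q (0 * ψ (q, s)) = apex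
    rw [zero_mul, mk_zero hq]
  collapse q hq hqB t := by
    ext s
    exact mk_of_mem_of_mem hq hqB _

theorem homotopic_id_of_map_mk (hQ : IsOpen Q) {φ : C(P, I)}
    (hφ : ∀ x ∉ Q, ∀ᶠ y in 𝓝 x, φ y = 1) {k : C(CollapsedCone Q B, CollapsedCone Q B)}
    (hk_apex : k apex = apex) (hk_mk : ∀ p t, k (mk p t) = mk p (t * φ p)) :
    k.Homotopic (ContinuousMap.id _) := by
  -- `1 - (1 - s) * (1 - φ x)` runs linearly from `φ x` to `1`.
  let ψ : C(P × I, I) := ⟨fun z => σ (σ z.2 * σ (φ z.1)), by fun_prop⟩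
  have hψ : ∀ x ∉ Q, ∀ᶠ y in 𝓝 x, ∀ s, ψ (y, s) = 1 := fun x hx => by
    filter_upwards [hφ x hx] with y hy s
    simp [ψ, hy]
  have hψ_zero : ∀ x, ψ (x, 0) = φ x := fun x => by simp [ψ]
  have hψ_one : ∀ x, ψ (x, 1) = 1 := fun x => by simp [ψ]
  let H := lift (isConeFamily_rescale (B := B) hQ ψ hψ)
  have hH_mk : ∀ p t s, H (mk p t) s = mk p (t * ψ (p, s)) := fun p t s => by
    rw [lift_mk]
    rfl
  refine ⟨⟨H.uncurry.comp ContinuousMap.prodSwap, fun c => ?_, fun c => ?_⟩⟩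
  · change H c 0 = k c
    induction c using ind with
    | apex => exact hk_apex.symm
    | mk p t => rw [hH_mk, hψ_zero, hk_mk]
  · change H c 1 = c
    induction c using ind with
    | apex => rfl
    | mk p t => rw [hH_mk, hψ_one, mul_one]

end Rescale

section Excision

variable {j : N → P} {BN : Set N}

/-- The point `[x, t]` of the cone of `(P, Q)`, read in the cone of a pair `(N, QN)` mapping to it
by `j`; it is the cone point if `x` is outside the range of `j`. -/
noncomputable def extendMk (QN BN : Set N) (j : N → P) (x : P) (t : I) : CollapsedCone QN BN :=
  Function.extend j (fun z => mk z t) (fun _ => apex) x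

theorem extendMk_apply (hj : Function.Injective j) (QN BN : Set N) (z : N) (t : I) :
    extendMk QN BN j (j z) t = mk z t :=
  hj.extend_apply _ _ z

theorem extendMk_of_notMem_range (QN BN : Set N) {x : P} (hx : x ∉ Set.range j) (t : I) :
    extendMk QN BN j x t = apex :=
  Function.extend_apply' _ _ x hx

theorem extendMk_zero (hj : Function.Injective j) {x : P} (hx : x ∈ Q) :
    extendMk (j ⁻¹' Q) BN j x 0 = apex := by
  by_cases h : x ∈ Set.range j
  · obtain ⟨z, rfl⟩ := h
    exact (extendMk_apply hj _ _ z 0).trans (mk_zero (Q := j ⁻¹' Q) hx)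
  · exact extendMk_of_notMem_range _ _ h 0

theorem extendMk_eq_one_of_notMem (hj : Function.Injective j) {x : P} (hx : x ∉ Q) (t : I) :
    extendMk (j ⁻¹' Q) BN j x t = extendMk (j ⁻¹' Q) BN j x 1 := by
  by_cases h : x ∈ Set.range j
  · obtain ⟨z, rfl⟩ := h
    rw [extendMk_apply hj, extendMk_apply hj, mk_one, mk_of_notMem (Q := j ⁻¹' Q) hx]
  · rw [extendMk_of_notMem_range _ _ h, extendMk_of_notMem_range _ _ h]

variable [TopologicalSpace P] [TopologicalSpace N]

theorem continuousAt_extendMk_one (hj : IsEmbedding j) (QN BN : Set N) {x : P}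
    (hx : x ∈ interior (Set.range j)) :
    ContinuousAt (fun y => extendMk QN BN j y 1) x := by
  obtain ⟨z, rfl⟩ := interior_subset hx
  refine (hj.isInducing.continuousAt_iff' (mem_interior_iff_mem_nhds.1 hx)).1 ?_
  exact (continuous_mk_one.congr fun z => (extendMk_apply hj.injective QN BN z 1).symm).continuousAt

theorem continuousAt_extendMk (hj : IsEmbedding j) {QN : Set N} (hQN : IsOpen QN) (BN : Set N)
    {z : N} (hz : z ∈ QN) (hzj : j z ∈ interior (Set.range j)) (t : I) :
    ContinuousAt (fun y : P × I => extendMk QN BN j y.1 y.2) (j z, t) := by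
  have hrange : Set.range (Prod.map j id) ∈ 𝓝 (j z, t) := by
    rw [Set.range_prodMap, Set.range_id]
    exact prod_mem_nhds (mem_interior_iff_mem_nhds.1 hzj) Filter.univ_mem
  refine ((hj.prodMap .id).isInducing.continuousAt_iff' (x := (z, t)) hrange).1 ?_
  exact (continuousAt_mk hQN hz t).congr
    (.of_forall fun y => (extendMk_apply hj.injective QN BN y.1 y.2).symm)

theorem continuousAt_extendMk_mul (hj : IsEmbedding j) (hQ : IsOpen Q) (BN : Set N) {φ : C(P, I)}
    (hφ_zero : ∀ x ∉ interior (Set.range j), ∀ᶠ y in 𝓝 x, φ y = 0) {x : P} (hx : x ∈ Q) (t : I) :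
    ContinuousAt (fun z : P × I => extendMk (j ⁻¹' Q) BN j z.1 (z.2 * φ z.1)) (x, t) := by
  by_cases hxj : x ∈ interior (Set.range j)
  · obtain ⟨z, rfl⟩ := interior_subset hxj
    exact (continuousAt_extendMk hj (hQ.preimage hj.continuous) BN hx hxj _).comp (x := (j z, t))
      (f := fun z : P × I => (z.1, z.2 * φ z.1)) (Continuous.continuousAt (by fun_prop))
  · refine continuousAt_const.congr (f := fun _ => apex) ?_
    filter_upwards [continuousAt_fst.eventually (hφ_zero x hxj),
      continuousAt_fst.eventually (hQ.mem_nhds hx)] with y hy hyQ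
    rw [hy, mul_zero, extendMk_zero hj.injective hyQ]

theorem isConeFamily_extendMk (hj : IsEmbedding j) (hQ : IsOpen Q) {φ : C(P, I)}
    (hφ_one : ∀ x ∉ Q, ∀ᶠ y in 𝓝 x, φ y = 1)
    (hφ_zero : ∀ x ∉ interior (Set.range j), ∀ᶠ y in 𝓝 x, φ y = 0) (hφB : ∀ b ∈ B, φ b = 0) :
    IsConeFamily Q B (fun x t => extendMk (j ⁻¹' Q) BN j x (t * φ x)) apex := by
  refine ⟨continuous_iff_continuousAt.2 fun x => ?_, continuous_iff_continuousAt.2 fun z => ?_,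
    fun x hx t => ?_, fun q hq => ?_, fun q hq hqB t => ?_⟩
  · by_cases hx : x ∈ Q
    · exact (continuousAt_extendMk_mul hj hQ BN hφ_zero hx 1).comp (f := fun y => (y, 1))
        (Continuous.continuousAt (by fun_prop))
    · have hxj : x ∈ interior (Set.range j) := by
        by_contra h
        exact zero_ne_one ((hφ_zero x h).self_of_nhds.symm.trans (hφ_one x hx).self_of_nhds)
      refine (continuousAt_extendMk_one hj _ BN hxj).congr ?_
      filter_upwards [hφ_one x hx] with y hy
      rw [hy, one_mul]
  · exact (continuousAt_extendMk_mul hj hQ BN hφ_zero z.1.2 z.2).comp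
      (f := fun z : Q × I => ((z.1 : P), z.2)) (Continuous.continuousAt (by fun_prop))
  · exact (extendMk_eq_one_of_notMem hj.injective hx _).trans
      (extendMk_eq_one_of_notMem hj.injective hx _).symm
  · rw [zero_mul, extendMk_zero hj.injective hq]
  · rw [hφB q hqB, mul_zero, extendMk_zero hj.injective hq]

theorem isHomotopyEquiv_of_cutoff (hj : IsEmbedding j) (hQ : IsOpen Q) {φ : C(P, I)}
    (hφ_one : ∀ x ∉ Q, ∀ᶠ y in 𝓝 x, φ y = 1)
    (hφ_zero : ∀ x ∉ interior (Set.range j), ∀ᶠ y in 𝓝 x, φ y = 0) (hφB : ∀ b ∈ B, φ b = 0)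
    {f : C(CollapsedCone (j ⁻¹' Q) BN, CollapsedCone Q B)} (hf_apex : f apex = apex)
    (hf_mk : ∀ z t, f (mk z t) = mk (j z) t) : IsHomotopyEquiv f := by
  let g := lift (isConeFamily_extendMk (BN := BN) hj hQ hφ_one hφ_zero hφB)
  have hg_mk : ∀ x t, g (mk x t) = extendMk _ BN j x (t * φ x) := lift_mk _
  have hφ_range : ∀ x ∉ Set.range j, φ x = 0 := fun x hx =>
    (hφ_zero x fun h => hx (interior_subset h)).self_of_nhds
  have hmemQ : ∀ x ∉ Set.range j, x ∈ Q := fun x hx => by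
    by_contra h
    exact zero_ne_one ((hφ_range x hx).symm.trans (hφ_one x h).self_of_nhds)
  refine ⟨g, homotopic_id_of_map_mk (φ := φ.comp ⟨j, hj.continuous⟩) (hQ.preimage hj.continuous)
    (fun z hz => hj.continuous.continuousAt.eventually (hφ_one (j z) hz)) ?_ fun z t => ?_,
    homotopic_id_of_map_mk hQ hφ_one hf_apex fun x t => ?_⟩
  · rw [ContinuousMap.comp_apply, hf_apex, lift_apex]
  · rw [ContinuousMap.comp_apply, hf_mk, hg_mk, extendMk_apply hj.injective]
    rfl
  · rw [ContinuousMap.comp_apply, hg_mk]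
    by_cases hx : x ∈ Set.range j
    · obtain ⟨z, rfl⟩ := hx
      rw [extendMk_apply hj.injective, hf_mk]
    · rw [extendMk_of_notMem_range _ _ hx, hf_apex, hφ_range x hx, mul_zero, mk_zero (hmemQ x hx)]

theorem isHomotopyEquiv_of_isCompact [T2Space P] [LocallyCompactSpace P] (hj : IsEmbedding j)
    {X : Set P} (hX : IsCompact X) (hXj : X ⊆ interior (Set.range j \ B))
    {f : C(CollapsedCone (j ⁻¹' Xᶜ) BN, CollapsedCone Xᶜ B)} (hf_apex : f apex = apex)
    (hf_mk : ∀ z t, f (mk z t) = mk (j z) t) : IsHomotopyEquiv f := by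
  obtain ⟨φ, hφ_one, hφ_zero⟩ := exists_cutoff_of_isCompact hX isOpen_interior hXj
  exact isHomotopyEquiv_of_cutoff hj hX.isClosed.isOpen_compl
    (fun x hx => hφ_one x (Set.notMem_compl_iff.1 hx))
    (fun x hx => hφ_zero x fun h => hx (interior_mono Set.sdiff_subset h))
    (fun b hb => (hφ_zero b fun h => (interior_subset h).2 hb).self_of_nhds) hf_apex hf_mk

/-- `UConeRel` and `RConeRel` agree with `CollapsedConeRel` only propositionally, hence the
quotients by relations `rN` and `r` known up to equality. -/
theorem isHomotopyEquiv_of_rel_eq [T2Space P] [LocallyCompactSpace P] (hj : IsEmbedding j)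
    {X : Set P} (hX : IsCompact X) (hXj : X ⊆ interior (Set.range j \ B)) {QN : Set N}
    (hQN : QN = j ⁻¹' Xᶜ) {rN : Unit ⊕ (QN × I) ⊕ N → Unit ⊕ (QN × I) ⊕ N → Prop}
    {r : Unit ⊕ (↥Xᶜ × I) ⊕ P → Unit ⊕ (↥Xᶜ × I) ⊕ P → Prop} (hrN : rN = CollapsedConeRel QN BN)
    (hr : r = CollapsedConeRel Xᶜ B) (f : C(Quot rN, Quot r))
    (hf : ∀ u, f (Quot.mk rN u) =
      Quot.mk r (Sum.map id (Sum.map (fun qt => (⟨j qt.1, hQN.le qt.1.2⟩, qt.2)) j) u)) :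
    IsHomotopyEquiv f := by
  subst hQN hrN hr
  refine isHomotopyEquiv_of_isCompact hj hX hXj (hf _) fun z t => ?_
  by_cases hz : j z ∈ Xᶜ
  · rw [mk_of_mem hz, mk_of_mem (Set.mem_preimage.2 hz), hf]
    rfl
  · rw [mk_of_notMem hz, mk_of_notMem (mt Set.mem_preimage.1 hz), hf]
    rfl

end Excision

end CollapsedCone

end MappingCone

open CollapsedCone in
theorem cone_inclusions_homotopyEquiv_general {E : Type*} [TopologicalSpace E] [T2Space E]
    [LocallyCompactSpace E] {X N : Set E} (hX : IsCompact X) (hN : X ⊆ interior N) :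
    IsHomotopyEquiv
      (UCone.map (P := N) (Q := Subtype.val ⁻¹' Xᶜ) (Q' := Xᶜ)
        ⟨Subtype.val, continuous_subtype_val⟩ (Set.mapsTo_preimage _ _)) ∧
    IsHomotopyEquiv
      (UCone.mapToR (P := N) (Q := Subtype.val ⁻¹' Xᶜ) (Q' := ((↑) '' X : Set (OnePoint E))ᶜ)
        ⟨fun z => ((z : E) : OnePoint E), OnePoint.continuous_coe.comp continuous_subtype_val⟩
        (fun z hz => by simpa using hz) OnePoint.infty (by simp)) := by
  have hval : IsEmbedding ((↑) : N → E) := .subtypeVal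
  have hU : IsOpen ((↑) '' interior N : Set (OnePoint E)) :=
    OnePoint.isOpen_image_coe.2 isOpen_interior
  constructor
  · exact isHomotopyEquiv_of_rel_eq hval hX (by simpa using hN) rfl
      (collapsedConeRel_empty _).symm (collapsedConeRel_empty _).symm _ fun _ => rfl
  · refine isHomotopyEquiv_of_rel_eq (OnePoint.isOpenEmbedding_coe.isEmbedding.comp hval)
      (hX.image OnePoint.continuous_coe) ((Set.image_mono hN).trans (interior_maximal ?_ hU))
      (by ext; simp) (collapsedConeRel_empty _).symm (collapsedConeRel_singleton _).symm _
      fun _ => rfl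
    rintro _ ⟨y, hy, rfl⟩
    exact ⟨⟨⟨y, interior_subset hy⟩, rfl⟩, OnePoint.coe_ne_infty y⟩

/-- Excision for mapping cones: if `X ⊆ ℝⁿ` is compact and `N` is any neighborhood of `X`,
then the maps of mapping cones induced by the inclusions of pairs
`(N, N∖X) → (ℝⁿ, ℝⁿ∖X)` and `(N, N∖X) → (Sⁿ, Sⁿ∖X)` are homotopy equivalences, where
`Sⁿ` is the one-point compactification of `ℝⁿ` based at `∞`. -/
theorem cone_inclusions_homotopyEquiv (n : ℕ)
    (X N : Set (EuclideanSpace ℝ (Fin n))) (hX : IsCompact X) (hN : X ⊆ interior N) :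
    IsHomotopyEquiv
      (UCone.map (P := N) (Q := {z : N | (z : EuclideanSpace ℝ (Fin n)) ∉ X})
        (Q' := {z : EuclideanSpace ℝ (Fin n) | z ∉ X})
        ⟨Subtype.val, continuous_subtype_val⟩ (fun z hz => hz)) ∧
    IsHomotopyEquiv
      (UCone.mapToR (P := N) (Q := {z : N | (z : EuclideanSpace ℝ (Fin n)) ∉ X})
        (Q' := {z : OnePoint (EuclideanSpace ℝ (Fin n)) |
          z ∉ (fun x : EuclideanSpace ℝ (Fin n) => (x : OnePoint (EuclideanSpace ℝ (Fin n)))) '' X})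
        ⟨fun z => ((z : EuclideanSpace ℝ (Fin n)) : OnePoint (EuclideanSpace ℝ (Fin n))),
          OnePoint.continuous_coe.comp continuous_subtype_val⟩
        (fun z hz => by
          simp only [Set.mem_setOf_eq, Set.mem_image, not_exists, not_and]
          intro x hx hxz
          exact hz (OnePoint.coe_injective hxz ▸ hx))
        OnePoint.infty
        (by
          simp only [Set.mem_setOf_eq, Set.mem_image, not_exists, not_and]
          intro x _ hx
          exact (OnePoint.coe_ne_infty x) hx)) :=
  cone_inclusions_homotopyEquiv_general hX hN
end
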